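/- Let n, d ∈ ℕ, q ∈ ℕ∪{0}, K, d⋆, d* ∈ ℕ, β, r, α ∈ (0,∞), τ ∈ (0,∞], s ∈ [0,∞), ν ∈ [0,∞), a, b ∈ (0,∞), and G ∈ (0,∞), N ∈ [1,∞), S ∈ (0,∞], B ∈ (0,∞). Assume d* ≤ d, d*·q ≤ K·q, and not both α < 1 and τ ≥ 1. Set e := β·(min{1,β})^q. Let f̂_n^NN be an empirical φ_h-risk minimizer over F^NN_d(G,N,S,B,∞) based on an i.i.d. sample of size n from P. Then there exist constants c1 ∈ [3,∞) depending only on (d⋆,d*,β,r,q,K,τ,s,a), c2 ∈ (0,∞) depending only on (d,d⋆,d*,β,r,q,K,τ,s,α,ν,a,b), and c3 ∈ (0,∞) depending only on (d⋆,d*,β,r,q), such that whenever c1 ≤ n, c3·log n ≤ G ≤ b·log n, a·(n/(log n)³)^{d*/(d*+(s+2)e)} ≤ N ≤ b·(n/(log n)³)^{d*/(d*+(s+2)e)}, 1 ≤ B ≤ b·n^ν, and a·(log n)·(n/(log n)³)^{d*/(d*+(s+2)e)} ≤ S ≤ b·(log n)·(n/(log n)³)^{d*/(d*+(s+2)e)},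 one has sup{E_{P^⊗n}[E_P(f̂_n^NN)] : P ∈ H^{d,β,r}_{q,K,d*,d⋆} ∩ T^{d,s}_{α,τ}} ≤ c2·((log n)³/n)^{(s+1)e/(d*+(s+2)e)}. -/

import Mathlib

open MeasureTheory ENNReal Set

noncomputable section

namespace ZZS

/-! ## Basic geometry -/

/-- The closed unit cube `[0,1]^m`. -/
def cube (m : ℕ) : Set (Fin m → ℝ) := Set.univ.pi fun _ => Set.Icc (0 : ℝ) 1

/-- The open unit cube `(0,1)^m`. -/
def cubeo (m : ℕ) : Set (Fin m → ℝ) := Set.univ.pi fun _ => Set.Ioo (0 : ℝ) 1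

/-- The label set `{-1, 1} ⊆ ℝ`. -/
def labels : Set ℝ := {-1, 1}

/-- Euclidean distance on `Fin m → ℝ`. -/
def e2 {m : ℕ} (x z : Fin m → ℝ) : ℝ := Real.sqrt (∑ i, (x i - z i) ^ 2)

/-! ## Multi-index partial derivatives and Hölder balls -/

/-- Iterated partial derivative along a list of coordinate directions. -/
def pderivList {m : ℕ} : List (Fin m) → ((Fin m → ℝ) → ℝ) → (Fin m → ℝ) → ℝ
  | [], f => f
  | i :: l, f => pderivList l fun x => fderiv ℝ f x (Pi.single i 1)

/-- The canonical list of directions attached to a multi-index. -/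
def idxList {m : ℕ} (u : Fin m → ℕ) : List (Fin m) :=
  (List.finRange m).flatMap fun i => List.replicate (u i) i

/-- The partial derivative `D^u f` for a multi-index `u`. -/
def Dm {m : ℕ} (u : Fin m → ℕ) (f : (Fin m → ℝ) → ℝ) : (Fin m → ℝ) → ℝ :=
  pderivList (idxList u) f

/-- The order `‖u‖₁` of a multi-index `u`. -/
def mord {m : ℕ} (u : Fin m → ℕ) : ℕ := ∑ i, u i

/-- The Hölder-`β` norm of `f`, suprema taken over the set `S` (value in `ℝ≥0∞`). -/
def holderNormOn (m : ℕ) (β : ℝ) (S : Set (Fin m → ℝ)) (f : (Fin m → ℝ) → ℝ) : ℝ≥0∞ :=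
  (⨆ (u : Fin m → ℕ) (_ : (mord u : ℝ) < β) (x ∈ S), ENNReal.ofReal |Dm u f x|) +
    ⨆ (u : Fin m → ℕ) (_ : (⌈β⌉ : ℝ) - 1 ≤ (mord u : ℝ) ∧ (mord u : ℝ) < β)
      (x ∈ S) (z ∈ S) (_ : x ≠ z),
      ENNReal.ofReal |Dm u f x - Dm u f z| /
        ENNReal.ofReal (e2 x z) ^ (β + 1 - (⌈β⌉ : ℝ))

/-- `⌈β - 1⌉`, the number of derivatives required for Hölder-`β` smoothness. -/
def smoothOrder (β : ℝ) : ℕ := ⌈β - 1⌉₊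

/-- The Hölder ball `B^β_r([0,1]^m)`:  `⌈β-1⌉`-times continuously differentiable functions on
the interior of the cube (with uniformly continuous derivatives, so that they extend
continuously), with Hölder-`β` norm at most `r`. -/
def HolderBall (m : ℕ) (β r : ℝ) : Set ((Fin m → ℝ) → ℝ) :=
  {f | ContinuousOn f (cube m) ∧
    ContDiffOn ℝ (smoothOrder β : ℕ∞) f (cubeo m) ∧
    (∀ u : Fin m → ℕ, (mord u : ℝ) < β → UniformContinuousOn (Dm u f) (cubeo m)) ∧
    holderNormOn m β (cubeo m) f ≤ ENNReal.ofReal r}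

/-! ## Compositional function classes -/

/-- `G^H_m(dstar, β, r)`: Hölder-`β` functions of `dstar` of the `m` coordinates. -/
def GH (m dstar : ℕ) (β r : ℝ) : Set ((Fin m → ℝ) → ℝ) :=
  {f | ∃ (e : Fin dstar → Fin m) (g : (Fin dstar → ℝ) → ℝ),
    StrictMono e ∧ g ∈ HolderBall dstar β r ∧ ∀ x ∈ cube m, f x = g fun j => x (e j)}

/-- `G^M_m(dmax)`: maxima of at most `dmax` coordinates. -/
def GM (m dmax : ℕ) : Set ((Fin m → ℝ) → ℝ) :=
  {f | ∃ (I : Finset (Fin m)) (hI : I.Nonempty), I.card ≤ dmax ∧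
    ∀ x ∈ cube m, f x = I.sup' hI fun i => x i}

/-- The compositional class `G^CHOM_d(q, K, dmax, dstar, β, r)`. -/
def GCHOM (K dmax dstar : ℕ) (β r : ℝ) : ℕ → (d : ℕ) → Set ((Fin d → ℝ) → ℝ)
  | 0, d => {f | ∃ h ∈ GH d dstar β r ∪ GM d dmax, ∀ x ∈ cube d, f x = h x}
  | q + 1, d =>
    {f | ∃ (H : (Fin d → ℝ) → Fin K → ℝ) (g : (Fin K → ℝ) → ℝ),
      (∀ j, (fun x => H x j) ∈ GH d dstar β r ∪ GM d dmax) ∧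
      (∀ x ∈ cube d, H x ∈ cube K) ∧
      g ∈ GCHOM K dmax dstar β r q K ∧ ∀ x ∈ cube d, f x = g (H x)}

/-- The compositional class `G^CH_d(q, K, dstar, β, r)` (no max-value components). -/
def GCH (K dstar : ℕ) (β r : ℝ) : ℕ → (d : ℕ) → Set ((Fin d → ℝ) → ℝ)
  | 0, d => {f | ∃ h ∈ GH d dstar β r, ∀ x ∈ cube d, f x = h x}
  | q + 1, d =>
    {f | ∃ (H : (Fin d → ℝ) → Fin K → ℝ) (g : (Fin K → ℝ) → ℝ),
      (∀ j, (fun x => H x j) ∈ GH d dstar β r) ∧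
      (∀ x ∈ cube d, H x ∈ cube K) ∧
      g ∈ GCH K dstar β r q K ∧ ∀ x ∈ cube d, f x = g (H x)}

/-! ## Losses, risks, and data distributions -/

/-- The sign function (`sgn 0 = 1`). -/
def sgn (t : ℝ) : ℝ := if 0 ≤ t then 1 else -1

/-- The hinge loss. -/
def hinge (t : ℝ) : ℝ := max 0 (1 - t)

/-- The truncation operator `T_F`. -/
def trunc (F t : ℝ) : ℝ := min F (max (-F) t)

/-- The joint distribution `P_{η,Q}` on `[0,1]^d × {-1,1}` with input marginal `Q` and
conditional class probability function `η`. -/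
def jointMeasure {d : ℕ} (η : (Fin d → ℝ) → ℝ) (Q : Measure (Fin d → ℝ)) :
    Measure ((Fin d → ℝ) × ℝ) :=
  Q.bind fun x =>
    ENNReal.ofReal (η x) • Measure.dirac (x, (1 : ℝ)) +
      ENNReal.ofReal (1 - η x) • Measure.dirac (x, (-1 : ℝ))

/-- The 0-1 risk (misclassification error). -/
def risk01 {d : ℕ} (P : Measure ((Fin d → ℝ) × ℝ)) (f : (Fin d → ℝ) → ℝ) : ℝ :=
  (P {p | sgn (f p.1) ≠ p.2}).toReal

/-- The infimum of the 0-1 risk over all measurable functions. -/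
def bayes01 {d : ℕ} (P : Measure ((Fin d → ℝ) × ℝ)) : ℝ :=
  ⨅ g : {g : (Fin d → ℝ) → ℝ // Measurable g}, risk01 P g.1

/-- The excess 0-1 risk. -/
def excess01 {d : ℕ} (P : Measure ((Fin d → ℝ) × ℝ)) (f : (Fin d → ℝ) → ℝ) : ℝ :=
  risk01 P f - bayes01 P

/-- The `φ`-risk. -/
def riskPhi {d : ℕ} (φ : ℝ → ℝ) (P : Measure ((Fin d → ℝ) × ℝ)) (f : (Fin d → ℝ) → ℝ) : ℝ :=
  ∫ p, φ (p.2 * f p.1) ∂P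

/-- The infimum of the `φ`-risk over all measurable functions. -/
def bayesPhi {d : ℕ} (φ : ℝ → ℝ) (P : Measure ((Fin d → ℝ) × ℝ)) : ℝ :=
  ⨅ g : {g : (Fin d → ℝ) → ℝ // Measurable g}, riskPhi φ P g.1

/-- The excess `φ`-risk. -/
def excessPhi {d : ℕ} (φ : ℝ → ℝ) (P : Measure ((Fin d → ℝ) × ℝ)) (f : (Fin d → ℝ) → ℝ) : ℝ :=
  riskPhi φ P f - bayesPhi φ P

/-- A Borel probability measure on `[0,1]^d × {-1,1}`, presented by its input marginal `Q`
(a Borel probability measure concentrated on the cube) and its conditional class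
probability function `η` (measurable, `[0,1]`-valued);  the measure itself is
`jointMeasure η Q`. -/
structure DataDist (d : ℕ) where
  η : (Fin d → ℝ) → ℝ
  Q : Measure (Fin d → ℝ)
  η_meas : Measurable η
  η_mem : ∀ x, η x ∈ Set.Icc (0 : ℝ) 1
  Q_prob : IsProbabilityMeasure Q
  Q_cube : Q (cube d) = 1

/-- The measure on `[0,1]^d × {-1,1}` associated with a `DataDist`. -/
def DataDist.P {d : ℕ} (D : DataDist d) : Measure ((Fin d → ℝ) × ℝ) := jointMeasure D.η D.Q

/-- `x ^ s` for `s ∈ [0,∞]`, with the conventions `x ^ ∞ = 0` for `x < 1` and `1 ^ ∞ = 1`. -/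
def rpowE (x : ℝ≥0∞) (s : ℝ≥0∞) : ℝ≥0∞ :=
  if s = ∞ then (if x < 1 then 0 else if x = 1 then 1 else ∞) else x ^ s.toReal

/-- The Tsybakov noise class `T^{d,s}_{α,τ}` (noise exponent `s ∈ [0,∞]`,
threshold `τ ∈ (0,∞]`). -/
def Tsybakov (d : ℕ) (s : ℝ≥0∞) (α : ℝ) (τ : ℝ≥0∞) : Set (DataDist d) :=
  {P | ∀ t : ℝ, 0 < t → ENNReal.ofReal t ≤ τ →
    P.Q ({x | |2 * P.η x - 1| ≤ t} ∩ cube d) ≤ ENNReal.ofReal α * rpowE (ENNReal.ofReal t) s}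

/-- The class `H^{d,β,r}_{q,K,dstar,dmax}`: distributions whose conditional class probability
agrees a.s. with a member of `G^CHOM`. -/
def HCHOM (d q K dstar dmax : ℕ) (β r : ℝ) : Set (DataDist d) :=
  {P | ∃ f ∈ GCHOM K dmax dstar β r q d, ∀ᵐ x ∂P.Q, P.η x = f x}

/-- `M_{Λ,d}`: Borel probability measures on `[0,1]^d` with a `[0,Λ]`-valued density with
respect to Lebesgue measure. -/
def MLam (d : ℕ) (Λ : ℝ) : Set (Measure (Fin d → ℝ)) :=
  {Q | ∃ g : (Fin d → ℝ) → ℝ, Measurable g ∧ (∀ x, g x ∈ Set.Icc 0 Λ) ∧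
    Q = (volume.restrict (cube d)).withDensity fun x => ENNReal.ofReal (g x)}

/-- The class `H^{d,β,r,Λ}_{q,K,dstar}`: joint laws `P_{η,Q}` with `η ∈ G^CH` (valued in
`[0,1]`) and `Q ∈ M_{Λ,d}`. -/
def HCHL (d q K dstar : ℕ) (β r Λ : ℝ) : Set (DataDist d) :=
  {P | (∃ f ∈ GCH K dstar β r q d, (∀ x ∈ cube d, f x ∈ Set.Icc (0 : ℝ) 1) ∧
      ∀ᵐ x ∂P.Q, P.η x = f x) ∧ P.Q ∈ MLam d Λ}

/-- The class `H^{d,β,r}_{q,K,dstar}`: joint laws `P_{η,Q}` with `η ∈ G^CH` (valued in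
`[0,1]`) and `Q` an arbitrary Borel probability measure on the cube. -/
def HCH (d q K dstar : ℕ) (β r : ℝ) : Set (DataDist d) :=
  {P | ∃ f ∈ GCH K dstar β r q d, (∀ x ∈ cube d, f x ∈ Set.Icc (0 : ℝ) 1) ∧
    ∀ᵐ x ∂P.Q, P.η x = f x}

/-! ## Samples and estimators -/

/-- The law of an i.i.d. sample of size `n` from `μ`. -/
def iid {α : Type*} [MeasurableSpace α] (μ : Measure α) : (n : ℕ) → Measure (Fin n → α)
  | 0 => Measure.dirac fun i => i.elim0
  | n + 1 => (iid μ n).bind fun p => μ.map fun a => Fin.snoc p a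

/-- An estimator: a rule assigning to each sample of size `n` a function `[0,1]^d → ℝ`. -/
def Estimator (d n : ℕ) := (Fin n → (Fin d → ℝ) × ℝ) → (Fin d → ℝ) → ℝ

/-- (Joint) measurability of an estimator. -/
def Estimator.Meas {d n : ℕ} (A : Estimator d n) : Prop :=
  Measurable fun p : (Fin n → (Fin d → ℝ) × ℝ) × (Fin d → ℝ) => A p.1 p.2

/-- The expected excess 0-1 risk `E_{P^{⊗n}}[E_P(f̂_n)]` of an estimator. -/
def expectedExcess01 {d : ℕ} (P : Measure ((Fin d → ℝ) × ℝ)) {n : ℕ} (A : Estimator d n) : ℝ :=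
  ∫ ω, excess01 P (A ω) ∂iid P n

/-- The covering number `N(F, γ)` (uniform norm over `Ω`), valued in `ℝ≥0∞`. -/
def coveringNumber {X : Type*} (Ω : Set X) (F : Set (X → ℝ)) (γ : ℝ) : ℝ≥0∞ :=
  ⨅ (A : Finset (X → ℝ))
    (_ : ↑A ⊆ F ∧ ∀ f ∈ F, ∃ g ∈ A, ∀ x ∈ Ω, |f x - g x| ≤ γ),
    (A.card : ℝ≥0∞)

/-- `f` is an empirical `φ`-risk minimizer over `F` for the sample `ω`. -/
def IsERM {d n : ℕ} (φ : ℝ → ℝ) (F : Set ((Fin d → ℝ) → ℝ))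
    (ω : Fin n → (Fin d → ℝ) × ℝ) (f : (Fin d → ℝ) → ℝ) : Prop :=
  f ∈ F ∧ ∀ g ∈ F,
    (n : ℝ)⁻¹ * ∑ i, φ ((ω i).2 * f ((ω i).1)) ≤ (n : ℝ)⁻¹ * ∑ i, φ ((ω i).2 * g ((ω i).1))

/-! ## ReLU neural networks -/

/-- A feedforward ReLU network with input dimension `d`. -/
structure ReLUNet (d : ℕ) where
  L : ℕ
  width : ℕ → ℕ
  W : (i : ℕ) → Fin (width (i + 1)) → Fin (width i) → ℝ
  v : (i : ℕ) → Fin (width i) → ℝ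
  h0 : width 0 = d
  hL : width (L + 1) = 1

/-- The `i`-th intermediate layer output `W_i σ_{v_i} ⋯ W_1 σ_{v_1} W_0 x`. -/
def ReLUNet.layer {d : ℕ} (net : ReLUNet d) (x : Fin (net.width 0) → ℝ) :
    (i : ℕ) → Fin (net.width (i + 1)) → ℝ
  | 0 => fun j => ∑ k, net.W 0 j k * x k
  | i + 1 => fun j => ∑ k, net.W (i + 1) j k * max 0 (net.layer x i k - net.v (i + 1) k)

/-- The real-valued function computed by a ReLU network. -/
def ReLUNet.eval {d : ℕ} (net : ReLUNet d) (x : Fin d → ℝ) : ℝ :=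
  net.layer (fun j => x (Fin.cast net.h0 j)) net.L (Fin.cast net.hL.symm 0)

/-- The class `F^NN_d(G, N, S, B, Fb)` of ReLU networks with depth `≤ G`, widths `≤ N`,
at most `S` nonzero parameters, parameter magnitudes `≤ B`, and uniform norm on the cube
`≤ Fb`. -/
def FNN (d : ℕ) (G N : ℝ) (S : ℝ≥0∞) (B : ℝ) (Fb : ℝ≥0∞) : Set ((Fin d → ℝ) → ℝ) :=
  {f | ∃ net : ReLUNet d,
    (∀ x, f x = net.eval x) ∧
    (net.L : ℝ) ≤ G ∧
    (∀ i ≤ net.L + 1, (net.width i : ℝ) ≤ N) ∧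
    ((∑ i ∈ Finset.range (net.L + 1),
        (Nat.card {p : Fin (net.width (i + 1)) × Fin (net.width i) // net.W i p.1 p.2 ≠ 0}
          : ℝ≥0∞)) +
      ∑ i ∈ Finset.range net.L,
        (Nat.card {j : Fin (net.width (i + 1)) // net.v (i + 1) j ≠ 0} : ℝ≥0∞)) ≤ S ∧
    (∀ i ≤ net.L, ∀ j k, |net.W i j k| ≤ B) ∧
    (∀ i, 1 ≤ i → i ≤ net.L → ∀ j, |net.v i j| ≤ B) ∧
    ∀ x ∈ cube d, ENNReal.ofReal |f x| ≤ Fb}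

/-! ## Kullback–Leibler divergence -/

open Classical in
/-- The Kullback–Leibler divergence. -/
def KL {X : Type*} [MeasurableSpace X] (P Q : Measure X) : ℝ≥0∞ :=
  if P ≪ Q ∧ Integrable (fun x => Real.log (P.rnDeriv Q x).toReal) P then
    ENNReal.ofReal (∫ x, Real.log (P.rnDeriv Q x).toReal ∂P)
  else ∞

/-- The exponent `e / (dstar/(s+1) + (1 + 1/(s+1))·e)` of the minimax rate, for noise
exponent `s ∈ [0,∞]` (equal to `1` when `s = ∞`). -/
def rateExp (dstar : ℕ) (e : ℝ) (s : ℝ≥0∞) : ℝ :=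
  if s = ∞ then 1
  else e / ((dstar : ℝ) / (s.toReal + 1) + (1 + 1 / (s.toReal + 1)) * e)

/-! ## A calculus of sparse ReLU layers with weights in `[-1,1]` -/

/-- Indicator that a real number is nonzero, as a natural number. -/
def nz (t : ℝ) : ℕ := if t = 0 then 0 else 1

lemma nz_zero : nz 0 = 0 := by simp [nz]

lemma nz_le_one (t : ℝ) : nz t ≤ 1 := by unfold nz; split_ifs <;> simp

/-- The family `G` arises from the family `F` by one ReLU layer with weights and shifts in
`[-1,1]`, at most `w` output units and at most `w` nonzero parameters. -/
def Layer {X κ μ : Type} [Fintype κ] [Fintype μ] (w : ℕ) (F : κ → X → ℝ) (G : μ → X → ℝ) :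
    Prop :=
  ∃ (W : μ → κ → ℝ) (v : μ → ℝ), (∀ j k, |W j k| ≤ 1) ∧ (∀ j, |v j| ≤ 1) ∧
    Fintype.card μ ≤ w ∧ (∑ j, (nz (v j) + ∑ k, nz (W j k))) ≤ w ∧
    ∀ j x, G j x = max 0 (∑ k, W j k * F k x - v j)

/-- `Reach inp w L F` : the family `F` arises from `inp` by `L + 1` layers of size `w`. -/
def Reach {X ι : Type} [Fintype ι] (inp : ι → X → ℝ) (w : ℕ) :
    ℕ → ∀ {κ : Type} [Fintype κ], (κ → X → ℝ) → Prop
  | 0, _, _, F => Layer w inp F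
  | L + 1, _, _, F => ∃ (μ : Type) (_ : Fintype μ) (H : μ → X → ℝ),
      Reach inp w L H ∧ Layer w H F

section calculus

variable {X ι κ μ κ' μ' : Type} [Fintype ι] [Fintype κ] [Fintype μ] [Fintype κ'] [Fintype μ']

lemma Layer.mono {w w' : ℕ} {F : κ → X → ℝ} {G : μ → X → ℝ} (h : Layer w F G) (hw : w ≤ w') :
    Layer w' F G := by
  obtain ⟨W, v, h1, h2, h3, h4, h5⟩ := h
  exact ⟨W, v, h1, h2, h3.trans hw, h4.trans hw, h5⟩

lemma Layer.nonneg {w : ℕ} {F : κ → X → ℝ} {G : μ → X → ℝ} (h : Layer w F G) (j : μ) (x : X) :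
    0 ≤ G j x := by
  obtain ⟨W, v, -, -, -, -, h5⟩ := h
  rw [h5]; exact le_max_left _ _

/-- A layer without sparsity, counted with its full number of parameters. -/
lemma Layer.of_dense {w : ℕ} {F : κ → X → ℝ} {G : μ → X → ℝ} (W : μ → κ → ℝ) (v : μ → ℝ)
    (hW : ∀ j k, |W j k| ≤ 1) (hv : ∀ j, |v j| ≤ 1)
    (hw : Fintype.card μ * (1 + Fintype.card κ) ≤ w)
    (h : ∀ j x, G j x = max 0 (∑ k, W j k * F k x - v j)) : Layer w F G := by
  refine ⟨W, v, hW, hv, le_trans ?_ hw, le_trans ?_ hw, h⟩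
  · exact Nat.le_mul_of_pos_right _ (by omega)
  · calc (∑ j, (nz (v j) + ∑ k, nz (W j k))) ≤ ∑ _j : μ, (1 + ∑ _k : κ, 1) := by
          gcongr <;> exact nz_le_one _
      _ = _ := by simp

lemma Layer.select {w : ℕ} {F : κ → X → ℝ} (hF : ∀ k x, 0 ≤ F k x) (e : μ → κ)
    (hw : Fintype.card μ ≤ w) : Layer w F (fun j => F (e j)) := by
  classical
  refine ⟨fun j k => if k = e j then 1 else 0, 0, ?_, by simp, hw, le_trans (le_of_eq ?_) hw, ?_⟩
  · intro j k; dsimp only; split_ifs <;> simp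
  · simp [nz, Finset.sum_ite_eq']
  · intro j x; simp [hF]

lemma Layer.reindex {w : ℕ} {F : κ → X → ℝ} {G : μ → X → ℝ} (h : Layer w F G) (e : μ' ≃ μ) :
    Layer w F (fun j => G (e j)) := by
  obtain ⟨W, v, h1, h2, h3, h4, h5⟩ := h
  refine ⟨fun j => W (e j), fun j => v (e j), fun j => h1 _, fun j => h2 _, ?_, ?_,
    fun j => h5 _⟩
  · rwa [Fintype.card_congr e]
  · rwa [e.sum_comp (fun j => nz (v j) + ∑ k, nz (W j k))]

lemma Layer.stack {w w' : ℕ} {F : κ → X → ℝ} {G : μ → X → ℝ} {G' : μ' → X → ℝ}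
    (h : Layer w F G) (h' : Layer w' F G') : Layer (w + w') F (Sum.elim G G') := by
  obtain ⟨W, v, h1, h2, h3, h4, h5⟩ := h
  obtain ⟨W', v', h1', h2', h3', h4', h5'⟩ := h'
  refine ⟨Sum.elim W W', Sum.elim v v', ?_, ?_, ?_, ?_, ?_⟩
  · rintro (j | j) k <;> simp [h1, h1']
  · rintro (j | j) <;> simp [h2, h2']
  · rw [Fintype.card_sum]; omega
  · simp only [Fintype.sum_sum_type, Sum.elim_inl, Sum.elim_inr]; omega
  · rintro (j | j) x <;> simp [h5, h5']

lemma Layer.par {w w' : ℕ} {F : κ → X → ℝ} {F' : κ' → X → ℝ} {G : μ → X → ℝ} {G' : μ' → X → ℝ}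
    (h : Layer w F G) (h' : Layer w' F' G') :
    Layer (w + w') (Sum.elim F F') (Sum.elim G G') := by
  obtain ⟨W, v, h1, h2, h3, h4, h5⟩ := h
  obtain ⟨W', v', h1', h2', h3', h4', h5'⟩ := h'
  refine ⟨Sum.elim (fun j => Sum.elim (W j) 0) (fun j => Sum.elim 0 (W' j)), Sum.elim v v',
    ?_, ?_, ?_, ?_, ?_⟩
  · rintro (j | j) (k | k) <;> simp [h1, h1']
  · rintro (j | j) <;> simp [h2, h2']
  · rw [Fintype.card_sum]; omega
  · simp only [Fintype.sum_sum_type, Sum.elim_inl, Sum.elim_inr, Pi.zero_apply, nz_zero,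
      Finset.sum_const_zero, add_zero, zero_add]; omega
  · rintro (j | j) x <;> simp [h5, h5']

lemma Reach.mono {inp : ι → X → ℝ} {w w' L : ℕ} {F : κ → X → ℝ} (h : Reach inp w L F)
    (hw : w ≤ w') : Reach inp w' L F := by
  induction L generalizing κ with
  | zero => exact Layer.mono h hw
  | succ L ih =>
    obtain ⟨μ, _, H, h1, h2⟩ := h
    exact ⟨μ, _, H, ih h1, h2.mono hw⟩

lemma Reach.nonneg {inp : ι → X → ℝ} {w L : ℕ} {F : κ → X → ℝ} (h : Reach inp w L F)
    (j : κ) (x : X) : 0 ≤ F j x := by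
  cases L with
  | zero => exact Layer.nonneg h j x
  | succ L => obtain ⟨μ, _, H, _, h2⟩ := h; exact h2.nonneg j x

lemma Reach.card_le {inp : ι → X → ℝ} {w L : ℕ} {F : κ → X → ℝ} (h : Reach inp w L F) :
    Fintype.card κ ≤ w := by
  cases L with
  | zero => obtain ⟨_, _, _, _, h3, _⟩ := h; exact h3
  | succ L => obtain ⟨μ, _, H, _, ⟨_, _, _, _, h3, _⟩⟩ := h; exact h3

lemma Reach.step {inp : ι → X → ℝ} {w L : ℕ} {F : κ → X → ℝ} {G : μ → X → ℝ}
    (h : Reach inp w L F) (h' : Layer w F G) : Reach inp w (L + 1) G :=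
  ⟨κ, _, F, h, h'⟩

lemma Reach.trans {inp : ι → X → ℝ} {w L L' : ℕ} {F : κ → X → ℝ} {G : μ → X → ℝ}
    (h : Reach inp w L F) (h' : Reach F w L' G) : Reach inp w (L + L' + 1) G := by
  induction L' generalizing μ with
  | zero => exact h.step h'
  | succ L' ih =>
    obtain ⟨ν, _, H, h1, h2⟩ := h'
    exact ⟨ν, _, H, ih h1, h2⟩

lemma Reach.reindex {inp : ι → X → ℝ} {w L : ℕ} {F : κ → X → ℝ} (h : Reach inp w L F)
    (e : κ' ≃ κ) : Reach inp w L (fun j => F (e j)) := by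
  cases L with
  | zero => exact Layer.reindex h e
  | succ L => obtain ⟨μ, _, H, h1, h2⟩ := h; exact ⟨μ, _, H, h1, h2.reindex e⟩

lemma Reach.par {inp : ι → X → ℝ} {w w' L : ℕ} {F : κ → X → ℝ} {G : μ → X → ℝ}
    (h : Reach inp w L F) (h' : Reach inp w' L G) :
    Reach inp (w + w') L (Sum.elim F G) := by
  induction L generalizing κ μ with
  | zero => exact Layer.stack h h'
  | succ L ih =>
    obtain ⟨ν, _, H, h1, h2⟩ := h
    obtain ⟨ν', _, H', h1', h2'⟩ := h'
    exact ⟨ν ⊕ ν', inferInstance, Sum.elim H H', ih h1 h1', h2.par h2'⟩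

lemma Reach.pad {inp : ι → X → ℝ} {w L L' : ℕ} {F : κ → X → ℝ} (h : Reach inp w L F)
    (hL : L ≤ L') : Reach inp w L' F := by
  induction L', hL using Nat.le_induction with
  | base => exact h
  | succ n _ ih => exact ih.step (Layer.select ih.nonneg id ih.card_le)

lemma Reach.select {inp : ι → X → ℝ} {w L : ℕ} {F : κ → X → ℝ} (h : Reach inp w L F)
    (e : μ → κ) (hw : Fintype.card μ ≤ w) : Reach inp w (L + 1) (fun j => F (e j)) :=
  h.step (Layer.select h.nonneg e hw)

/-- Restrict the inputs of a module to a subfamily of the available inputs. -/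
lemma Reach.of_select {inp : ι → X → ℝ} (hinp : ∀ i x, 0 ≤ inp i x) {w L : ℕ} (e : κ → ι)
    (hw : Fintype.card κ ≤ w) {G : μ → X → ℝ} (h : Reach (fun j => inp (e j)) w L G) :
    Reach inp w (L + 1) G := by
  have h0 : Reach inp w 0 (fun j => inp (e j)) := Layer.select hinp e hw
  simpa using h0.trans h

/-- Parallel composition of a finite family of scalar modules. -/
lemma Reach.pi {inp : ι → X → ℝ} {w L : ℕ} (J : Type) [Fintype J] (f : J → X → ℝ)
    (h : ∀ j, Reach inp w L (fun _ : Unit => f j)) : Reach inp (Fintype.card J * w) L f := by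
  refine Fintype.induction_empty_option (P := fun J _ => ∀ f : J → X → ℝ,
    (∀ j, Reach inp w L (fun _ : Unit => f j)) → Reach inp (Fintype.card J * w) L f)
    ?_ ?_ ?_ J f h
  · intro α β _ e ih f h
    let _ : Fintype α := Fintype.ofEquiv β e.symm
    have := (ih (fun a => f (e a)) (fun a => h _)).reindex e.symm
    rw [← Fintype.card_congr e]
    simpa using this
  · clear h
    intro f _
    have h0 : ∀ (κ : Type) [Fintype κ] (H : κ → X → ℝ), Layer 0 H f := fun κ _ H =>
      ⟨fun j => j.elim, fun j => j.elim, fun j => j.elim, fun j => j.elim, by simp, by simp,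
        fun j => j.elim⟩
    simp only [Fintype.card_pempty, zero_mul]
    induction L with
    | zero => exact h0 _ _
    | succ L ih => exact (ih (fun j => j.elim)).step (h0 _ _)
  · intro α _ ih f h
    have h1 := (ih (fun a => f (some a)) (fun a => h _)).par (h none)
    have h2 := h1.reindex (Equiv.optionEquivSumPUnit α)
    rw [Fintype.card_option, add_mul, one_mul]
    convert h2 using 2 with j
    rcases j with _ | j <;> rfl

end calculus

/-! ## Elementary ReLU modules -/

lemma eq_max_zero {a b : ℝ} (h0 : 0 ≤ a) (h : b = a) : a = max 0 b := by
  rw [h, max_eq_right h0]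

section modules

variable {X : Type}

/-- Approximation of `x - x²` by iterating the tent map. -/
lemma reach_square (x : X → ℝ) (hx : ∀ t, x t ∈ Icc (0 : ℝ) 1) (s : ℕ) :
    ∃ y A : X → ℝ, Reach (fun _ : Unit => x) 24 (2 * s) ![y, A, x] ∧
      (∀ t, y t ∈ Icc (0 : ℝ) 1) ∧
      ∀ t, x t - x t ^ 2 = A t + (y t - y t ^ 2) / 4 ^ s := by
  induction s with
  | zero =>
    refine ⟨x, 0, ?_, hx, by simp⟩
    refine Layer.of_dense ![fun _ => 1, fun _ => 0, fun _ => 1] 0 ?_ ?_ (by simp) ?_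
    · intro j k; fin_cases j <;> simp
    · simp
    · intro j t; fin_cases j <;> simp [(hx t).1]
  | succ s ih =>
    obtain ⟨y, A, h, hy, hA⟩ := ih
    have hA0 : ∀ t, 0 ≤ A t := fun t => h.nonneg 1 t
    set a : X → ℝ := fun t => max 0 (y t - 1 / 2) with ha
    set b : X → ℝ := fun t => max 0 (1 / 2 - y t) with hb
    set c : ℝ := (4 ^ (s + 1))⁻¹ with hc
    have hc0 : 0 < c := by positivity
    have hc1 : c ≤ 1 := inv_le_one_of_one_le₀ (one_le_pow₀ (by norm_num))
    have hg : ∀ t, 0 ≤ 1 - 2 * a t - 2 * b t := fun t => by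
      have := hy t
      simp only [ha, hb, mem_Icc] at *
      rcases max_cases 0 (y t - 1 / 2) with h | h <;>
        rcases max_cases 0 (1 / 2 - y t) with h' | h' <;> linarith
    have hab : ∀ t, 0 ≤ a t ∧ 0 ≤ b t := fun t => ⟨le_max_left _ _, le_max_left _ _⟩
    refine ⟨fun t => 1 - 2 * a t - 2 * b t, fun t => A t + c * (1 - 2 * a t - 2 * b t),
      ?_, fun t => ⟨hg t, by linarith [hab t]⟩, ?_⟩
    · have l1 : Layer 24 ![y, A, x] ![a, a, b, b, A, x] := by
        refine Layer.of_dense ![![1, 0, 0], ![1, 0, 0], ![-1, 0, 0], ![-1, 0, 0], ![0, 1, 0],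
          ![0, 0, 1]] ![1 / 2, 1 / 2, -1 / 2, -1 / 2, 0, 0] ?_ ?_ (by simp) ?_
        · intro j k; fin_cases j <;> fin_cases k <;> simp
        · intro j; fin_cases j <;> norm_num [abs_le]
        · intro j t
          fin_cases j <;> simp [Fin.sum_univ_succ, ha, hb, hA0, (hx t).1]
          all_goals congr 1; ring
      have l2 : Layer 24 ![a, a, b, b, A, x]
          ![fun t => 1 - 2 * a t - 2 * b t, fun t => A t + c * (1 - 2 * a t - 2 * b t), x] := by
        refine Layer.of_dense ![![-1, -1, -1, -1, 0, 0], ![-c, -c, -c, -c, 1, 0],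
          ![0, 0, 0, 0, 0, 1]] ![-1, -c, 0] ?_ ?_ (by simp) ?_
        · intro j k; fin_cases j <;> fin_cases k <;> simp [abs_of_pos hc0, hc1]
        · intro j; fin_cases j <;> simp [abs_of_pos hc0, hc1]
        · intro j t
          have h3 : 0 ≤ A t + c * (1 - 2 * a t - 2 * b t) := by
            have := mul_nonneg hc0.le (hg t); linarith [hA0 t]
          fin_cases j
          · simp only [Fin.zero_eta, Matrix.cons_val_zero, Fin.sum_univ_succ]
            refine eq_max_zero (hg t) ?_; simp; ring
          · simp only [Fin.mk_one, Matrix.cons_val_one, Matrix.cons_val_zero, Fin.sum_univ_succ]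
            refine eq_max_zero h3 ?_; simp; ring
          · simp [Fin.sum_univ_succ, (hx t).1]
      exact (h.step l1).step l2
    · intro t
      have key : y t - y t ^ 2 = (1 - 2 * a t - 2 * b t) / 4 +
          ((1 - 2 * a t - 2 * b t) - (1 - 2 * a t - 2 * b t) ^ 2) / 4 := by
        simp only [ha, hb]
        rcases max_cases 0 (y t - 1 / 2) with ⟨h, h0⟩ | ⟨h, h0⟩ <;>
          rcases max_cases 0 (1 / 2 - y t) with ⟨h', h0'⟩ | ⟨h', h0'⟩ <;> rw [h, h']
        · have : y t = 1 / 2 := by linarith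
          rw [this]; norm_num
        · ring
        · ring
        · linarith
      rw [hA, key, hc]; field_simp; ring

/-- Truncation at level `1` of a nonnegative scalar. -/
lemma reach_min_one (z : X → ℝ) :
    Reach (fun _ : Unit => z) 2 1 (fun _ : Unit => fun t => min 1 (max 0 (z t))) := by
  have l1 : Layer 2 (fun _ : Unit => z) (fun _ : Unit => fun t => max 0 (1 - z t)) := by
    refine Layer.of_dense (fun _ _ => -1) (fun _ => -1) (by simp) (by simp) (by simp) ?_
    intro j t; simp; ring_nf
  have l2 : Layer 2 (fun _ : Unit => fun t => max 0 (1 - z t))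
      (fun _ : Unit => fun t => min 1 (max 0 (z t))) := by
    refine Layer.of_dense (fun _ _ => -1) (fun _ => -1) (by simp) (by simp) (by simp) ?_
    intro j t; simp
    rcases max_cases 0 (z t) with ⟨h, h0⟩ | ⟨h, h0⟩ <;>
      rcases max_cases 0 (1 - z t) with ⟨h', h0'⟩ | ⟨h', h0'⟩ <;> rw [h, h'] <;>
      rcases min_cases 1 (z t) with ⟨h2, h3⟩ | ⟨h2, h3⟩ <;> simp <;> try linarith
  exact ⟨Unit, _, _, l1, l2⟩

/-- Approximate multiplication of two scalars in `[0,1]`. -/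
lemma reach_mul (p q : X → ℝ) (hp : ∀ t, p t ∈ Icc (0 : ℝ) 1) (hq : ∀ t, q t ∈ Icc (0 : ℝ) 1)
    (s : ℕ) :
    ∃ out : X → ℝ, Reach ![p, q] 48 (2 * s + 6) (fun _ : Unit => out) ∧
      (∀ t, out t ∈ Icc (0 : ℝ) 1) ∧ ∀ t, |out t - p t * q t| ≤ (4 ^ s)⁻¹ := by
  set m : X → ℝ := fun t => (p t + q t) / 2 with hm
  set e : X → ℝ := fun t => |p t - q t| / 2 with he
  have hm1 : ∀ t, m t ∈ Icc (0 : ℝ) 1 := fun t => by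
    have := hp t; have := hq t; simp only [hm, mem_Icc] at *; constructor <;> linarith
  have he1 : ∀ t, e t ∈ Icc (0 : ℝ) 1 := fun t => by
    have h1 := hp t; have h2 := hq t; simp only [he, mem_Icc] at *
    have : |p t - q t| ≤ 1 := abs_le.2 ⟨by linarith, by linarith⟩
    have := abs_nonneg (p t - q t)
    constructor <;> linarith
  have l1 : Layer 48 ![p, q]
      ![fun t => max 0 (p t - q t), fun t => max 0 (q t - p t), p, q] := by
    refine Layer.of_dense ![![1, -1], ![-1, 1], ![1, 0], ![0, 1]] 0 ?_ (by simp) (by simp) ?_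
    · intro j k; fin_cases j <;> fin_cases k <;> simp
    · intro j t; fin_cases j <;> simp [(hp t).1, (hq t).1]; congr 1; ring
  have l2 : Layer 48 ![fun t => max 0 (p t - q t), fun t => max 0 (q t - p t), p, q]
      ![m, e] := by
    refine Layer.of_dense ![![0, 0, 1 / 2, 1 / 2], ![1 / 2, 1 / 2, 0, 0]] 0 ?_ (by simp)
      (by simp) ?_
    · intro j k; fin_cases j <;> fin_cases k <;> norm_num [abs_le]
    · intro j t
      fin_cases j
      · simp only [Fin.zero_eta, Matrix.cons_val_zero, Fin.sum_univ_succ]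
        refine eq_max_zero (hm1 t).1 ?_; simp [hm]; ring
      · simp only [Fin.mk_one, Matrix.cons_val_one, Matrix.cons_val_zero, Fin.sum_univ_succ]
        refine eq_max_zero (he1 t).1 ?_; simp [he]
        rcases le_total (p t) (q t) with h | h
        · rw [abs_of_nonpos (by linarith), max_eq_left (by linarith), max_eq_right (by linarith)]
          ring
        · rw [abs_of_nonneg (by linarith), max_eq_right (by linarith), max_eq_left (by linarith)]
          ring
  obtain ⟨y, A, r1, hy, hA⟩ := reach_square m hm1 s
  obtain ⟨y', A', r2, hy', hA'⟩ := reach_square e he1 s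
  have hme : ∀ (i : Fin 2) t, 0 ≤ (![m, e] : Fin 2 → X → ℝ) i t := by
    intro i t; fin_cases i
    · exact (hm1 t).1
    · exact (he1 t).1
  have r1' : Reach ![m, e] 24 (2 * s + 1) ![y, A, m] :=
    Reach.of_select hme (fun _ : Unit => 0) (by simp) (by simpa using r1)
  have r2' : Reach ![m, e] 24 (2 * s + 1) ![y', A', e] :=
    Reach.of_select hme (fun _ : Unit => 1) (by simp) (by simpa using r2)
  have r3 := r1'.par r2'
  have l3 : Layer 48 (Sum.elim ![y, A, m] ![y', A', e])
      (fun _ : Unit => fun t => max 0 (m t - A t - e t + A' t)) := by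
    refine Layer.of_dense (fun _ => Sum.elim ![0, -1, 1] ![0, 1, -1]) 0 ?_ (by simp)
      (by simp) ?_
    · rintro _ (k | k) <;> fin_cases k <;> simp
    · intro j t; simp [Fin.sum_univ_succ]; congr 1; ring
  have r4 : Reach ![p, q] 48 1 ![m, e] := ⟨_, _, _, l1, l2⟩
  have r5 := (r4.trans r3).step l3
  have r6 := r5.trans ((reach_min_one _).mono (by norm_num))
  refine ⟨_, r6.pad (by omega), fun t => ⟨by positivity, min_le_left _ _⟩, fun t => ?_⟩
  have h1 := hA t
  have h2 := hA' t
  have h3 : p t * q t = m t ^ 2 - e t ^ 2 := by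
    simp only [hm, he, div_pow, sq_abs]; ring
  have hb : ∀ y : ℝ, y ∈ Icc (0 : ℝ) 1 → 0 ≤ (y - y ^ 2) / 4 ^ s ∧
      (y - y ^ 2) / 4 ^ s ≤ (4 ^ s)⁻¹ := fun y hy => by
    have : 0 ≤ y - y ^ 2 := by nlinarith [hy.1, hy.2]
    refine ⟨by positivity, ?_⟩
    rw [div_eq_mul_inv]
    exact mul_le_of_le_one_left (by positivity) (by nlinarith [hy.1, hy.2])
  have hy1 := hb _ (hy t)
  have hy2 := hb _ (hy' t)
  have hpq0 : 0 ≤ p t * q t := mul_nonneg (hp t).1 (hq t).1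
  have hpq1 : p t * q t ≤ 1 := mul_le_one₀ (hp t).2 (hq t).1 (hq t).2
  have hu : |(m t - A t - e t + A' t) - p t * q t| ≤ (4 ^ s)⁻¹ := by
    rw [abs_le]; constructor <;> linarith
  rw [abs_le] at hu ⊢
  have := max_cases 0 (max 0 (m t - A t - e t + A' t))
  have := max_cases 0 (m t - A t - e t + A' t)
  have := min_cases 1 (max 0 (max 0 (m t - A t - e t + A' t)))
  have h4 : (0 : ℝ) < (4 ^ s)⁻¹ := by positivity
  constructor <;> grind

/-- Exact maximum of two scalars in `[0,1]`. -/
lemma reach_max (p q : X → ℝ) (hp : ∀ t, p t ∈ Icc (0 : ℝ) 1) (hq : ∀ t, q t ∈ Icc (0 : ℝ) 1) :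
    Reach ![p, q] 48 1 (fun _ : Unit => fun t => max (p t) (q t)) := by
  have l1 : Layer 48 ![p, q] ![p, fun t => max 0 (q t - p t)] := by
    refine Layer.of_dense ![![1, 0], ![-1, 1]] 0 ?_ (by simp) (by simp) ?_
    · intro j k; fin_cases j <;> fin_cases k <;> simp
    · intro j t; fin_cases j <;> simp [(hp t).1] ; ring_nf
  have l2 : Layer 48 ![p, fun t => max 0 (q t - p t)]
      (fun _ : Unit => fun t => max (p t) (q t)) := by
    refine Layer.of_dense (fun _ => ![1, 1]) 0 ?_ (by simp) (by simp) ?_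
    · intro j k; fin_cases k <;> simp
    · intro j t
      have h1 := (hp t).1
      have h2 := (hq t).1
      simp
      grind
  exact ⟨_, _, _, l1, l2⟩

/-- Multiplication of a nonnegative scalar by a power of two. -/
lemma reach_two_pow (z : X → ℝ) (hz : ∀ t, 0 ≤ z t) (k : ℕ) :
    Reach (fun _ : Unit => z) 6 (k + 1) (fun _ : Unit => fun t => 2 ^ k * z t) := by
  have h : Reach (fun _ : Unit => z) 6 k
      (fun _ : Fin 2 => fun t => 2 ^ k * z t) := by
    induction k with
    | zero =>
      simp only [pow_zero, one_mul]
      exact Layer.select (F := fun _ : Unit => z) (fun _ t => hz t) (fun _ : Fin 2 => ())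
        (by simp)
    | succ k ih =>
      refine ih.step (Layer.of_dense (fun _ _ => 1) 0 (by simp) (by simp) (by simp) ?_)
      intro j t
      have : 0 ≤ 2 ^ (k + 1) * z t := mul_nonneg (by positivity) (hz t)
      refine eq_max_zero this ?_; simp; ring
  exact h.select (fun _ => 0) (by simp)

/-- The iterated operation `op (p 0) (op (p 1) ⋯ e)`. -/
def foldOp (op : ℝ → ℝ → ℝ) (e : ℝ) : (D : ℕ) → (Fin D → ℝ) → ℝ
  | 0, _ => e
  | D + 1, p => op (p 0) (foldOp op e D fun j => p j.succ)

/-- Folding an approximately computable binary operation. -/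
lemma reach_fold (op : ℝ → ℝ → ℝ) (e δ : ℝ) (L : ℕ) (he : e ∈ Icc (0 : ℝ) 1)
    (hop : ∀ a ∈ Icc (0 : ℝ) 1, ∀ b ∈ Icc (0 : ℝ) 1, ∀ b' ∈ Icc (0 : ℝ) 1,
      |op a b - op a b'| ≤ |b - b'|)
    (hop1 : ∀ a ∈ Icc (0 : ℝ) 1, ∀ b ∈ Icc (0 : ℝ) 1, op a b ∈ Icc (0 : ℝ) 1)
    (hm : ∀ p q : X → ℝ, (∀ t, p t ∈ Icc (0 : ℝ) 1) → (∀ t, q t ∈ Icc (0 : ℝ) 1) →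
      ∃ out : X → ℝ, Reach ![p, q] 48 L (fun _ : Unit => out) ∧
        (∀ t, out t ∈ Icc (0 : ℝ) 1) ∧ ∀ t, |out t - op (p t) (q t)| ≤ δ)
    (D : ℕ) (p : Fin D → X → ℝ) (hp : ∀ j t, p j t ∈ Icc (0 : ℝ) 1) :
    ∃ out : X → ℝ, Reach p (48 + 2 * D) ((L + 3) * D) (fun _ : Unit => out) ∧
      (∀ t, out t ∈ Icc (0 : ℝ) 1) ∧
      (∀ t, foldOp op e D (fun j => p j t) ∈ Icc (0 : ℝ) 1) ∧
      ∀ t, |out t - foldOp op e D (fun j => p j t)| ≤ D * δ := by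
  induction D with
  | zero =>
    refine ⟨fun _ => e, ?_, fun _ => he, fun _ => he, by simp [foldOp]⟩
    refine Layer.of_dense 0 (fun _ => -e) (by simp) ?_ (by simp) ?_
    · intro j; rw [abs_neg, abs_of_nonneg he.1]; exact he.2
    · intro j t; simp [he.1]
  | succ D ih =>
    obtain ⟨o, r, ho, hf, hod⟩ := ih (fun j => p j.succ) (fun j => hp _)
    obtain ⟨out, ro, hout, hd⟩ := hm (p 0) o (hp 0) ho
    have hp0 : ∀ i t, 0 ≤ p i t := fun i t => (hp i t).1
    have r1 : Reach p (48 + 2 * D) ((L + 3) * D + 1) (fun _ : Unit => o) :=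
      Reach.of_select hp0 Fin.succ (by simp; omega) r
    have r2 : Reach p 1 ((L + 3) * D + 1) (fun _ : Unit => p 0) :=
      (show Reach p 1 0 (fun _ : Unit => p 0) from
        Layer.select hp0 (fun _ => 0) (by simp)).pad (by omega)
    have r3 : Reach p (48 + 2 * (D + 1)) ((L + 3) * D + 2) ![p 0, o] := by
      have := ((r2.par r1).mono (by omega : _ ≤ 48 + 2 * (D + 1))).select
        ![Sum.inl (), Sum.inr ()] (by simp; omega)
      convert this using 2 with j
      fin_cases j <;> rfl
    have r4 := r3.trans (ro.mono (by omega))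
    refine ⟨out, r4.pad (by ring_nf; omega), hout, fun t => hop1 _ (hp 0 t) _ (hf t), fun t => ?_⟩
    calc |out t - foldOp op e (D + 1) (fun j => p j t)|
        ≤ |out t - op (p 0 t) (o t)| + |op (p 0 t) (o t) - foldOp op e (D + 1) (fun j => p j t)| :=
          abs_sub_le _ _ _
      _ ≤ δ + D * δ := add_le_add (hd t)
          ((hop _ (hp 0 t) _ (ho t) _ (hf t)).trans (hod t))
      _ = _ := by push_cast; ring

lemma foldOp_mul (D : ℕ) (p : Fin D → ℝ) : foldOp (· * ·) 1 D p = ∏ j, p j := by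
  induction D with
  | zero => simp [foldOp]
  | succ D ih => simp only [foldOp, ih, Fin.prod_univ_succ]

/-- Approximate product of `D` scalars in `[0,1]`. -/
lemma reach_prod (s D : ℕ) (p : Fin D → X → ℝ) (hp : ∀ j t, p j t ∈ Icc (0 : ℝ) 1) :
    ∃ out : X → ℝ, Reach p (48 + 2 * D) ((2 * s + 9) * D) (fun _ : Unit => out) ∧
      (∀ t, out t ∈ Icc (0 : ℝ) 1) ∧ ∀ t, |out t - ∏ j, p j t| ≤ D * (4 ^ s)⁻¹ := by
  obtain ⟨out, h1, h2, -, h3⟩ := reach_fold (· * ·) 1 (4 ^ s)⁻¹ (2 * s + 6) (by simp)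
    (fun a ha b _ b' _ => by
      simp only [← mul_sub, abs_mul, abs_of_nonneg ha.1]
      exact mul_le_of_le_one_left (abs_nonneg _) ha.2)
    (fun a ha b hb => ⟨mul_nonneg ha.1 hb.1, mul_le_one₀ ha.2 hb.1 hb.2⟩)
    (fun p q hp hq => reach_mul p q hp hq s) D p hp
  refine ⟨out, h1, h2, fun t => ?_⟩
  simpa [foldOp_mul] using h3 t

lemma foldOp_max_eq {D : ℕ} (p : Fin D → ℝ) (M : ℝ) (hM0 : 0 ≤ M) (hM : ∀ j, p j ≤ M) :
    foldOp max 0 D p ≤ M ∧ ∀ j, p j ≤ foldOp max 0 D p := by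
  induction D with
  | zero => exact ⟨hM0, fun j => j.elim0⟩
  | succ D ih =>
    obtain ⟨h1, h2⟩ := ih (fun j => p j.succ) (fun j => hM _)
    refine ⟨max_le (hM 0) h1, fun j => ?_⟩
    refine Fin.cases (le_max_left _ _) (fun j => (h2 j).trans (le_max_right _ _)) j

/-- Exact maximum over a nonempty finite set of scalars in `[0,1]`. -/
lemma reach_sup {ι : Type} [Fintype ι] (p : ι → X → ℝ) (hp : ∀ j t, p j t ∈ Icc (0 : ℝ) 1)
    (I : Finset ι) (hI : I.Nonempty) {D : ℕ} (hD : I.card ≤ D) :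
    Reach p (48 + 2 * D) (4 * D + 1) (fun _ : Unit => fun t => I.sup' hI fun i => p i t) := by
  set e : Fin I.card → ι := fun j => (I.equivFin.symm j : ι) with he
  obtain ⟨out, h1, -, -, h3⟩ := reach_fold max 0 0 1 (by simp)
    (fun a ha b _ b' _ => by
      simpa using abs_max_sub_max_le_max a b a b')
    (fun a ha b hb => ⟨ha.1.trans (le_max_left _ _), max_le ha.2 hb.2⟩)
    (fun p q hp hq => ⟨_, reach_max p q hp hq,
      fun t => ⟨(hp t).1.trans (le_max_left _ _), max_le (hp t).2 (hq t).2⟩, by simp⟩)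
    I.card (fun j => p (e j)) (fun j t => hp _ t)
  have h4 : (fun _ : Unit => out) = fun _ : Unit => fun t => I.sup' hI fun i => p i t := by
    funext _ t
    have h5 := h3 t
    rw [mul_zero, abs_nonpos_iff, sub_eq_zero] at h5
    rw [h5]
    obtain ⟨i0, hi0⟩ := hI
    obtain ⟨ha, hb⟩ := foldOp_max_eq (fun j => p (e j) t) (I.sup' ⟨i0, hi0⟩ fun i => p i t)
      ((hp i0 t).1.trans (Finset.le_sup' (fun i => p i t) hi0))
      (fun j => Finset.le_sup' (fun i => p i t) (I.equivFin.symm j).2)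
    refine le_antisymm ha (Finset.sup'_le _ _ fun i hi => ?_)
    simpa [he] using hb (I.equivFin ⟨i, hi⟩)
  rw [← h4]
  have h6 := Reach.of_select (inp := p) (fun i t => (hp i t).1) e (by simp; omega) h1
  exact (h6.mono (by omega)).pad (by omega)

end modules

/-! ## Local polynomial approximation of Hölder functions -/

/-- The `i`-th partial derivative. -/
def pd {m : ℕ} (i : Fin m) (f : (Fin m → ℝ) → ℝ) : (Fin m → ℝ) → ℝ :=
  fun x => fderiv ℝ f x (Pi.single i 1)

lemma isOpen_cubeo (m : ℕ) : IsOpen (cubeo m) :=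
  isOpen_set_pi finite_univ fun _ _ => isOpen_Ioo

lemma convex_cubeo (m : ℕ) : Convex ℝ (cubeo m) :=
  convex_pi fun _ _ => convex_Ioo _ _

lemma closure_cubeo (m : ℕ) : closure (cubeo m) = cube m := by
  simp [cubeo, cube, closure_pi_set, closure_Ioo]

lemma cubeo_subset_cube (m : ℕ) : cubeo m ⊆ cube m :=
  fun _ hx i hi => Ioo_subset_Icc_self (hx i hi)

section deriv

variable {m : ℕ} {U : Set (Fin m → ℝ)}

lemma pd_congr (hU : IsOpen U) {f g : (Fin m → ℝ) → ℝ} (h : EqOn f g U) (i : Fin m) :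
    EqOn (pd i f) (pd i g) U := fun x hx => by
  simp only [pd]
  rw [(Filter.eventuallyEq_of_mem (hU.mem_nhds hx) h).fderiv_eq]

lemma pderivList_congr (hU : IsOpen U) {f g : (Fin m → ℝ) → ℝ} (h : EqOn f g U)
    (l : List (Fin m)) : EqOn (pderivList l f) (pderivList l g) U := by
  induction l generalizing f g with
  | nil => exact h
  | cons i l ih => exact ih (pd_congr hU h i)

lemma contDiffOn_pd (hU : IsOpen U) {f : (Fin m → ℝ) → ℝ} {k : ℕ}
    (h : ContDiffOn ℝ ((k + 1 : ℕ) : ℕ∞) f U) (i : Fin m) :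
    ContDiffOn ℝ ((k : ℕ) : ℕ∞) (pd i f) U := by
  have h1 : ContDiffOn ℝ ((k : ℕ) : ℕ∞) (fderiv ℝ f) U :=
    h.fderiv_of_isOpen hU (by norm_cast)
  exact h1.clm_apply contDiffOn_const

lemma pd_comm (hU : IsOpen U) {f : (Fin m → ℝ) → ℝ} {k : ℕ}
    (h : ContDiffOn ℝ ((k + 2 : ℕ) : ℕ∞) f U) (i j : Fin m) :
    EqOn (pd i (pd j f)) (pd j (pd i f)) U := by
  intro x hx
  have h2 : ContDiffAt ℝ 2 f x := (h.contDiffAt (hU.mem_nhds hx)).of_le (by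
    have : ((2 : ℕ) : ℕ∞) ≤ ((k + 2 : ℕ) : ℕ∞) := by exact_mod_cast Nat.le_add_left 2 k
    exact WithTop.coe_le_coe.2 this)
  have hs : IsSymmSndFDerivAt ℝ f x := h2.isSymmSndFDerivAt (by simp)
  have hd : DifferentiableAt ℝ (fderiv ℝ f) x :=
    (h2.fderiv_right (m := 1) (by norm_num)).differentiableAt (by norm_num)
  have key : ∀ a b : Fin m, pd a (pd b f) x =
      fderiv ℝ (fderiv ℝ f) x (Pi.single a 1) (Pi.single b 1) := by
    intro a b
    change fderiv ℝ (fun y => fderiv ℝ f y (Pi.single b 1)) x (Pi.single a 1) = _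
    rw [fderiv_clm_apply hd (differentiableAt_const _)]
    simp
  rw [key, key]
  exact hs _ _

lemma pderivList_perm (hU : IsOpen U) {l l' : List (Fin m)} (hl : l.Perm l')
    {f : (Fin m → ℝ) → ℝ} (h : ContDiffOn ℝ (l.length : ℕ∞) f U) :
    EqOn (pderivList l f) (pderivList l' f) U := by
  induction hl generalizing f with
  | nil => exact fun _ _ => rfl
  | cons i _ ih => exact ih (contDiffOn_pd hU h i)
  | swap i j l =>
    exact pderivList_congr hU (pd_comm (k := l.length) hU h i j) l
  | trans h1 _ ih1 ih2 =>
    exact (ih1 h).trans (ih2 (by rwa [← h1.length_eq]))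

lemma idxList_perm (l : List (Fin m)) : l.Perm (idxList fun i => l.count i) := by
  classical
  rw [List.perm_iff_count]
  intro a
  simp only [idxList, List.count_flatMap, Function.comp_def, List.count_replicate]
  rw [← List.ofFn_eq_map, List.sum_ofFn]
  simp

lemma mord_count (l : List (Fin m)) : mord (fun i => l.count i) = l.length := by
  classical
  have := Multiset.sum_count_eq_card (s := Finset.univ) (m := (l : Multiset (Fin m)))
    fun a _ => Finset.mem_univ a
  simpa [mord] using this

end deriv

lemma ceil_eq_smoothOrder {β : ℝ} (hβ : 0 < β) : (⌈β⌉ : ℝ) = smoothOrder β + 1 := by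
  have h1 : (⌈β - 1⌉ : ℤ) = ⌈β⌉ - 1 := Int.ceil_sub_one β
  have h2 : 0 ≤ ⌈β - 1⌉ := by
    rw [h1]; have := Int.one_le_ceil_iff.2 hβ; omega
  have h3 : ((smoothOrder β : ℕ) : ℤ) = ⌈β - 1⌉ := by
    rw [smoothOrder, Int.natCast_ceil_eq_ceil_of_neg_one_lt (by linarith)]
  have h4 : ⌈β⌉ = (smoothOrder β : ℤ) + 1 := by omega
  rw [h4]; push_cast; ring

lemma smoothOrder_lt {β : ℝ} (hβ : 0 < β) : (smoothOrder β : ℝ) < β := by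
  have := Int.ceil_lt_add_one β
  rw [ceil_eq_smoothOrder hβ] at this
  linarith

lemma le_smoothOrder_add_one {β : ℝ} (hβ : 0 < β) : β ≤ smoothOrder β + 1 := by
  rw [← ceil_eq_smoothOrder hβ]; exact Int.le_ceil β

lemma HolderBall.abs_pderivList_le {m : ℕ} {β r : ℝ} (hβ : 0 < β) (hr : 0 < r)
    {f : (Fin m → ℝ) → ℝ} (hf : f ∈ HolderBall m β r) {l : List (Fin m)}
    (hl : l.length ≤ smoothOrder β) {x : Fin m → ℝ} (hx : x ∈ cubeo m) :
    |pderivList l f x| ≤ r := by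
  obtain ⟨-, h1, -, h2⟩ := hf
  have h3 := pderivList_perm (isOpen_cubeo m) (idxList_perm l)
    (h1.of_le (by exact_mod_cast hl)) hx
  rw [h3]
  have h4 := le_self_add.trans h2
  simp only [iSup_le_iff] at h4
  have h5 := h4 (fun i => l.count i) (by
    rw [mord_count]; exact lt_of_le_of_lt (by exact_mod_cast hl) (smoothOrder_lt hβ)) x hx
  exact (ENNReal.ofReal_le_ofReal_iff hr.le).1 h5

lemma e2_le {m : ℕ} (x z : Fin m → ℝ) : e2 x z ≤ m * ‖x - z‖ := by
  unfold e2
  have h0 : 0 ≤ (m : ℝ) * ‖x - z‖ := by positivity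
  rw [Real.sqrt_le_left h0]
  calc ∑ i, (x i - z i) ^ 2 ≤ ∑ _i : Fin m, ‖x - z‖ ^ 2 := by
        refine Finset.sum_le_sum fun i _ => ?_
        rw [← sq_abs]
        exact pow_le_pow_left₀ (abs_nonneg _) (norm_le_pi_norm (x - z) i) 2
    _ = m * ‖x - z‖ ^ 2 := by simp
    _ ≤ (m * ‖x - z‖) ^ 2 := by
        rw [mul_pow]
        have : (m : ℝ) ≤ (m : ℝ) ^ 2 := by exact_mod_cast Nat.le_self_pow (by norm_num) m
        gcongr

lemma HolderBall.abs_pderivList_sub_le {m : ℕ} {β r : ℝ} (hβ : 0 < β) (hr : 0 < r)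
    {f : (Fin m → ℝ) → ℝ} (hf : f ∈ HolderBall m β r) {l : List (Fin m)}
    (hl : l.length = smoothOrder β) {x z : Fin m → ℝ} (hx : x ∈ cubeo m) (hz : z ∈ cubeo m) :
    |pderivList l f x - pderivList l f z| ≤ r * (m * ‖x - z‖) ^ (β - smoothOrder β) := by
  have hγ : 0 < β - smoothOrder β := by linarith [smoothOrder_lt hβ]
  rcases eq_or_ne x z with rfl | hne
  · simp [Real.zero_rpow hγ.ne']
  obtain ⟨-, h1, -, h2⟩ := hf
  have h3 := pderivList_perm (isOpen_cubeo m) (idxList_perm l)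
    (h1.of_le (by exact_mod_cast hl.le))
  rw [h3 hx, h3 hz]
  have h4 := le_add_self.trans h2
  simp only [iSup_le_iff] at h4
  have h5 := h4 (fun i => l.count i) (by
    rw [mord_count, hl, ceil_eq_smoothOrder hβ]
    exact ⟨by linarith, smoothOrder_lt hβ⟩) x hx z hz hne
  have he : 0 < e2 x z := by
    unfold e2
    refine Real.sqrt_pos.2 ?_
    obtain ⟨i, hi⟩ := Function.ne_iff.1 hne
    refine Finset.sum_pos' (fun i _ => sq_nonneg _) ⟨i, Finset.mem_univ _, ?_⟩
    have := sub_ne_zero.2 hi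
    positivity
  have hexp : β + 1 - (⌈β⌉ : ℝ) = β - smoothOrder β := by
    rw [ceil_eq_smoothOrder hβ]; ring
  rw [hexp, ENNReal.ofReal_rpow_of_pos he, ← ENNReal.ofReal_div_of_pos (by positivity),
    ENNReal.ofReal_le_ofReal_iff hr.le, div_le_iff₀ (by positivity)] at h5
  refine h5.trans ?_
  have := e2_le x z
  gcongr

/-- The homogeneous Taylor terms of `f` at `x` in direction `h` (without factorials). -/
def taylorTerm {m : ℕ} : ℕ → ((Fin m → ℝ) → ℝ) → (Fin m → ℝ) → (Fin m → ℝ) → ℝ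
  | 0, f, _, x => f x
  | j + 1, f, h, x => ∑ i, h i * taylorTerm j (pd i f) h x

lemma hasDerivAt_taylorTerm {m : ℕ} {U : Set (Fin m → ℝ)} (hU : IsOpen U) (a h : Fin m → ℝ)
    (j : ℕ) {f : (Fin m → ℝ) → ℝ} (hf : ContDiffOn ℝ ((j + 1 : ℕ) : ℕ∞) f U) {t : ℝ}
    (ht : a + t • h ∈ U) :
    HasDerivAt (fun t : ℝ => taylorTerm j f h (a + t • h)) (taylorTerm (j + 1) f h (a + t • h))
      t := by
  induction j generalizing f with
  | zero =>
    simp only [taylorTerm]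
    have h1 : DifferentiableAt ℝ f (a + t • h) :=
      (hf.contDiffAt (hU.mem_nhds ht)).differentiableAt (by simp)
    have h2 : HasDerivAt (fun t : ℝ => a + t • h) h t := by
      simpa using ((hasDerivAt_id t).smul_const h).const_add a
    have h3 := h1.hasFDerivAt.comp_hasDerivAt t h2
    refine h3.congr_deriv ?_
    have h4 : h = ∑ i, h i • (Pi.single i (1 : ℝ) : Fin m → ℝ) := by
      ext k; simp [Finset.sum_apply, Pi.single_apply]
    have h5 := congrArg (fderiv ℝ f (a + t • h)) h4
    rw [h5, map_sum]
    simp [pd]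
  | succ j ih =>
    have h1 : ∀ i, HasDerivAt (fun t : ℝ => taylorTerm j (pd i f) h (a + t • h))
        (taylorTerm (j + 1) (pd i f) h (a + t • h)) t := fun i => ih (contDiffOn_pd hU hf i)
    have h2 := HasDerivAt.fun_sum (u := Finset.univ) fun i _ => (h1 i).const_mul (h i)
    exact h2

lemma abs_taylorTerm_sub_le {m : ℕ} (h x a : Fin m → ℝ) (E : ℝ) (j : ℕ)
    {f : (Fin m → ℝ) → ℝ}
    (hf : ∀ l : List (Fin m), l.length = j → |pderivList l f x - pderivList l f a| ≤ E) :
    |taylorTerm j f h x - taylorTerm j f h a| ≤ (m * ‖h‖) ^ j * E := by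
  induction j generalizing f with
  | zero => simpa [taylorTerm, pderivList] using hf [] rfl
  | succ j ih =>
    have hi : ∀ i, |taylorTerm j (pd i f) h x - taylorTerm j (pd i f) h a| ≤
        (m * ‖h‖) ^ j * E := fun i => ih fun l hl => hf (i :: l) (by simp [hl])
    simp only [taylorTerm, ← Finset.sum_sub_distrib, ← mul_sub]
    calc |∑ i, h i * (taylorTerm j (pd i f) h x - taylorTerm j (pd i f) h a)|
        ≤ ∑ i, |h i * (taylorTerm j (pd i f) h x - taylorTerm j (pd i f) h a)| :=
          Finset.abs_sum_le_sum_abs _ _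
      _ ≤ ∑ _i : Fin m, ‖h‖ * ((m * ‖h‖) ^ j * E) := by
          refine Finset.sum_le_sum fun i _ => ?_
          rw [abs_mul]
          exact mul_le_mul (norm_le_pi_norm h i) (hi i) (abs_nonneg _) (norm_nonneg _)
      _ = (m * ‖h‖) ^ (j + 1) * E := by simp; ring

/-- One-dimensional Taylor estimate for a chain of derivatives. -/
lemma taylor_chain (k : ℕ) (g : ℕ → ℝ → ℝ) (E : ℝ)
    (hg : ∀ j < k, ∀ t ∈ Icc (0 : ℝ) 1, HasDerivAt (g j) (g (j + 1) t) t)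
    (hE : ∀ t ∈ Icc (0 : ℝ) 1, |g k t - g k 0| ≤ E) :
    ∀ t ∈ Icc (0 : ℝ) 1,
      |g 0 t - ∑ j ∈ Finset.range (k + 1), g j 0 * (t ^ j / j.factorial)| ≤ E := by
  induction k generalizing g with
  | zero => simpa using hE
  | succ k ih =>
    have h1 := ih (fun j => g (j + 1)) (fun j hj => hg (j + 1) (by omega)) hE
    set φ : ℝ → ℝ := fun t =>
      g 0 t - ∑ j ∈ Finset.range (k + 2), g j 0 * (t ^ j / j.factorial) with hφ
    have hd : ∀ t ∈ Icc (0 : ℝ) 1, HasDerivAt φ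
        (g 1 t - ∑ j ∈ Finset.range (k + 1), g (j + 1) 0 * (t ^ j / j.factorial)) t := by
      intro t ht
      refine (hg 0 (by omega) t ht).sub ?_
      have h2 : ∀ j, HasDerivAt (fun t : ℝ => g (j + 1) 0 * (t ^ (j + 1) / (j + 1).factorial))
          (g (j + 1) 0 * (t ^ j / j.factorial)) t := by
        intro j
        refine (((hasDerivAt_pow (j + 1) t).div_const ((j + 1).factorial : ℝ)).const_mul
          (g (j + 1) 0)).congr_deriv ?_
        rw [Nat.factorial_succ]; push_cast
        have : (j.factorial : ℝ) ≠ 0 := by positivity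
        field_simp
      have h3 := HasDerivAt.fun_sum (u := Finset.range (k + 1)) fun j _ => h2 j
      have h4 := h3.add_const (g 0 0)
      have h6 : (fun t : ℝ => ∑ j ∈ Finset.range (k + 2), g j 0 * (t ^ j / j.factorial)) =
          fun t => (∑ j ∈ Finset.range (k + 1),
            g (j + 1) 0 * (t ^ (j + 1) / (j + 1).factorial)) + g 0 0 := by
        funext t
        rw [Finset.sum_range_succ']; simp
      rw [h6]
      exact h4
    intro t ht
    have hφ0 : φ 0 = 0 := by
      simp only [hφ]
      rw [Finset.sum_range_succ']; simp
    have h5 := (convex_Icc (0 : ℝ) 1).norm_image_sub_le_of_norm_hasDerivWithin_le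
      (fun s hs => (hd s hs).hasDerivWithinAt) (C := E) h1 (left_mem_Icc.2 zero_le_one) ht
    rw [hφ0, sub_zero, sub_zero, Real.norm_eq_abs, Real.norm_eq_abs] at h5
    have hE0 : 0 ≤ E := (abs_nonneg _).trans (hE 0 (by simp))
    refine h5.trans (mul_le_of_le_one_right hE0 ?_)
    rw [abs_of_nonneg ht.1]; exact ht.2

/-- The monomial attached to `α`, a product of `k` factors from `1, x₁, …, x_m`. -/
def monoVal {m k : ℕ} (α : Fin k → Option (Fin m)) (x : Fin m → ℝ) : ℝ :=
  ∏ j, (α j).elim 1 x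

/-- Polynomials of degree at most `k` with coefficients bounded by `R`. -/
def IsPoly {m : ℕ} (k : ℕ) (R : ℝ) (p : (Fin m → ℝ) → ℝ) : Prop :=
  ∃ c : (Fin k → Option (Fin m)) → ℝ, (∀ α, |c α| ≤ R) ∧ ∀ x, p x = ∑ α, c α * monoVal α x

section poly

variable {m k : ℕ} {R : ℝ} {p : (Fin m → ℝ) → ℝ}

lemma IsPoly.const (c : ℝ) (hc : |c| ≤ R) : IsPoly 0 R (fun _ : Fin m → ℝ => c) :=
  ⟨fun _ => c, fun _ => hc, fun x => by simp [monoVal]⟩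

lemma IsPoly.linear_mul (hp : IsPoly k R p) (b : Option (Fin m) → ℝ) (hb : ∀ o, |b o| ≤ 1) :
    IsPoly (k + 1) R (fun x => (∑ o, b o * o.elim 1 x) * p x) := by
  obtain ⟨c, h1, h2⟩ := hp
  refine ⟨fun α => b (α 0) * c (fun j => α j.succ), fun α => ?_, fun x => ?_⟩
  · rw [abs_mul]
    exact (mul_le_of_le_one_left (abs_nonneg _) (hb _)).trans (h1 _)
  · simp only [h2]
    rw [Finset.sum_mul_sum, ← Fintype.sum_prod_type',
      ← (Fin.consEquiv (fun _ : Fin (k + 1) => Option (Fin m))).sum_comp]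
    refine Finset.sum_congr rfl fun q _ => ?_
    simp [Fin.consEquiv, monoVal, Fin.prod_univ_succ]
    ring

lemma IsPoly.sub_mul (hp : IsPoly k R p) (i : Fin m) (a : ℝ) (ha : |a| ≤ 1) :
    IsPoly (k + 1) R (fun x => (x i - a) * p x) := by
  classical
  convert hp.linear_mul (fun o => o.elim (-a) fun j => if j = i then 1 else 0) ?_ using 3 with x
  · simp [Fintype.sum_option]; ring
  · rintro (_ | j)
    · simpa using ha
    · simp only [Option.elim_some]; split_ifs <;> simp

lemma IsPoly.succ (hp : IsPoly k R p) : IsPoly (k + 1) R p := by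
  convert hp.linear_mul (fun o => o.elim 1 fun _ => 0) ?_ using 2 with x
  · simp [Fintype.sum_option]
  · rintro (_ | j) <;> simp

lemma IsPoly.of_le {k' : ℕ} (hp : IsPoly k R p) (h : k ≤ k') : IsPoly k' R p := by
  induction k', h using Nat.le_induction with
  | base => exact hp
  | succ n _ ih => exact ih.succ

lemma IsPoly.mul_const (hp : IsPoly k R p) (b : ℝ) (hb : |b| ≤ 1) :
    IsPoly k R (fun x => p x * b) := by
  obtain ⟨c, h1, h2⟩ := hp
  refine ⟨fun α => c α * b, fun α => ?_, fun x => ?_⟩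
  · rw [abs_mul]
    exact (mul_le_of_le_one_right (abs_nonneg _) hb).trans (h1 _)
  · beta_reduce
    rw [h2, Finset.sum_mul]; exact Finset.sum_congr rfl fun _ _ => by ring

lemma IsPoly.sum {ι : Type} (s : Finset ι) {R : ι → ℝ} {p : ι → (Fin m → ℝ) → ℝ}
    (h : ∀ i ∈ s, IsPoly k (R i) (p i)) :
    IsPoly k (∑ i ∈ s, R i) (fun x => ∑ i ∈ s, p i x) := by
  choose! c h1 h2 using h
  refine ⟨fun α => ∑ i ∈ s, c i α, fun α => ?_, fun x => ?_⟩
  · exact (Finset.abs_sum_le_sum_abs _ _).trans (Finset.sum_le_sum fun i hi => h1 i hi α)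
  · beta_reduce
    rw [Finset.sum_congr rfl fun i hi => h2 i hi x, Finset.sum_comm]
    exact Finset.sum_congr rfl fun α _ => by rw [Finset.sum_mul]

lemma isPoly_taylorTerm {a : Fin m → ℝ} (ha : ∀ i, |a i| ≤ 1) (j : ℕ) {f : (Fin m → ℝ) → ℝ}
    (hf : ∀ l : List (Fin m), l.length = j → |pderivList l f a| ≤ R) :
    IsPoly j (m ^ j * R) (fun x => taylorTerm j f (x - a) a) := by
  induction j generalizing f with
  | zero => exact IsPoly.const _ (by simpa [pderivList] using hf [] rfl)
  | succ j ih =>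
    have := IsPoly.sum (Finset.univ : Finset (Fin m)) fun i _ =>
      (ih (f := pd i f) fun l hl => hf (i :: l) (by simp [hl])).sub_mul i (a i) (ha i)
    convert this using 1
    · simp; ring
    · rfl

end poly

/-- The constant in `HolderBall.exists_poly`. -/
def polyConst (m : ℕ) (β r : ℝ) : ℝ :=
  (∑ j ∈ Finset.range (smoothOrder β + 1), (m : ℝ) ^ j * r) +
    (m : ℝ) ^ smoothOrder β * r * (m : ℝ) ^ (β - smoothOrder β)

lemma HolderBall.exists_poly {m : ℕ} {β r : ℝ} (hβ : 0 < β) (hr : 0 < r)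
    {f : (Fin m → ℝ) → ℝ} (hf : f ∈ HolderBall m β r) {a : Fin m → ℝ} (ha : a ∈ cubeo m) :
    ∃ p : (Fin m → ℝ) → ℝ, IsPoly (smoothOrder β) (polyConst m β r) p ∧
      ∀ x ∈ cubeo m, |f x - p x| ≤ polyConst m β r * ‖x - a‖ ^ β := by
  set k := smoothOrder β with hk
  have hR0 : 0 ≤ ∑ j ∈ Finset.range (k + 1), (m : ℝ) ^ j * r :=
    Finset.sum_nonneg fun j _ => by positivity
  have hR1 : 0 ≤ (m : ℝ) ^ k * r * (m : ℝ) ^ (β - k) := by positivity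
  have ha1 : ∀ i, |a i| ≤ 1 := fun i => by
    have := ha i (mem_univ i)
    rw [abs_le]; constructor <;> linarith [this.1, this.2]
  refine ⟨fun x => ∑ j ∈ Finset.range (k + 1),
    taylorTerm j f (x - a) a * ((1 : ℝ) ^ j / j.factorial), ?_, fun x hx => ?_⟩
  · have h1 := IsPoly.sum (k := k) (Finset.range (k + 1)) (R := fun j => (m : ℝ) ^ j * r)
      (p := fun j x => taylorTerm j f (x - a) a * ((1 : ℝ) ^ j / j.factorial)) fun j hj => by
        refine IsPoly.of_le (k := j) ?_ (by have := Finset.mem_range.1 hj; omega)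
        refine IsPoly.mul_const ?_ _ ?_
        · exact isPoly_taylorTerm ha1 j fun l hl => HolderBall.abs_pderivList_le hβ hr hf
            (by have := Finset.mem_range.1 hj; omega) ha
        · rw [one_pow, abs_of_nonneg (by positivity)]
          exact div_le_one_of_le₀ (by exact_mod_cast Nat.succ_le_of_lt j.factorial_pos)
            (by positivity)
    obtain ⟨c, h2, h3⟩ := h1
    refine ⟨c, fun α => (h2 α).trans ?_, h3⟩
    unfold polyConst
    linarith
  · have hseg : ∀ t ∈ Icc (0 : ℝ) 1, a + t • (x - a) ∈ cubeo m := fun t ht =>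
      (convex_cubeo m).add_smul_sub_mem ha hx ht
    have h1 := taylor_chain k (fun j t => taylorTerm j f (x - a) (a + t • (x - a)))
      ((m * ‖x - a‖) ^ k * (r * (m * ‖x - a‖) ^ (β - k)))
      (fun j hj t ht => hasDerivAt_taylorTerm (isOpen_cubeo m) a (x - a) j
        (hf.2.1.of_le (by exact_mod_cast hj)) (hseg t ht))
      (fun t ht => abs_taylorTerm_sub_le _ _ _ _ k fun l hl => by
        refine (HolderBall.abs_pderivList_sub_le hβ hr hf hl (hseg t ht) (hseg 0 (by simp))).trans ?_
        have hγ : 0 < β - k := by linarith [smoothOrder_lt hβ]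
        have : ‖a + t • (x - a) - (a + (0 : ℝ) • (x - a))‖ ≤ ‖x - a‖ := by
          simp only [zero_smul, add_zero, add_sub_cancel_left, norm_smul, Real.norm_eq_abs,
            abs_of_nonneg ht.1]
          exact mul_le_of_le_one_left (norm_nonneg _) ht.2
        gcongr) 1 (by simp)
    simp only [one_smul, add_sub_cancel, zero_smul, add_zero] at h1
    refine h1.trans ?_
    have h2 : (m * ‖x - a‖) ^ k * (r * (m * ‖x - a‖) ^ (β - k)) =
        (m : ℝ) ^ k * r * (m : ℝ) ^ (β - k) * ‖x - a‖ ^ β := by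
      rw [Real.mul_rpow (by positivity) (by positivity), mul_pow]
      have : ‖x - a‖ ^ k * ‖x - a‖ ^ (β - k) = ‖x - a‖ ^ β := by
        rw [← Real.rpow_natCast, ← Real.rpow_add_of_nonneg (norm_nonneg _) (by positivity)
          (by linarith [smoothOrder_lt hβ])]
        congr 1; ring
      rw [← this]; ring
    rw [h2]
    unfold polyConst
    rw [← hk]
    gcongr
    linarith

/-! ## Network approximation of Hölder functions -/

/-- Clipping to `[0,1]`. -/
def clip01 (t : ℝ) : ℝ := min 1 (max 0 t)

lemma clip01_mem (t : ℝ) : clip01 t ∈ Icc (0 : ℝ) 1 :=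
  ⟨le_min zero_le_one (le_max_left _ _), min_le_left _ _⟩

lemma clip01_of_mem {t : ℝ} (h : t ∈ Icc (0 : ℝ) 1) : clip01 t = t := by
  rw [clip01, max_eq_right h.1, min_eq_right h.2]

lemma abs_clip01_sub_le (s t : ℝ) : |clip01 s - clip01 t| ≤ |s - t| := by
  unfold clip01
  refine (abs_min_sub_min_le_max _ _ _ _).trans ?_
  simp only [sub_self, abs_zero]
  refine max_le (abs_nonneg _) ((abs_max_sub_max_le_max _ _ _ _).trans ?_)
  simp

/-- The tent function. -/
def tent (t : ℝ) : ℝ := max 0 (1 - |t|)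

lemma tent_mem (t : ℝ) : tent t ∈ Icc (0 : ℝ) 1 :=
  ⟨le_max_left _ _, max_le zero_le_one (by linarith [abs_nonneg t])⟩

lemma abs_le_one_of_tent_ne_zero {t : ℝ} (h : tent t ≠ 0) : |t| ≤ 1 := by
  by_contra hc
  exact h (max_eq_left (by linarith))

lemma sum_tent {t : ℝ} (ht : 0 ≤ t) (n : ℕ) :
    ∑ i ∈ Finset.range (n + 1), tent (t - i) = min 1 (max 0 (n + 1 - t)) := by
  induction n with
  | zero =>
    simp only [zero_add, Finset.sum_range_one, Nat.cast_zero, sub_zero, tent, abs_of_nonneg ht]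
    rw [min_eq_right]
    exact max_le zero_le_one (by linarith)
  | succ n ih =>
    rw [Finset.sum_range_succ, ih, tent]
    push_cast
    rcases le_total t (n : ℝ) with h | h
    · rw [abs_of_nonpos (by linarith), max_eq_right (by linarith), min_eq_left (by linarith),
        max_eq_left (by linarith), max_eq_right (by linarith), min_eq_left (by linarith)]
      ring
    rcases le_total t (n + 1 : ℝ) with h' | h'
    · rw [abs_of_nonpos (by linarith), max_eq_right (by linarith), min_eq_right (by linarith),
        max_eq_right (by linarith), max_eq_right (by linarith), min_eq_left (by linarith)]
      ring
    · rw [abs_of_nonneg (by linarith), max_eq_left (by linarith), min_eq_right (by linarith),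
        zero_add, min_eq_right (max_le zero_le_one (by linarith))]
      congr 1; ring

lemma sum_prod_tent {m n : ℕ} {x : Fin m → ℝ} (hx : x ∈ cube m) :
    ∑ i : Fin m → Fin (n + 1), ∏ j, tent (n * x j - (i j : ℕ)) = 1 := by
  have h1 : ∀ j, ∑ i : Fin (n + 1), tent (n * x j - (i : ℕ)) = 1 := by
    intro j
    have hj := hx j (mem_univ j)
    have h0 : 0 ≤ (n : ℝ) * x j := mul_nonneg n.cast_nonneg hj.1
    have h2 : (n : ℝ) * x j ≤ n := mul_le_of_le_one_right n.cast_nonneg hj.2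
    rw [Fin.sum_univ_eq_sum_range (fun i => tent (n * x j - (i : ℕ))), sum_tent h0,
      max_eq_right (by linarith), min_eq_left (by linarith)]
  have h3 := Finset.prod_univ_sum (fun _ : Fin m => (Finset.univ : Finset (Fin (n + 1))))
    (fun j i => tent (n * x j - (i : ℕ)))
  rw [Fintype.piFinset_univ] at h3
  rw [← h3]
  exact Finset.prod_eq_one fun j _ => h1 j

section

variable {X : Type}

lemma reach_tent (x : X → ℝ) (ℓ i : ℕ) (hi : i ≤ 2 ^ ℓ) :
    Reach (fun _ : Unit => x) 12 (ℓ + 3) (fun _ : Unit => fun t => tent (2 ^ ℓ * x t - i)) := by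
  have hc : |(i : ℝ) / 2 ^ ℓ| ≤ 1 := by
    rw [abs_of_nonneg (by positivity)]
    exact div_le_one_of_le₀ (by exact_mod_cast hi) (by positivity)
  have l1 : Reach (fun _ : Unit => x) 6 0 (fun _ : Unit => fun t => max 0 (x t - i / 2 ^ ℓ)) :=
    Layer.of_dense (fun _ _ => 1) (fun _ => i / 2 ^ ℓ) (by simp) (fun _ => hc) (by simp)
      (by intro j t; simp)
  have l2 : Reach (fun _ : Unit => x) 6 0 (fun _ : Unit => fun t => max 0 (i / 2 ^ ℓ - x t)) :=
    Layer.of_dense (fun _ _ => -1) (fun _ => -(i / 2 ^ ℓ)) (by simp)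
      (fun _ => by rw [abs_neg]; exact hc) (by simp) (by intro j t; simp; ring_nf)
  have a1 := l1.trans (reach_two_pow _ (fun t => le_max_left _ _) ℓ)
  have a2 := l2.trans (reach_two_pow _ (fun t => le_max_left _ _) ℓ)
  have h := (a1.par a2).step (G := fun _ : Unit => fun t => tent (2 ^ ℓ * x t - i))
    (Layer.of_dense (fun _ _ => -1) (fun _ => -1) (by simp) (by simp) (by simp) (by
      intro j t
      have hp : (0 : ℝ) < 2 ^ ℓ := by positivity
      have e1 : (2 : ℝ) ^ ℓ * (i / 2 ^ ℓ) = i := by field_simp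
      simp only [Fintype.sum_sum_type, Sum.elim_inl, Sum.elim_inr, Finset.univ_unique,
        Finset.sum_const, Finset.card_singleton, one_smul, tent]
      congr 1
      rw [mul_max_of_nonneg _ _ hp.le, mul_max_of_nonneg _ _ hp.le, mul_sub, mul_sub, e1, mul_zero]
      rcases le_total ((2 : ℝ) ^ ℓ * x t) i with h | h
      · rw [abs_of_nonpos (by linarith), max_eq_left (by linarith), max_eq_right (by linarith)]
        ring
      · rw [abs_of_nonneg (by linarith), max_eq_right (by linarith), max_eq_left (by linarith)]
        ring))
  exact h.pad (by omega)

/-- A tensor-product tent function times a monomial. -/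
lemma reach_term {m k : ℕ} (s ℓ : ℕ) (p : Fin m → X → ℝ) (hp : ∀ j t, p j t ∈ Icc (0 : ℝ) 1)
    (i : Fin m → Fin (2 ^ ℓ + 1)) (α : Fin k → Option (Fin m)) :
    ∃ out : X → ℝ, Reach p (48 + 12 * (m + k)) (ℓ + 5 + (2 * s + 9) * (m + k))
        (fun _ : Unit => out) ∧ (∀ t, out t ∈ Icc (0 : ℝ) 1) ∧
      ∀ t, |out t - (∏ j, tent (2 ^ ℓ * p j t - (i j : ℕ))) * monoVal α fun j => p j t| ≤
        (m + k) * (4 ^ s)⁻¹ := by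
  let F : Fin m ⊕ Fin k → X → ℝ := Sum.elim (fun j t => tent (2 ^ ℓ * p j t - (i j : ℕ)))
    (fun j t => (α j).elim 1 fun l => p l t)
  have hone : Reach p 12 (ℓ + 4) (fun _ : Unit => fun _ : X => (1 : ℝ)) := by
    have : Reach p 12 0 (fun _ : Unit => fun _ : X => (1 : ℝ)) :=
      ⟨fun _ _ => 0, fun _ => -1, by simp, by simp, by simp, by simp [nz], by simp⟩
    exact this.pad (by omega)
  have hF : ∀ a, Reach p 12 (ℓ + 4) (fun _ : Unit => F a) := by
    rintro (j | j)
    · exact Reach.of_select (fun j t => (hp j t).1) (fun _ : Unit => j) (by simp)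
        (reach_tent (p j) ℓ (i j) (by omega))
    · rcases h : α j with _ | l
      · simpa [F, h] using hone
      · have : Reach p 12 0 (fun _ : Unit => p l) :=
          Layer.select (fun j t => (hp j t).1) (fun _ : Unit => l) (by simp)
        simpa [F, h] using this.pad (L' := ℓ + 4) (by omega)
  have hF1 : ∀ a t, F a t ∈ Icc (0 : ℝ) 1 := by
    rintro (j | j) t
    · exact tent_mem _
    · rcases h : α j with _ | l
      · simp [F, h]
      · simpa [F, h] using hp l t
  have h1 := Reach.pi _ F hF
  have h2 := h1.reindex (finSumFinEquiv (m := m) (n := k)).symm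
  obtain ⟨out, h3, h4, h5⟩ := reach_prod s (m + k) (fun j => F (finSumFinEquiv.symm j))
    (fun j t => hF1 _ t)
  refine ⟨out, ?_, h4, fun t => ?_⟩
  · have h6 := (h2.mono (w' := 48 + 12 * (m + k)) (by simp; omega)).trans (h3.mono (by omega))
    exact h6.pad (by omega)
  · have h6 := h5 t
    rw [finSumFinEquiv.symm.prod_comp (fun a => F a t), Fintype.prod_sum_type] at h6
    push_cast at h6
    exact h6

end

lemma abs_anchor_sub_le (n i : ℕ) (hn : 0 < n) (hi : i ≤ n) :
    |((i : ℝ) + 1 / 2) / (n + 1) - i / n| ≤ 1 / n := by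
  have hn' : (0 : ℝ) < n := by exact_mod_cast hn
  have hi' : (i : ℝ) ≤ n := by exact_mod_cast hi
  have hi0 : (0 : ℝ) ≤ i := i.cast_nonneg
  rw [div_sub_div _ _ (by positivity) (by positivity), abs_div, abs_of_pos (a := (_ : ℝ) * n)
    (by positivity), div_le_div_iff₀ (by positivity) (by positivity)]
  have : |((i : ℝ) + 1 / 2) * n - (n + 1) * i| ≤ n + 1 := by
    rw [abs_le]; constructor <;> nlinarith
  nlinarith

lemma HolderBall.exists_net {m : ℕ} {β r : ℝ} (hβ : 0 < β) (hr : 0 < r)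
    {f : (Fin m → ℝ) → ℝ} (hf : f ∈ HolderBall m β r) (n : ℕ) (hn : 0 < n) :
    ∃ c : (Fin m → Fin (n + 1)) → (Fin (smoothOrder β) → Option (Fin m)) → ℝ,
      (∀ i α, |c i α| ≤ polyConst m β r) ∧ ∀ x ∈ cube m,
      |(∑ i, ∑ α, c i α * ((∏ j, tent (n * x j - (i j : ℕ))) * monoVal α x)) - f x| ≤
        polyConst m β r * (2 / n) ^ β := by
  have hn' : (0 : ℝ) < n := by exact_mod_cast hn
  let a : (Fin m → Fin (n + 1)) → Fin m → ℝ := fun i j => ((i j : ℕ) + 1 / 2) / (n + 1)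
  have ha : ∀ i, a i ∈ cubeo m := fun i j _ => by
    have : ((i j : ℕ) : ℝ) ≤ n := by exact_mod_cast Nat.lt_succ_iff.1 (i j).2
    constructor
    · positivity
    · rw [div_lt_one (by positivity)]; linarith
  choose p hp1 hp2 using fun i => HolderBall.exists_poly hβ hr hf (ha i)
  choose c hc1 hc2 using hp1
  have hR : 0 ≤ polyConst m β r := by unfold polyConst; positivity
  refine ⟨c, hc1, ?_⟩
  have hopen : ∀ x ∈ cubeo m,
      |(∑ i, ∑ α, c i α * ((∏ j, tent (n * x j - (i j : ℕ))) * monoVal α x)) - f x| ≤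
        polyConst m β r * (2 / n) ^ β := by
    intro x hx
    have h1 : (∑ i, ∑ α, c i α * ((∏ j, tent (n * x j - (i j : ℕ))) * monoVal α x)) - f x =
        ∑ i : Fin m → Fin (n + 1), (∏ j, tent (n * x j - (i j : ℕ))) * (p i x - f x) := by
      simp only [mul_sub, Finset.sum_sub_distrib, ← Finset.sum_mul]
      rw [sum_prod_tent (cubeo_subset_cube m hx), one_mul]
      congr 1
      refine Finset.sum_congr rfl fun i _ => ?_
      rw [hc2, Finset.mul_sum]
      exact Finset.sum_congr rfl fun α _ => by ring
    rw [h1]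
    calc |∑ i : Fin m → Fin (n + 1), (∏ j, tent (n * x j - (i j : ℕ))) * (p i x - f x)|
        ≤ ∑ i : Fin m → Fin (n + 1), |(∏ j, tent (n * x j - (i j : ℕ))) * (p i x - f x)| :=
          Finset.abs_sum_le_sum_abs _ _
      _ ≤ ∑ i : Fin m → Fin (n + 1), (∏ j, tent (n * x j - (i j : ℕ))) *
            (polyConst m β r * (2 / n) ^ β) := by
          refine Finset.sum_le_sum fun i _ => ?_
          have h0 : 0 ≤ ∏ j, tent (n * x j - (i j : ℕ)) :=
            Finset.prod_nonneg fun j _ => (tent_mem _).1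
          rw [abs_mul, abs_of_nonneg h0]
          rcases h0.eq_or_lt with h | h
          · rw [← h]; simp
          refine mul_le_mul_of_nonneg_left ?_ h0
          rw [abs_sub_comm]
          refine (hp2 i x hx).trans ?_
          have : ‖x - a i‖ ≤ 2 / n := by
            rw [pi_norm_le_iff_of_nonneg (by positivity)]
            intro j
            have h2 := abs_le_one_of_tent_ne_zero (Finset.prod_ne_zero_iff.1 h.ne' j
              (Finset.mem_univ j))
            have h3 : |x j - (i j : ℕ) / n| ≤ 1 / n := by
              have : x j - (i j : ℕ) / n = (n * x j - (i j : ℕ)) / n := by field_simp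
              rw [this, abs_div, abs_of_pos hn']
              gcongr
            have h4 := abs_anchor_sub_le n (i j) hn (Nat.lt_succ_iff.1 (i j).2)
            rw [Pi.sub_apply, Real.norm_eq_abs]
            rw [abs_sub_comm] at h4
            calc |x j - a i j| ≤ |x j - (i j : ℕ) / n| + |((i j : ℕ) : ℝ) / n - a i j| :=
                  abs_sub_le _ _ _
              _ ≤ 1 / n + 1 / n := add_le_add h3 h4
              _ = 2 / n := by ring
          gcongr
      _ = polyConst m β r * (2 / n) ^ β := by
          rw [← Finset.sum_mul, sum_prod_tent (cubeo_subset_cube m hx), one_mul]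
  have hcont : ContinuousOn (fun x : Fin m → ℝ =>
      |(∑ i, ∑ α, c i α * ((∏ j, tent (n * x j - (i j : ℕ))) * monoVal α x)) - f x|) (cube m) := by
    refine (ContinuousOn.sub (Continuous.continuousOn ?_) hf.1).abs
    refine continuous_finsetSum _ fun i _ => continuous_finsetSum _ fun α _ =>
      continuous_const.mul (Continuous.mul ?_ ?_)
    · refine continuous_finsetProd _ fun j _ => ?_
      unfold tent
      fun_prop
    · refine continuous_finsetProd _ fun j _ => ?_
      rcases α j with _ | l
      · exact continuous_const
      · exact continuous_apply l
  intro x hx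
  rw [← closure_cubeo] at hx hcont
  exact le_on_closure (g := fun _ => polyConst m β r * (2 / n) ^ β) hopen hcont
    continuousOn_const hx

/-- Hölder functions are approximated, after clipping, by sparse ReLU networks. -/
lemma HolderBall.exists_reach (m : ℕ) {β r : ℝ} (hβ : 0 < β) (hr : 0 < r) :
    ∃ C : ℕ, ∀ g ∈ HolderBall m β r, ∀ (ℓ : ℕ) (X : Type) (p : Fin m → X → ℝ),
      (∀ j t, p j t ∈ Icc (0 : ℝ) 1) →
      ∃ out : X → ℝ, Reach p (C * 2 ^ (ℓ * m)) (C * (ℓ + 1)) (fun _ : Unit => out) ∧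
        (∀ t, out t ∈ Icc (0 : ℝ) 1) ∧
        ∀ t, |out t - clip01 (g fun j => p j t)| ≤ C * ((2 ^ ℓ : ℝ)⁻¹) ^ β := by
  set k := smoothOrder β with hk
  set R := polyConst m β r with hR
  have hR0 : 0 ≤ R := by rw [hR]; unfold polyConst; positivity
  obtain ⟨κ, hκ⟩ := pow_unbounded_of_one_lt R (one_lt_two)
  set T0 : ℕ := 2 ^ m * (m + 1) ^ k with hT0
  set Cw : ℕ := T0 * (48 + 12 * (m + k)) with hCw
  set Cd : ℕ := 5 + (2 * (m + k + 1) + 9) * (m + k) + κ + 10 with hCd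
  obtain ⟨Ce, hCe⟩ := exists_nat_ge (T0 * R * (m + k) + R * 2 ^ β)
  refine ⟨Cw + Cd + Ce, fun g hg ℓ X p hp => ?_⟩
  obtain ⟨c, hc1, hc2⟩ := HolderBall.exists_net hβ hr hg (2 ^ ℓ) (by positivity)
  set s := (m + k + 1) * ℓ with hs
  let J := (Fin m → Fin (2 ^ ℓ + 1)) × (Fin k → Option (Fin m))
  choose F hF1 hF2 hF3 using fun q : J => reach_term s ℓ p hp q.1 q.2
  have hcard : Fintype.card J ≤ T0 * 2 ^ (ℓ * m) := by
    have : Fintype.card J = (2 ^ ℓ + 1) ^ m * (m + 1) ^ k := by simp [J]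
    rw [this, hT0, pow_mul]
    have h2 : (2 ^ ℓ + 1) ^ m ≤ (2 * 2 ^ ℓ) ^ m :=
      Nat.pow_le_pow_left (by have := Nat.one_le_two_pow (n := ℓ); omega) m
    rw [mul_pow] at h2
    calc (2 ^ ℓ + 1) ^ m * (m + 1) ^ k ≤ 2 ^ m * (2 ^ ℓ) ^ m * (m + 1) ^ k :=
          Nat.mul_le_mul_right _ h2
      _ = _ := by ring
  set Sm : X → ℝ := fun t => ∑ q : J, c q.1 q.2 * F q t with hSm
  have hT : 0 < T0 * 2 ^ (ℓ * m) := by positivity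
  have hW : Fintype.card J * (48 + 12 * (m + k)) ≤ Cw * 2 ^ (ℓ * m) := by
    calc _ ≤ T0 * 2 ^ (ℓ * m) * (48 + 12 * (m + k)) := Nat.mul_le_mul_right _ hcard
      _ = _ := by rw [hCw]; ring
  have hW2 : T0 * 2 ^ (ℓ * m) * 48 ≤ Cw * 2 ^ (ℓ * m) := by
    rw [hCw]
    calc _ ≤ T0 * 2 ^ (ℓ * m) * (48 + 12 * (m + k)) := Nat.mul_le_mul_left _ (by omega)
      _ = _ := by ring
  have r1 := (Reach.pi J F hF1).mono hW
  have r2 : Reach p (Cw * 2 ^ (ℓ * m)) _ (fun _ : Unit => fun t => max 0 (Sm t / 2 ^ κ)) :=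
    r1.step (Layer.of_dense (fun _ q => c q.1 q.2 / 2 ^ κ) 0 (fun _ q => by
        rw [abs_div, abs_of_pos (by positivity : (0 : ℝ) < 2 ^ κ)]
        exact div_le_one_of_le₀ ((hc1 _ _).trans hκ.le) (by positivity)) (by simp)
      (by simp only [Fintype.card_unit, one_mul]; omega) (by
        intro j t
        simp only [hSm, Finset.sum_div, Pi.zero_apply, sub_zero]
        congr 1
        exact Finset.sum_congr rfl fun q _ => by ring))
  have r3 := r2.trans ((reach_two_pow _ (fun t => le_max_left _ _) κ).mono (by omega))
  have r4 := r3.trans ((reach_min_one _).mono (by omega))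
  refine ⟨_, (r4.mono ?_).pad ?_, fun t => clip01_mem _, fun t => ?_⟩
  · exact Nat.mul_le_mul_right _ (by omega)
  · have h1 : (2 * s + 9) * (m + k) ≤ (2 * (m + k + 1) + 9) * (m + k) * (ℓ + 1) := by
      rw [hs]
      calc (2 * ((m + k + 1) * ℓ) + 9) * (m + k) ≤
          ((2 * (m + k + 1) + 9) * (ℓ + 1)) * (m + k) := by
            apply Nat.mul_le_mul_right
            nlinarith
        _ = _ := by ring
    calc _ ≤ Cd * (ℓ + 1) := by
          rw [hCd]
          nlinarith
      _ ≤ _ := Nat.mul_le_mul_right _ (by omega)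
  · have e1 : (2 : ℝ) ^ κ * max 0 (Sm t / 2 ^ κ) = max 0 (Sm t) := by
      rw [mul_max_of_nonneg _ _ (by positivity), mul_zero]
      congr 1; field_simp
    have e2 : min 1 (max 0 (2 ^ κ * max 0 (Sm t / 2 ^ κ))) = clip01 (Sm t) := by
      rw [e1, clip01, max_eq_right (le_max_left _ _)]
    rw [e2]
    refine (abs_clip01_sub_le _ _).trans ?_
    have hx : (fun j => p j t) ∈ cube m := fun j _ => hp j t
    have h1 := hc2 _ hx
    set hh : ℝ := (2 ^ ℓ : ℝ)⁻¹ with hhh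
    have hh0 : 0 < hh := by positivity
    have hh1 : hh ≤ 1 := inv_le_one_of_one_le₀ (one_le_pow₀ one_le_two)
    set Sx : ℝ := ∑ i, ∑ α, c i α * ((∏ j, tent (((2 ^ ℓ : ℕ) : ℝ) * p j t - (i j : ℕ))) *
      monoVal α fun j => p j t) with hSx
    have h2 : |Sm t - Sx| ≤ T0 * R * (m + k) * hh ^ β := by
      have : Sm t - Sx = ∑ q : J, c q.1 q.2 * (F q t -
          (∏ j, tent (2 ^ ℓ * p j t - (q.1 j : ℕ))) * monoVal q.2 fun j => p j t) := by
        simp only [hSm, hSx, mul_sub, Finset.sum_sub_distrib, Nat.cast_pow, Nat.cast_ofNat]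
        congr 1
        rw [Fintype.sum_prod_type]
      rw [this]
      calc _ ≤ ∑ q : J, |c q.1 q.2 * (F q t -
          (∏ j, tent (2 ^ ℓ * p j t - (q.1 j : ℕ))) * monoVal q.2 fun j => p j t)| :=
            Finset.abs_sum_le_sum_abs _ _
        _ ≤ ∑ _q : J, R * ((m + k) * (4 ^ s)⁻¹) := by
            refine Finset.sum_le_sum fun q _ => ?_
            rw [abs_mul]
            exact mul_le_mul (hc1 _ _) (hF3 q t) (abs_nonneg _) hR0
        _ = Fintype.card J * (R * ((m + k) * (4 ^ s)⁻¹)) := by simp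
        _ ≤ (T0 * 2 ^ (ℓ * m)) * (R * ((m + k) * (4 ^ s)⁻¹)) := by
            have : (Fintype.card J : ℝ) ≤ T0 * 2 ^ (ℓ * m) := by exact_mod_cast hcard
            gcongr
        _ = T0 * R * (m + k) * (2 ^ (ℓ * m) * (4 ^ s)⁻¹) := by ring
        _ ≤ T0 * R * (m + k) * hh ^ β := by
            gcongr
            have e3 : (4 : ℝ) ^ s = (2 ^ ℓ) ^ (m + (m + 2 * k + 2)) := by
              rw [hs, ← pow_mul, show (4 : ℝ) = 2 ^ 2 by norm_num, ← pow_mul]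
              congr 1; ring
            have e4 : (2 : ℝ) ^ (ℓ * m) * (4 ^ s)⁻¹ = hh ^ (m + 2 * k + 2) := by
              rw [e3, pow_mul, pow_add, hhh, inv_pow]
              field_simp
            rw [e4, ← Real.rpow_natCast]
            refine Real.rpow_le_rpow_of_exponent_ge hh0 hh1 ?_
            have := le_smoothOrder_add_one hβ
            push_cast
            rw [← hk] at this
            linarith [(Nat.cast_nonneg m : (0 : ℝ) ≤ m), (Nat.cast_nonneg k : (0 : ℝ) ≤ k)]
    have h3 : R * (2 / ((2 ^ ℓ : ℕ) : ℝ)) ^ β = R * 2 ^ β * hh ^ β := by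
      push_cast
      rw [div_eq_mul_inv, Real.mul_rpow (by norm_num) hh0.le, mul_assoc]
    rw [h3] at h1
    calc |Sm t - g fun j => p j t| ≤ |Sm t - Sx| + |Sx - g fun j => p j t| := abs_sub_le _ _ _
      _ ≤ T0 * R * (m + k) * hh ^ β + R * 2 ^ β * hh ^ β := add_le_add h2 h1
      _ = (T0 * R * (m + k) + R * 2 ^ β) * hh ^ β := by ring
      _ ≤ _ := by
        have : (T0 : ℝ) * R * (m + k) + R * 2 ^ β ≤ ((Cw + Cd + Ce : ℕ) : ℝ) := by
          refine hCe.trans ?_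
          exact_mod_cast Nat.le_add_left _ _
        gcongr

/-! ## Network approximation of compositions -/

lemma norm_sub_le_one_of_mem_cube {m : ℕ} {x y : Fin m → ℝ} (hx : x ∈ cube m) (hy : y ∈ cube m) :
    ‖x - y‖ ≤ 1 := by
  rw [pi_norm_le_iff_of_nonneg zero_le_one]
  intro i
  have h1 := hx i (mem_univ i)
  have h2 := hy i (mem_univ i)
  rw [Pi.sub_apply, Real.norm_eq_abs, abs_le]
  constructor <;> linarith [h1.1, h1.2, h2.1, h2.2]

lemma HolderBall.abs_sub_le {m : ℕ} {β r : ℝ} (hβ : 0 < β) (hr : 0 < r)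
    {f : (Fin m → ℝ) → ℝ} (hf : f ∈ HolderBall m β r) {x y : Fin m → ℝ} (hx : x ∈ cube m)
    (hy : y ∈ cube m) : |f x - f y| ≤ (1 + r * (m + 1)) * ‖x - y‖ ^ min 1 β := by
  have hμ : 0 < min 1 β := lt_min one_pos hβ
  have hopen : ∀ x ∈ cubeo m, ∀ y ∈ cubeo m,
      |f x - f y| ≤ (1 + r * (m + 1)) * ‖x - y‖ ^ min 1 β := by
    intro x hx y hy
    rcases le_or_gt β 1 with h | h
    · have hs : smoothOrder β = 0 := by
        rw [smoothOrder, Nat.ceil_eq_zero]; linarith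
      have h1 := HolderBall.abs_pderivList_sub_le hβ hr hf (l := []) (by simp [hs]) hx hy
      simp only [pderivList, hs, Nat.cast_zero, sub_zero] at h1
      rw [min_eq_right h]
      refine h1.trans ?_
      rw [Real.mul_rpow (by positivity) (norm_nonneg _), ← mul_assoc]
      refine mul_le_mul_of_nonneg_right ?_ (by positivity)
      have : (m : ℝ) ^ β ≤ m + 1 := by
        calc (m : ℝ) ^ β ≤ (m + 1 : ℝ) ^ β := by gcongr; linarith
          _ ≤ (m + 1 : ℝ) ^ (1 : ℝ) := Real.rpow_le_rpow_of_exponent_le (by simp) h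
          _ = _ := Real.rpow_one _
      nlinarith
    · rw [min_eq_left h.le, Real.rpow_one]
      have hs : 1 ≤ smoothOrder β := by
        rw [smoothOrder, Nat.one_le_ceil_iff]; linarith
      have hd : DifferentiableOn ℝ f (cubeo m) :=
        hf.2.1.differentiableOn (by
          have : smoothOrder β ≠ 0 := by omega
          exact_mod_cast this)
      have hb : ∀ z ∈ cubeo m, ‖fderiv ℝ f z‖ ≤ r * m := by
        intro z hz
        refine ContinuousLinearMap.opNorm_le_bound _ (by positivity) fun v => ?_
        have h4 : v = ∑ i, v i • (Pi.single i (1 : ℝ) : Fin m → ℝ) := by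
          ext k; simp [Finset.sum_apply, Pi.single_apply]
        have h5 := congrArg (fderiv ℝ f z) h4
        rw [h5, map_sum]
        refine (norm_sum_le _ _).trans ?_
        calc ∑ i, ‖fderiv ℝ f z (v i • (Pi.single i (1 : ℝ) : Fin m → ℝ))‖
            ≤ ∑ _i : Fin m, ‖v‖ * r := by
              refine Finset.sum_le_sum fun i _ => ?_
              rw [map_smul, norm_smul]
              exact mul_le_mul (norm_le_pi_norm v i)
                (HolderBall.abs_pderivList_le hβ hr hf (l := [i]) (by simpa using hs) hz)
                (norm_nonneg _) (norm_nonneg _)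
          _ = r * m * ‖v‖ := by simp; ring
      have h6 := (convex_cubeo m).norm_image_sub_le_of_norm_fderiv_le
        (fun z hz => (hd z hz).differentiableAt ((isOpen_cubeo m).mem_nhds hz)) hb hy hx
      rw [Real.norm_eq_abs] at h6
      refine h6.trans ?_
      gcongr
      linarith
  have hc : ContinuousOn (fun p : (Fin m → ℝ) × (Fin m → ℝ) => |f p.1 - f p.2|)
      (closure (cubeo m ×ˢ cubeo m)) := by
    rw [closure_prod_eq, closure_cubeo]
    exact ((hf.1.comp continuousOn_fst fun p hp => hp.1).sub
      (hf.1.comp continuousOn_snd fun p hp => hp.2)).abs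
  have hc' : ContinuousOn (fun p : (Fin m → ℝ) × (Fin m → ℝ) =>
      (1 + r * (m + 1)) * ‖p.1 - p.2‖ ^ min 1 β) (closure (cubeo m ×ˢ cubeo m)) := by
    refine Continuous.continuousOn ?_
    exact continuous_const.mul ((continuous_fst.sub continuous_snd).norm.rpow_const
      fun p => Or.inr hμ.le)
  exact le_on_closure (fun p hp => hopen p.1 hp.1 p.2 hp.2) hc hc'
    (show (x, y) ∈ closure (cubeo m ×ˢ cubeo m) by
      rw [closure_prod_eq, closure_cubeo]; exact ⟨hx, hy⟩)

section

variable {dmax dstar : ℕ} {β r : ℝ}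

lemma comp_abs_sub_le (hβ : 0 < β) (hr : 0 < r) {d : ℕ} {h : (Fin d → ℝ) → ℝ}
    (hh : h ∈ GH d dstar β r ∪ GM d dmax) {x y : Fin d → ℝ} (hx : x ∈ cube d) (hy : y ∈ cube d) :
    |h x - h y| ≤ (1 + r * (dstar + 1)) * ‖x - y‖ ^ min 1 β := by
  have hμ : 0 < min 1 β := lt_min one_pos hβ
  rcases hh with ⟨e, g, -, hg, h1⟩ | ⟨I, hI, -, h1⟩
  · rw [h1 x hx, h1 y hy]
    refine (HolderBall.abs_sub_le hβ hr hg (x := fun j => x (e j)) (y := fun j => y (e j))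
      (fun j _ => hx _ (mem_univ _)) (fun j _ => hy _ (mem_univ _))).trans ?_
    have : ‖(fun j => x (e j)) - fun j => y (e j)‖ ≤ ‖x - y‖ := by
      rw [pi_norm_le_iff_of_nonneg (norm_nonneg _)]
      exact fun j => norm_le_pi_norm (x - y) (e j)
    gcongr
  · rw [h1 x hx, h1 y hy]
    have key : ∀ x y : Fin d → ℝ, I.sup' hI (fun i => x i) - I.sup' hI (fun i => y i) ≤
        ‖x - y‖ := by
      intro x y
      rw [sub_le_iff_le_add, Finset.sup'_le_iff]
      intro i hi
      have h2 : x i - y i ≤ ‖x - y‖ := (le_abs_self _).trans (norm_le_pi_norm (x - y) i)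
      have h3 := Finset.le_sup' (fun i => y i) hi
      linarith
    have h2 : |I.sup' hI (fun i => x i) - I.sup' hI (fun i => y i)| ≤ ‖x - y‖ := by
      rw [abs_sub_le_iff]
      exact ⟨key x y, by rw [norm_sub_rev]; exact key y x⟩
    refine h2.trans ?_
    have h3 : ‖x - y‖ ≤ ‖x - y‖ ^ min 1 β := by
      rcases (norm_nonneg (x - y)).eq_or_lt with h | h
      · rw [← h, Real.zero_rpow hμ.ne']
      · conv_lhs => rw [← Real.rpow_one ‖x - y‖]
        exact Real.rpow_le_rpow_of_exponent_ge h (norm_sub_le_one_of_mem_cube hx hy)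
          (min_le_left _ _)
    have h4 : 0 ≤ r * (dstar + 1) * ‖x - y‖ ^ min 1 β := by positivity
    linarith

lemma rpow_le_of_one_le_of_le_one {C γ : ℝ} (hC : 1 ≤ C) (hγ1 : γ ≤ 1) : C ^ γ ≤ C := by
  conv_rhs => rw [← Real.rpow_one C]
  exact Real.rpow_le_rpow_of_exponent_le hC hγ1

lemma GCHOM.abs_sub_le (hβ : 0 < β) (hr : 0 < r) (K q : ℕ) {d : ℕ} {f : (Fin d → ℝ) → ℝ}
    (hf : f ∈ GCHOM K dmax dstar β r q d) {x y : Fin d → ℝ} (hx : x ∈ cube d)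
    (hy : y ∈ cube d) :
    |f x - f y| ≤ (1 + r * (dstar + 1)) ^ (q + 1) * ‖x - y‖ ^ (min 1 β ^ (q + 1)) := by
  have hμ : 0 < min 1 β := lt_min one_pos hβ
  have hC : 1 ≤ 1 + r * (dstar + 1) := by
    have : 0 ≤ r * (dstar + 1) := by positivity
    linarith
  induction q generalizing d with
  | zero =>
    obtain ⟨h, hh, h1⟩ := hf
    rw [h1 x hx, h1 y hy]
    simpa using comp_abs_sub_le hβ hr hh hx hy
  | succ q ih =>
    obtain ⟨H, g, hH, hHc, hg, h1⟩ := hf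
    rw [h1 x hx, h1 y hy]
    refine (ih hg (hHc x hx) (hHc y hy)).trans ?_
    have h2 : ‖H x - H y‖ ≤ (1 + r * (dstar + 1)) * ‖x - y‖ ^ min 1 β := by
      rw [pi_norm_le_iff_of_nonneg (by positivity)]
      exact fun j => comp_abs_sub_le hβ hr (hH j) hx hy
    have hγ0 : 0 < min 1 β ^ (q + 1) := by positivity
    have hγ1 : min 1 β ^ (q + 1) ≤ 1 := pow_le_one₀ hμ.le (min_le_left _ _)
    calc (1 + r * (dstar + 1)) ^ (q + 1) * ‖H x - H y‖ ^ (min 1 β ^ (q + 1))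
        ≤ (1 + r * (dstar + 1)) ^ (q + 1) *
          ((1 + r * (dstar + 1)) * ‖x - y‖ ^ min 1 β) ^ (min 1 β ^ (q + 1)) := by gcongr
      _ = (1 + r * (dstar + 1)) ^ (q + 1) * ((1 + r * (dstar + 1)) ^ (min 1 β ^ (q + 1)) *
          ‖x - y‖ ^ (min 1 β ^ (q + 2))) := by
          rw [Real.mul_rpow (by positivity) (by positivity), ← Real.rpow_mul (norm_nonneg _)]
          congr 3; ring
      _ ≤ (1 + r * (dstar + 1)) ^ (q + 1) * ((1 + r * (dstar + 1)) *
          ‖x - y‖ ^ (min 1 β ^ (q + 2))) := by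
          have := rpow_le_of_one_le_of_le_one hC hγ1
          gcongr
      _ = _ := by ring

lemma comp_exists_reach (hβ : 0 < β) (hr : 0 < r) (dmax dstar : ℕ) :
    ∃ C : ℕ, 1 ≤ C ∧ ∀ (d : ℕ), ∀ h ∈ GH d dstar β r ∪ GM d dmax,
      ∀ (ℓ : ℕ) (X : Type) (p : Fin d → X → ℝ), (∀ j t, p j t ∈ Icc (0 : ℝ) 1) →
      ∃ out : X → ℝ, Reach p (C * 2 ^ (ℓ * dstar)) (C * (ℓ + 1)) (fun _ : Unit => out) ∧
        (∀ t, out t ∈ Icc (0 : ℝ) 1) ∧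
        ∀ t, |out t - clip01 (h fun j => p j t)| ≤ C * ((2 ^ ℓ : ℝ)⁻¹) ^ β := by
  obtain ⟨C, hC⟩ := HolderBall.exists_reach dstar hβ hr
  refine ⟨C + dstar + (48 + 4 * dmax), by omega, fun d h hh ℓ X p hp => ?_⟩
  have hx : ∀ t, (fun j => p j t) ∈ cube d := fun t j _ => hp j t
  have h2 : 1 ≤ 2 ^ (ℓ * dstar) := Nat.one_le_two_pow
  rcases hh with ⟨e, g, -, hg, h1⟩ | ⟨I, hI, hId, h1⟩
  · obtain ⟨out, r1, r2, r3⟩ := hC g hg ℓ X (fun j => p (e j)) (fun j t => hp _ t)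
    refine ⟨out, ?_, r2, fun t => ?_⟩
    · have := Reach.of_select (w := (C + dstar + (48 + 4 * dmax)) * 2 ^ (ℓ * dstar))
        (fun j t => (hp j t).1) e (by simp; nlinarith)
        (r1.mono (Nat.mul_le_mul_right _ (by omega)))
      exact this.pad (by nlinarith)
    · rw [h1 _ (hx t)]
      refine (r3 t).trans ?_
      gcongr
      omega
  · refine ⟨_, ((reach_sup p hp I hI hId).mono (by nlinarith)).pad (by nlinarith), fun t => ?_,
      fun t => ?_⟩
    · obtain ⟨i, hi⟩ := id hI
      exact ⟨(hp i t).1.trans (Finset.le_sup' (fun i => p i t) hi),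
        Finset.sup'_le _ _ fun i _ => (hp i t).2⟩
    · rw [h1 _ (hx t), clip01_of_mem, sub_self, abs_zero]
      · positivity
      · obtain ⟨i, hi⟩ := id hI
        exact ⟨(hp i t).1.trans (Finset.le_sup' (fun i => p i t) hi),
          Finset.sup'_le _ _ fun i _ => (hp i t).2⟩

/-- Compositional functions are approximated by ReLU networks; the depth constant does not
depend on the inner dimension `K`. -/
lemma GCHOM.exists_reach (hβ : 0 < β) (hr : 0 < r) (dmax dstar q : ℕ) :
    ∃ Cd : ℕ, ∀ K : ℕ, ∃ C : ℕ, ∀ (d : ℕ), ∀ f ∈ GCHOM K dmax dstar β r q d,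
      ∀ (ℓ : ℕ) (X : Type) (p : Fin d → X → ℝ), (∀ j t, p j t ∈ Icc (0 : ℝ) 1) →
      ∃ out : X → ℝ, Reach p (C * 2 ^ (ℓ * dstar)) (Cd * (ℓ + 1)) (fun _ : Unit => out) ∧
        (∀ t, out t ∈ Icc (0 : ℝ) 1) ∧
        ∀ t, |out t - clip01 (f fun j => p j t)| ≤
          C * ((2 ^ ℓ : ℝ)⁻¹) ^ (β * min 1 β ^ q) := by
  have hμ : 0 < min 1 β := lt_min one_pos hβ
  obtain ⟨C0, hC0, hcomp⟩ := comp_exists_reach hβ hr dmax dstar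
  induction q with
  | zero =>
    refine ⟨C0, fun K => ⟨C0, fun d f hf ℓ X p hp => ?_⟩⟩
    obtain ⟨h, hh, h1⟩ := hf
    obtain ⟨out, r1, r2, r3⟩ := hcomp d h hh ℓ X p hp
    refine ⟨out, r1, r2, fun t => ?_⟩
    rw [h1 _ (fun j _ => hp j t)]
    simpa using r3 t
  | succ q ih =>
    obtain ⟨Cd, hCd⟩ := ih
    refine ⟨C0 + Cd + 1, fun K => ?_⟩
    obtain ⟨C, hC⟩ := hCd K
    obtain ⟨Cm, hCm⟩ := exists_nat_ge ((1 + r * (dstar + 1)) ^ (q + 1) * C0)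
    refine ⟨K * C0 + C + Cm, fun d f hf ℓ X p hp => ?_⟩
    obtain ⟨H, g, hH, hHc, hg, h1⟩ := hf
    choose F hF1 hF2 hF3 using fun j => hcomp d _ (hH j) ℓ X p hp
    obtain ⟨out, r1, r2, r3⟩ := hC K g hg ℓ X F hF2
    refine ⟨out, ?_, r2, fun t => ?_⟩
    · have s1 := (Reach.pi (Fin K) F hF1).mono (w' := (K * C0 + C + Cm) * 2 ^ (ℓ * dstar)) (by
        rw [Fintype.card_fin, ← mul_assoc]
        exact Nat.mul_le_mul_right _ (by omega))
      exact (s1.trans (r1.mono (Nat.mul_le_mul_right _ (by omega)))).pad (by nlinarith)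
    · have hx : (fun j => p j t) ∈ cube d := fun j _ => hp j t
      have hy := hHc _ hx
      rw [h1 _ hx]
      set hh : ℝ := (2 ^ ℓ : ℝ)⁻¹ with hhh
      have hh0 : 0 < hh := by positivity
      have hh1 : hh ≤ 1 := inv_le_one_of_one_le₀ (one_le_pow₀ one_le_two)
      have hγ0 : 0 < min 1 β ^ (q + 1) := by positivity
      have hγ1 : min 1 β ^ (q + 1) ≤ 1 := pow_le_one₀ hμ.le (min_le_left _ _)
      have e1 : ‖(fun j => F j t) - H fun j => p j t‖ ≤ C0 * hh ^ β := by
        rw [pi_norm_le_iff_of_nonneg (by positivity)]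
        intro j
        have := hF3 j t
        rw [clip01_of_mem (hy j (mem_univ j))] at this
        exact this
      have e2 := GCHOM.abs_sub_le hβ hr K q hg (x := fun j => F j t) (fun j _ => hF2 j t) hy
      have e3 : (1 + r * (dstar + 1)) ^ (q + 1) *
          ‖(fun j => F j t) - H fun j => p j t‖ ^ (min 1 β ^ (q + 1)) ≤
          Cm * hh ^ (β * min 1 β ^ (q + 1)) := by
        calc _ ≤ (1 + r * (dstar + 1)) ^ (q + 1) * (C0 * hh ^ β) ^ (min 1 β ^ (q + 1)) := by
              gcongr
          _ = (1 + r * (dstar + 1)) ^ (q + 1) * ((C0 : ℝ) ^ (min 1 β ^ (q + 1)) *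
              hh ^ (β * min 1 β ^ (q + 1))) := by
              rw [Real.mul_rpow (by positivity) (by positivity), ← Real.rpow_mul hh0.le]
          _ ≤ (1 + r * (dstar + 1)) ^ (q + 1) * (C0 * hh ^ (β * min 1 β ^ (q + 1))) := by
              have := rpow_le_of_one_le_of_le_one (C := C0) (by exact_mod_cast hC0) hγ1
              gcongr
          _ = (1 + r * (dstar + 1)) ^ (q + 1) * C0 * hh ^ (β * min 1 β ^ (q + 1)) := by ring
          _ ≤ _ := by gcongr
      have e4 : hh ^ (β * min 1 β ^ q) ≤ hh ^ (β * min 1 β ^ (q + 1)) := by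
        refine Real.rpow_le_rpow_of_exponent_ge hh0 hh1 ?_
        refine mul_le_mul_of_nonneg_left ?_ hβ.le
        exact pow_le_pow_of_le_one hμ.le (min_le_left _ _) (by omega)
      calc |out t - clip01 (g (H fun j => p j t))|
          ≤ |out t - clip01 (g fun j => F j t)| +
            |clip01 (g fun j => F j t) - clip01 (g (H fun j => p j t))| := _root_.abs_sub_le _ _ _
        _ ≤ C * hh ^ (β * min 1 β ^ (q + 1)) + Cm * hh ^ (β * min 1 β ^ (q + 1)) := by
            refine add_le_add ((r3 t).trans ?_) ((abs_clip01_sub_le _ _).trans (e2.trans e3))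
            gcongr
        _ = (C + Cm) * hh ^ (β * min 1 β ^ (q + 1)) := by ring
        _ ≤ _ := by
            push_cast
            gcongr
            have : (0 : ℝ) ≤ K * C0 := by positivity
            linarith

end

/-! ## Array form of networks -/

/-- Activations of a network stored in arrays; `wd i` is the width of layer `i`. -/
def rawAct (wd : ℕ → ℕ) (W : ℕ → ℕ → ℕ → ℝ) (v : ℕ → ℕ → ℝ) (x : ℕ → ℝ) : ℕ → ℕ → ℝ
  | 0 => x
  | i + 1 => fun j =>
      max 0 (∑ k ∈ Finset.range (wd i), W i j k * rawAct wd W v x i k - v (i + 1) j)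

/-- Output of a network stored in arrays. -/
def rawOut (wd : ℕ → ℕ) (W : ℕ → ℕ → ℕ → ℝ) (v : ℕ → ℕ → ℝ) (x : ℕ → ℝ) (L : ℕ) : ℝ :=
  ∑ k ∈ Finset.range (wd L), W L 0 k * rawAct wd W v x L k

lemma rawAct_congr (wd : ℕ → ℕ) {W W' : ℕ → ℕ → ℕ → ℝ} {v v' : ℕ → ℕ → ℝ} (x : ℕ → ℝ) (n : ℕ)
    (hW : ∀ i < n, W i = W' i) (hv : ∀ i < n, v (i + 1) = v' (i + 1)) :
    rawAct wd W v x n = rawAct wd W' v' x n := by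
  induction n with
  | zero => rfl
  | succ n ih =>
    funext j
    simp only [rawAct]
    rw [ih (fun i hi => hW i (by omega)) (fun i hi => hv i (by omega)), hW n (by omega),
      hv n (by omega)]

lemma sum_range_extend {κ : Type} [Fintype κ] {M : Type} [Zero M] {R : Type} [AddCommMonoid R]
    {e : κ → ℕ} (he : Function.Injective e)
    {n : ℕ} (hn : ∀ a, e a < n) (f : κ → M) (φ : M → ℕ → R) (hφ : ∀ k, φ 0 k = 0) :
    ∑ k ∈ Finset.range n, φ (Function.extend e f 0 k) k = ∑ a, φ (f a) (e a) := by
  classical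
  have h1 : Finset.univ.image e ⊆ Finset.range n := by
    intro k hk
    obtain ⟨a, -, rfl⟩ := Finset.mem_image.1 hk
    exact Finset.mem_range.2 (hn a)
  rw [← Finset.sum_subset h1, Finset.sum_image fun a _ b _ h => he h]
  · exact Finset.sum_congr rfl fun a _ => by rw [he.extend_apply]
  · intro k _ hk
    rw [Function.extend_apply' _ _ _ fun ⟨a, ha⟩ => hk (Finset.mem_image.2 ⟨a, by simp, ha⟩)]
    exact hφ k

lemma Layer.exists_raw {X κ μ : Type} [Fintype κ] [Fintype μ] {w n : ℕ} {H : μ → X → ℝ}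
    {F : κ → X → ℝ} (h : Layer w H F) {e' : μ → ℕ} (he' : Function.Injective e')
    (hn : ∀ b, e' b < n) :
    ∃ (e : κ → ℕ) (W : ℕ → ℕ → ℝ) (v : ℕ → ℝ), Function.Injective e ∧ (∀ a, e a < w) ∧
      (∀ j k, |W j k| ≤ 1) ∧ (∀ j, |v j| ≤ 1) ∧
      (∑ j ∈ Finset.range w, (nz (v j) + ∑ k ∈ Finset.range n, nz (W j k))) ≤ w ∧
      ∀ (y : ℕ → ℝ) (t : X), (∀ b, y (e' b) = H b t) →
        ∀ a, max 0 (∑ k ∈ Finset.range n, W (e a) k * y k - v (e a)) = F a t := by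
  obtain ⟨W, v, h1, h2, h3, h4, h5⟩ := h
  let e : κ → ℕ := fun a => Fintype.equivFin κ a
  have he : Function.Injective e := fun a b hab =>
    (Fintype.equivFin κ).injective (Fin.val_injective hab)
  have hew : ∀ a, e a < w := fun a => lt_of_lt_of_le (Fintype.equivFin κ a).2 h3
  have hlow : ∀ {ι : Type} (f : ι → ℕ) (g : ι → ℝ), Function.Injective f → (∀ a, |g a| ≤ 1) →
      ∀ k, |Function.extend f g 0 k| ≤ 1 := by
    intro ι f g hf hg k
    by_cases hk : ∃ a, f a = k
    · obtain ⟨a, rfl⟩ := hk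
      rw [hf.extend_apply]; exact hg a
    · rw [Function.extend_apply' _ _ _ hk]; simp
  let W0 : κ → ℕ → ℝ := fun a => Function.extend e' (W a) 0
  refine ⟨e, Function.extend e W0 0, Function.extend e v 0, he, hew, ?_, hlow _ _ he h2, ?_, ?_⟩
  · intro j k
    by_cases hj : ∃ a, e a = j
    · obtain ⟨a, rfl⟩ := hj
      rw [he.extend_apply]; exact hlow _ _ he' (h1 a) k
    · rw [Function.extend_apply' _ _ _ hj]; simp
  · refine le_trans (le_of_eq ?_) h4
    rw [Finset.sum_add_distrib, Finset.sum_add_distrib]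
    congr 1
    · exact sum_range_extend he hew v (fun c _ => nz c) (fun _ => nz_zero)
    · rw [sum_range_extend he hew W0 (fun (c : ℕ → ℝ) _ => ∑ k ∈ Finset.range n, nz (c k))
        (fun _ => by simp [nz_zero])]
      refine Finset.sum_congr rfl fun a _ => ?_
      exact sum_range_extend he' hn (W a) (fun c _ => nz c) (fun _ => nz_zero)
  · intro y t hy a
    rw [h5, he.extend_apply, he.extend_apply]
    congr 2
    rw [sum_range_extend he' hn (W a) (fun c k => c * y k) (fun _ => zero_mul _)]
    exact Finset.sum_congr rfl fun b _ => by rw [hy]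

lemma Reach.exists_raw {X : Type} {d w : ℕ} {p : Fin d → X → ℝ} (L : ℕ) {κ : Type} [Fintype κ]
    {F : κ → X → ℝ} (h : Reach p w L F) :
    ∃ (e : κ → ℕ) (W : ℕ → ℕ → ℕ → ℝ) (v : ℕ → ℕ → ℝ), Function.Injective e ∧ (∀ a, e a < w) ∧
      (∀ i j k, |W i j k| ≤ 1) ∧ (∀ i j, |v i j| ≤ 1) ∧
      (∀ i ≤ L, (∑ j ∈ Finset.range w, (nz (v (i + 1) j) +
        ∑ k ∈ Finset.range (if i = 0 then d else w), nz (W i j k))) ≤ w) ∧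
      ∀ (x : ℕ → ℝ) (t : X), (∀ k : Fin d, x k = p k t) →
        ∀ a, rawAct (fun i => if i = 0 then d else w) W v x (L + 1) (e a) = F a t := by
  induction L generalizing κ with
  | zero =>
    obtain ⟨e, W, v, h1, h2, h3, h4, h5, h6⟩ := Layer.exists_raw (n := d) h Fin.val_injective
      (fun b => b.2)
    refine ⟨e, fun _ => W, fun _ => v, h1, h2, fun _ => h3, fun _ => h4, ?_, ?_⟩
    · intro i hi
      obtain rfl : i = 0 := by omega
      simpa using h5
    · intro x t hx a
      simpa [rawAct] using h6 x t hx a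
  | succ L ih =>
    obtain ⟨μ, _, H, hH, hl⟩ := h
    obtain ⟨e', W', v', h1', h2', h3', h4', h5', h6'⟩ := ih hH
    obtain ⟨e, W, v, h1, h2, h3, h4, h5, h6⟩ := hl.exists_raw h1' h2'
    refine ⟨e, fun i => if i = L + 1 then W else W' i, fun i => if i = L + 2 then v else v' i,
      h1, h2, ?_, ?_, ?_, ?_⟩
    · intro i j k
      dsimp only
      split_ifs
      · exact h3 j k
      · exact h3' i j k
    · intro i j
      dsimp only
      split_ifs
      · exact h4 j
      · exact h4' i j
    · intro i hi
      rcases Nat.lt_or_ge L i with h | h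
      · obtain rfl : i = L + 1 := by omega
        simpa using h5
      · have e1 : i ≠ L + 1 := by omega
        have e2 : i + 1 ≠ L + 2 := by omega
        simp only [e1, e2, if_false]
        exact h5' i h
    · intro x t hx a
      have hc := rawAct_congr (fun i => if i = 0 then d else w)
        (W := fun i => if i = L + 1 then W else W' i) (W' := W')
        (v := fun i => if i = L + 2 then v else v' i) (v' := v') x (L + 1)
        (fun i hi => by simp [show i ≠ L + 1 by omega])
        (fun i hi => if_neg (show i + 1 ≠ L + 2 by omega))
      rw [rawAct, hc]
      have := h6 (rawAct (fun i => if i = 0 then d else w) W' v' x (L + 1)) t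
        (fun b => h6' x t hx b) a
      simpa using this

/-- The network with given arrays. -/
def rawNet (d w L : ℕ) (W : ℕ → ℕ → ℕ → ℝ) (v : ℕ → ℕ → ℝ) : ReLUNet d where
  L := L
  width i := if i = 0 then d else if i = L + 1 then 1 else w
  W i j k := W i j k
  v i j := v i j
  h0 := by simp
  hL := by simp

lemma rawNet_eval (d w L : ℕ) (W : ℕ → ℕ → ℕ → ℝ) (v : ℕ → ℕ → ℝ) (x : Fin d → ℝ) (y : ℕ → ℝ)
    (hy : ∀ k : Fin d, y k = x k) :
    (rawNet d w L W v).eval x = rawOut (fun i => if i = 0 then d else w) W v y L := by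
  set wd : ℕ → ℕ := fun i => if i = 0 then d else w with hwd
  set net := rawNet d w L W v with hnet
  have hw : ∀ i ≤ L, net.width i = wd i := by
    intro i hi
    simp only [hnet, rawNet, hwd]
    rw [if_neg (show i ≠ L + 1 by omega)]
  have key : ∀ i ≤ L, ∀ j, net.layer (fun j => x (Fin.cast net.h0 j)) i j =
      ∑ k ∈ Finset.range (wd i), W i j k * rawAct wd W v y i k := by
    intro i
    induction i with
    | zero =>
      intro _ j
      have h1 : wd 0 = net.width 0 := (hw 0 (by omega)).symm
      rw [h1, ← Fin.sum_univ_eq_sum_range (fun k => W 0 j k * rawAct wd W v y 0 k)]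
      simp only [ReLUNet.layer, rawAct]
      refine Finset.sum_congr rfl fun k _ => ?_
      have := hy (Fin.cast net.h0 k)
      simp only [Fin.val_cast] at this
      rw [this]; rfl
    | succ i ih =>
      intro hi j
      have h1 : wd (i + 1) = net.width (i + 1) := (hw _ hi).symm
      rw [h1, ← Fin.sum_univ_eq_sum_range (fun k => W (i + 1) j k * rawAct wd W v y (i + 1) k)]
      simp only [ReLUNet.layer, rawAct]
      refine Finset.sum_congr rfl fun k _ => ?_
      rw [ih (by omega)]; rfl
  refine (key L le_rfl _).trans ?_
  simp [rawOut]

lemma natCard_ne_zero (a b : ℕ) (A : ℕ → ℕ → ℝ) :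
    Nat.card {p : Fin a × Fin b // A p.1 p.2 ≠ 0} =
      ∑ j ∈ Finset.range a, ∑ k ∈ Finset.range b, nz (A j k) := by
  classical
  rw [Nat.card_eq_fintype_card, Fintype.card_subtype, Finset.card_filter,
    Fintype.sum_prod_type, ← Fin.sum_univ_eq_sum_range (fun j => ∑ k ∈ Finset.range b, nz (A j k))]
  refine Finset.sum_congr rfl fun j _ => ?_
  rw [← Fin.sum_univ_eq_sum_range (fun k => nz (A j k))]
  refine Finset.sum_congr rfl fun k _ => ?_
  by_cases h : A j k = 0 <;> simp [nz, h]

lemma natCard_ne_zero' (a : ℕ) (A : ℕ → ℝ) :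
    Nat.card {j : Fin a // A j ≠ 0} = ∑ j ∈ Finset.range a, nz (A j) := by
  classical
  rw [Nat.card_eq_fintype_card, Fintype.card_subtype, Finset.card_filter,
    ← Fin.sum_univ_eq_sum_range (fun j => nz (A j))]
  refine Finset.sum_congr rfl fun j _ => ?_
  by_cases h : A j = 0 <;> simp [nz, h]

/-- A reachable family followed by a linear output row is realised by a network. -/
lemma Reach.exists_mem_FNN {d w L : ℕ} {κ : Type} [Fintype κ] {F : κ → cube d → ℝ}
    (h : Reach (fun (j : Fin d) (x : cube d) => x.1 j) w L F) (c : κ → ℝ) (hc : ∀ a, |c a| ≤ 1)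
    {G N B : ℝ} {S : ℝ≥0∞} (hG : (L : ℝ) + 1 ≤ G) (hN : (w : ℝ) ≤ N) (hN1 : 1 ≤ N)
    (hd : (d : ℝ) ≤ N) (hS : (((L + 2) * w : ℕ) : ℝ≥0∞) ≤ S) (hB : 1 ≤ B) :
    ∃ f ∈ FNN d G N S B ∞, ∀ x : cube d, f x = ∑ a, c a * F a x := by
  obtain ⟨e, W, v, h1, h2, h3, h4, h5, h6⟩ := h.exists_raw
  set wd : ℕ → ℕ := fun i => if i = 0 then d else w with hwd
  set W2 : ℕ → ℕ → ℕ → ℝ := fun i j k => if i = L + 1 then Function.extend e c 0 k else W i j k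
    with hW2
  have hext : ∀ k, |Function.extend e c 0 k| ≤ 1 := by
    intro k
    by_cases hk : ∃ a, e a = k
    · obtain ⟨a, rfl⟩ := hk
      rw [h1.extend_apply]; exact hc a
    · rw [Function.extend_apply' _ _ _ hk]; simp
  have hW2b : ∀ i j k, |W2 i j k| ≤ 1 := by
    intro i j k
    simp only [hW2]
    split_ifs
    · exact hext k
    · exact h3 i j k
  refine ⟨(rawNet d w (L + 1) W2 v).eval, ⟨rawNet d w (L + 1) W2 v, fun x => rfl, ?_, ?_, ?_, ?_,
    ?_, ?_⟩, fun x => ?_⟩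
  · simpa [rawNet] using hG
  · intro i _
    simp only [rawNet]
    split_ifs
    · exact hd
    · simpa using hN1
    · exact hN
  · refine le_trans (le_of_eq_of_le ?_ (Nat.cast_le.2 (?_ : (∑ i ∈ Finset.range (L + 1),
        (∑ j ∈ Finset.range w, (nz (v (i + 1) j) +
        ∑ k ∈ Finset.range (wd i), nz (W i j k)))) + (∑ k ∈ Finset.range w,
          nz (Function.extend e c 0 k)) ≤ (L + 2) * w))) hS
    · have hwid : ∀ i ≤ L, (rawNet d w (L + 1) W2 v).width (i + 1) = w := by
        intro i hi
        simp only [rawNet]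
        rw [if_neg (by omega), if_neg (by omega)]
      have hwid' : ∀ i ≤ L, (rawNet d w (L + 1) W2 v).width i = wd i := by
        intro i hi
        simp only [rawNet, hwd]
        rw [if_neg (show i ≠ L + 1 + 1 by omega)]
      have hwL : (rawNet d w (L + 1) W2 v).width (L + 1 + 1) = 1 := (rawNet d w (L + 1) W2 v).hL
      have hc1 : ∀ i, Nat.card {p : Fin ((rawNet d w (L + 1) W2 v).width (i + 1)) ×
          Fin ((rawNet d w (L + 1) W2 v).width i) // (rawNet d w (L + 1) W2 v).W i p.1 p.2 ≠ 0} =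
          ∑ j ∈ Finset.range ((rawNet d w (L + 1) W2 v).width (i + 1)),
            ∑ k ∈ Finset.range ((rawNet d w (L + 1) W2 v).width i), nz (W2 i j k) :=
        fun i => natCard_ne_zero _ _ (W2 i)
      have hc2 : ∀ i, Nat.card {j : Fin ((rawNet d w (L + 1) W2 v).width (i + 1)) //
          (rawNet d w (L + 1) W2 v).v (i + 1) j ≠ 0} =
          ∑ j ∈ Finset.range ((rawNet d w (L + 1) W2 v).width (i + 1)), nz (v (i + 1) j) :=
        fun i => natCard_ne_zero' _ (v (i + 1))
      simp only [hc1, hc2]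
      rw [← Nat.cast_sum, ← Nat.cast_sum, ← Nat.cast_add]
      congr 1
      change ∑ i ∈ Finset.range (L + 1 + 1), _ + ∑ i ∈ Finset.range (L + 1), _ = _
      rw [Finset.sum_range_succ, add_right_comm, ← Finset.sum_add_distrib]
      congr 1
      · refine Finset.sum_congr rfl fun i hi => ?_
        have hi' : i ≤ L := Nat.lt_succ_iff.1 (Finset.mem_range.1 hi)
        rw [hwid i hi', hwid' i hi', add_comm, ← Finset.sum_add_distrib]
        simp only [hW2, show i ≠ L + 1 by omega, if_false]
      · rw [hwL, hwid L le_rfl]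
        simp [hW2]
    · calc _ ≤ (∑ _i ∈ Finset.range (L + 1), w) + ∑ _k ∈ Finset.range w, 1 := by
            refine add_le_add (Finset.sum_le_sum fun i hi => h5 i ?_)
              (Finset.sum_le_sum fun k _ => nz_le_one _)
            have := Finset.mem_range.1 hi; omega
        _ = (L + 2) * w := by simp; ring
  · intro i _ j k
    exact (hW2b i j k).trans hB
  · intro i _ _ j
    exact (h4 _ _).trans hB
  · intro x _; exact le_top
  · obtain ⟨y, hy⟩ : ∃ y : ℕ → ℝ, ∀ k : Fin d, y k = x.1 k :=
      ⟨fun k => if hk : k < d then x.1 ⟨k, hk⟩ else 0, fun k => by simp⟩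
    rw [rawNet_eval d w (L + 1) W2 v x.1 y hy]
    have hcg := rawAct_congr wd (W := W2) (W' := W) (v := v) (v' := v) y (L + 1)
      (fun i hi => by funext j k; simp [hW2, show i ≠ L + 1 by omega]) (fun _ _ => rfl)
    rw [rawOut, hcg]
    simp only [hW2, if_true, Nat.add_eq_zero_iff, one_ne_zero, and_false, if_false]
    rw [sum_range_extend h1 h2 c (fun c k => c * rawAct wd W v y (L + 1) k)
      (fun _ => zero_mul _)]
    exact Finset.sum_congr rfl fun a _ => by rw [h6 y x hy]

/-! ## Approximation of the Bayes classifier -/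

lemma reach_ramp {X : Type} (z : X → ℝ) (a v : ℝ) (ha : |a| ≤ 1) (hv : |v| ≤ 1) (k : ℕ) :
    Reach (fun _ : Unit => z) 6 (k + 4)
      (fun _ : Unit => fun t => clip01 (2 ^ k * (a * z t - v))) := by
  have l1 : Reach (fun _ : Unit => z) 6 0 (fun _ : Unit => fun t => max 0 (a * z t - v)) :=
    Layer.of_dense (fun _ _ => a) (fun _ => v) (fun _ _ => ha) (fun _ => hv) (by simp)
      (by intro j t; simp)
  have l2 := (l1.trans (reach_two_pow _ (fun t => le_max_left _ _) k)).trans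
    ((reach_min_one _).mono (by norm_num))
  refine (l2.pad (L' := k + 4) (by omega)).mono le_rfl |> fun h => ?_
  convert h using 3 with _ t
  rw [clip01, mul_max_of_nonneg _ _ (by positivity), mul_zero, ← max_assoc, max_self]

/-- Networks matching the Bayes classifier away from the decision boundary. -/
lemma GCHOM.exists_classifier {β r : ℝ} (hβ : 0 < β) (hr : 0 < r) (dmax dstar q : ℕ) :
    ∃ Cd : ℕ, ∀ K : ℕ, ∃ C : ℕ, 1 ≤ C ∧ ∀ (d : ℕ), ∀ f ∈ GCHOM K dmax dstar β r q d,
      ∀ (ℓ : ℕ) {G N B : ℝ} {S : ℝ≥0∞}, ((Cd * (ℓ + 1) : ℕ) : ℝ) ≤ G →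
      ((C * 2 ^ (ℓ * dstar) : ℕ) : ℝ) ≤ N → (d : ℝ) ≤ N →
      (((Cd * (ℓ + 1)) * (C * 2 ^ (ℓ * dstar)) : ℕ) : ℝ≥0∞) ≤ S → 1 ≤ B →
      ∃ g ∈ FNN d G N S B ∞, ∀ x ∈ cube d, |g x| ≤ 1 ∧
        (f x ∈ Icc (0 : ℝ) 1 → C * ((2 ^ ℓ : ℝ)⁻¹) ^ (β * min 1 β ^ q) < |2 * f x - 1| →
          g x = sgn (2 * f x - 1)) := by
  obtain ⟨Cd, hCd⟩ := GCHOM.exists_reach hβ hr dmax dstar q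
  set e : ℝ := β * min 1 β ^ q with he
  have he0 : 0 < e := by have : 0 < min 1 β := lt_min one_pos hβ; positivity
  refine ⟨Cd + ⌈e⌉₊ + 7, fun K => ?_⟩
  obtain ⟨C, hC⟩ := hCd K
  refine ⟨2 * C + 12, by omega, fun d f hf ℓ G N B S hG hN hd hS hB => ?_⟩
  obtain ⟨z, r1, r2, r3⟩ := hC d f hf ℓ (cube d) (fun j x => x.1 j)
    (fun j x => x.2 j (mem_univ j))
  set k := ⌈e⌉₊ * ℓ with hk
  have hpos : 1 ≤ 2 ^ (ℓ * dstar) := Nat.one_le_two_pow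
  set w := (2 * C + 12) * 2 ^ (ℓ * dstar) with hw
  have hw12 : 12 ≤ w := by nlinarith
  have hwC : C * 2 ^ (ℓ * dstar) ≤ w := Nat.mul_le_mul_right _ (by omega)
  have a1 := reach_ramp z 1 (1 / 2) (by simp) (by rw [abs_of_pos] <;> norm_num) k
  have a2 := reach_ramp z (-1) (-(1 / 2)) (by simp) (by rw [abs_neg, abs_of_pos] <;> norm_num) k
  have a3 := (r1.mono hwC).trans ((a1.par a2).mono hw12)
  set L := Cd * (ℓ + 1) + (k + 4) + 1 with hL
  have hLle : L + 2 ≤ (Cd + ⌈e⌉₊ + 7) * (ℓ + 1) := by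
    rw [hL, hk]; nlinarith
  have hw1 : (1 : ℝ) ≤ w := by exact_mod_cast (by omega : 1 ≤ w)
  obtain ⟨g, hg1, hg2⟩ := a3.exists_mem_FNN (Sum.elim (fun _ => 1) (fun _ => -1))
    (by rintro (a | a) <;> simp) (G := G) (N := N) (B := B) (S := S)
    (le_trans (by exact_mod_cast (by omega : L + 1 ≤ (Cd + ⌈e⌉₊ + 7) * (ℓ + 1))) hG) hN
    (hw1.trans hN) hd (le_trans (Nat.cast_le.2 (Nat.mul_le_mul_right _ hLle)) hS) hB
  refine ⟨g, hg1, fun x hx => ?_⟩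
  have hgx := hg2 ⟨x, hx⟩
  simp only [Fintype.sum_sum_type, Sum.elim_inl, Sum.elim_inr, Finset.univ_unique,
    Finset.sum_singleton] at hgx
  set ζ := z ⟨x, hx⟩ with hζ
  set hh : ℝ := (2 ^ ℓ : ℝ)⁻¹ with hhh
  have hh0 : 0 < hh := by positivity
  have c1 := clip01_mem (2 ^ k * (1 * ζ - 1 / 2))
  have c2 := clip01_mem (2 ^ k * (-1 * ζ - -(1 / 2)))
  refine ⟨?_, fun hfx ht => ?_⟩
  · rw [hgx, abs_le]; constructor <;> linarith [c1.1, c1.2, c2.1, c2.2]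
  have h3 := r3 ⟨x, hx⟩
  simp only [] at h3
  rw [clip01_of_mem hfx] at h3
  have h2k : 1 ≤ 2 ^ k * hh ^ e := by
    have e1 : hh ^ e * (2 ^ ℓ : ℝ) ^ e = 1 := by
      rw [← Real.mul_rpow hh0.le (by positivity), hhh, inv_mul_cancel₀ (by positivity),
        Real.one_rpow]
    have e2 : ((2 : ℝ) ^ ℓ) ^ e ≤ 2 ^ k := by
      have : (2 : ℝ) ^ k = ((2 : ℝ) ^ ℓ) ^ (⌈e⌉₊ : ℝ) := by
        rw [Real.rpow_natCast, ← pow_mul, hk, mul_comm]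
      rw [this]
      exact Real.rpow_le_rpow_of_exponent_le (one_le_pow₀ one_le_two) (Nat.le_ceil e)
    calc 1 = hh ^ e * (2 ^ ℓ : ℝ) ^ e := e1.symm
      _ ≤ hh ^ e * 2 ^ k := by gcongr
      _ = _ := mul_comm _ _
  have hclip1 : ∀ t : ℝ, 1 ≤ t → clip01 t = 1 := fun t ht => by
    rw [clip01, max_eq_right (by linarith), min_eq_left ht]
  have hclip0 : ∀ t : ℝ, t ≤ 0 → clip01 t = 0 := fun t ht => by
    rw [clip01, max_eq_left ht, min_eq_right zero_le_one]
  have hp2 : (0 : ℝ) < 2 ^ k := by positivity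
  have hhe : 0 < hh ^ e := by positivity
  push_cast at ht
  rw [abs_le] at h3
  rcases le_or_gt 0 (2 * f x - 1) with h | h
  · rw [abs_of_nonneg h] at ht
    have hz : hh ^ e ≤ ζ - 1 / 2 := by nlinarith
    rw [hgx, sgn, if_pos h, hclip1, hclip0]
    · ring
    · nlinarith
    · calc 1 ≤ 2 ^ k * hh ^ e := h2k
        _ ≤ _ := by rw [one_mul]; gcongr
  · rw [abs_of_neg h] at ht
    have hz : hh ^ e ≤ 1 / 2 - ζ := by nlinarith
    rw [hgx, sgn, if_neg (not_le.2 h), hclip0, hclip1]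
    · ring
    · calc 1 ≤ 2 ^ k * hh ^ e := h2k
        _ ≤ _ := by gcongr; linarith
    · nlinarith

/-! ## Discretization of network classes -/

/-- Output of the width-`w` network whose weights and shifts are stored in one array: entry `k < w`
is a weight, entry `k = w` a shift. -/
def packedOut (w : ℕ) (U : ℕ → ℕ → ℕ → ℝ) (y : ℕ → ℝ) (L : ℕ) : ℝ :=
  rawOut (fun _ => w) U (fun i j => U (i - 1) j w) y L

lemma rawAct_abs_le {w : ℕ} {B : ℝ} (hB : 1 ≤ B) {U : ℕ → ℕ → ℕ → ℝ}
    (hU : ∀ i j k, |U i j k| ≤ B) {y : ℕ → ℝ} (hy : ∀ k, |y k| ≤ 1) (i j : ℕ) :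
    |rawAct (fun _ => w) U (fun i j => U (i - 1) j w) y i j| ≤ ((w + 1) * B) ^ i := by
  have hA : 1 ≤ (w + 1) * B := by nlinarith [(Nat.cast_nonneg w : (0 : ℝ) ≤ w)]
  induction i generalizing j with
  | zero => simpa [rawAct] using hy j
  | succ i ih =>
    simp only [rawAct, Nat.add_sub_cancel]
    have h1 : (1 : ℝ) ≤ ((w + 1) * B) ^ i := one_le_pow₀ hA
    have h2 : |∑ k ∈ Finset.range w, U i j k *
        rawAct (fun _ => w) U (fun i j => U (i - 1) j w) y i k| ≤ w * (B * ((w + 1) * B) ^ i) := by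
      refine (Finset.abs_sum_le_sum_abs _ _).trans ?_
      refine (Finset.sum_le_card_nsmul _ _ (B * ((w + 1) * B) ^ i) fun k _ => ?_).trans (by simp)
      rw [abs_mul]
      exact mul_le_mul (hU _ _ _) (ih k) (abs_nonneg _) (by linarith)
    have h3 : ∀ t : ℝ, |max 0 t| ≤ |t| := fun t => by
      rw [abs_of_nonneg (le_max_left _ _)]; exact max_le (abs_nonneg _) (le_abs_self _)
    refine (h3 _).trans ((abs_sub _ _).trans ?_)
    calc _ ≤ w * (B * ((w + 1) * B) ^ i) + B := add_le_add h2 (hU _ _ _)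
      _ ≤ w * (B * ((w + 1) * B) ^ i) + B * ((w + 1) * B) ^ i := by gcongr; nlinarith
      _ = _ := by rw [pow_succ]; ring

lemma abs_mul_sub_mul_le {a b a' b' B η Z δ : ℝ} (ha' : |a'| ≤ B) (hb : |b| ≤ Z)
    (h1 : |a - a'| ≤ η) (h2 : |b - b'| ≤ δ) : |a * b - a' * b'| ≤ η * Z + B * δ := by
  have : a * b - a' * b' = (a - a') * b + a' * (b - b') := by ring
  rw [this]
  refine (abs_add_le _ _).trans ?_
  rw [abs_mul, abs_mul]
  exact add_le_add (mul_le_mul h1 hb (abs_nonneg _) ((abs_nonneg _).trans h1))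
    (mul_le_mul ha' h2 (abs_nonneg _) ((abs_nonneg _).trans ha'))

lemma abs_sum_sub_le {w : ℕ} {B η Z δ : ℝ} {a b a' b' : ℕ → ℝ} (ha' : ∀ k, |a' k| ≤ B)
    (hb : ∀ k, |b k| ≤ Z) (h1 : ∀ k, |a k - a' k| ≤ η) (h2 : ∀ k, |b k - b' k| ≤ δ) :
    |∑ k ∈ Finset.range w, a k * b k - ∑ k ∈ Finset.range w, a' k * b' k| ≤
      w * (η * Z + B * δ) := by
  rw [← Finset.sum_sub_distrib]
  refine (Finset.abs_sum_le_sum_abs _ _).trans ?_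
  refine (Finset.sum_le_card_nsmul _ _ (η * Z + B * δ) fun k _ => ?_).trans (by simp [mul_add])
  exact abs_mul_sub_mul_le (ha' k) (hb k) (h1 k) (h2 k)

lemma rawAct_abs_sub_le {w : ℕ} {B η : ℝ} (hB : 1 ≤ B) {U U' : ℕ → ℕ → ℕ → ℝ}
    (hU : ∀ i j k, |U i j k| ≤ B) (hU' : ∀ i j k, |U' i j k| ≤ B)
    (h : ∀ i j k, |U i j k - U' i j k| ≤ η) {y : ℕ → ℝ} (hy : ∀ k, |y k| ≤ 1) (i j : ℕ) :
    |rawAct (fun _ => w) U (fun i j => U (i - 1) j w) y i j -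
      rawAct (fun _ => w) U' (fun i j => U' (i - 1) j w) y i j| ≤
      η * (2 * ((w + 1) * B)) ^ i := by
  have hη : 0 ≤ η := (abs_nonneg _).trans (h 0 0 0)
  have hw : (0 : ℝ) ≤ w := Nat.cast_nonneg w
  have hA : 1 ≤ (w + 1) * B := by nlinarith
  induction i generalizing j with
  | zero => simpa [rawAct] using hη
  | succ i ih =>
    simp only [rawAct, Nat.add_sub_cancel]
    set A := (w + 1) * B with hAd
    have h1 : (1 : ℝ) ≤ A ^ i := one_le_pow₀ hA
    have h2 := abs_sum_sub_le (w := w) (fun k => hU' i j k)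
      (fun k => rawAct_abs_le (w := w) hB hU hy i k)
      (fun k => h i j k) (fun k => ih k)
    rw [← hAd] at h2
    rw [max_comm 0, max_comm 0]
    refine (abs_max_sub_max_le_abs _ _ _).trans ?_
    have h3 : ∀ p q r t : ℝ, |p - q - (r - t)| ≤ |p - r| + |q - t| := fun p q r t => by
      have : p - q - (r - t) = (p - r) - (q - t) := by ring
      rw [this]; exact abs_sub _ _
    refine (h3 _ _ _ _).trans ((add_le_add h2 (h i j w)).trans ?_)
    have h4 : A ^ i ≤ (2 * A) ^ i := by gcongr; linarith
    have h5 : (w : ℝ) + 1 ≤ A := by nlinarith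
    have h6 : 0 ≤ (2 * A) ^ i := by positivity
    calc w * (η * A ^ i + B * (η * (2 * A) ^ i)) + η
        ≤ w * (η * A ^ i + B * (η * (2 * A) ^ i)) + η * A ^ i := by nlinarith
      _ = (w + 1) * (η * A ^ i) + (w * B) * (η * (2 * A) ^ i) := by ring
      _ ≤ A * (η * (2 * A) ^ i) + A * (η * (2 * A) ^ i) := by
          gcongr
          rw [hAd]; nlinarith
      _ = η * (2 * A) ^ (i + 1) := by rw [pow_succ]; ring

lemma packedOut_abs_sub_le {w : ℕ} {B η : ℝ} (hB : 1 ≤ B) {U U' : ℕ → ℕ → ℕ → ℝ}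
    (hU : ∀ i j k, |U i j k| ≤ B) (hU' : ∀ i j k, |U' i j k| ≤ B)
    (h : ∀ i j k, |U i j k - U' i j k| ≤ η) {y : ℕ → ℝ} (hy : ∀ k, |y k| ≤ 1) (L : ℕ) :
    |packedOut w U y L - packedOut w U' y L| ≤ η * (2 * ((w + 1) * B)) ^ (L + 1) := by
  have hη : 0 ≤ η := (abs_nonneg _).trans (h 0 0 0)
  have hw : (0 : ℝ) ≤ w := Nat.cast_nonneg w
  have hA : 1 ≤ (w + 1) * B := by nlinarith
  have h2 := abs_sum_sub_le (w := w) (fun k => hU' L 0 k)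
      (fun k => rawAct_abs_le (w := w) hB hU hy L k)
      (fun k => h L 0 k) (fun k => rawAct_abs_sub_le (w := w) hB hU hU' h hy L k)
  refine h2.trans ?_
  set A := (w + 1) * B with hAd
  have h4 : A ^ L ≤ (2 * A) ^ L := by gcongr; linarith
  have h5 : (w : ℝ) ≤ A := by nlinarith
  calc w * (η * A ^ L + B * (η * (2 * A) ^ L))
      = w * (η * A ^ L) + (w * B) * (η * (2 * A) ^ L) := by ring
    _ ≤ A * (η * (2 * A) ^ L) + A * (η * (2 * A) ^ L) := by
        gcongr
        rw [hAd]; nlinarith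
    _ = η * (2 * A) ^ (L + 1) := by rw [pow_succ]; ring

/-- Extension of a vector by zeros. -/
def zext {d : ℕ} (x : Fin d → ℝ) (k : ℕ) : ℝ := if h : k < d then x ⟨k, h⟩ else 0

lemma abs_zext_le {d : ℕ} {x : Fin d → ℝ} (hx : x ∈ cube d) (k : ℕ) : |zext x k| ≤ 1 := by
  unfold zext
  split_ifs with h
  · have := hx ⟨k, h⟩ (mem_univ _)
    rw [abs_of_nonneg this.1]; exact this.2
  · simp

lemma measurable_packedOut {d w : ℕ} (U : ℕ → ℕ → ℕ → ℝ) (L : ℕ) :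
    Measurable fun x : Fin d → ℝ => packedOut w U (zext x) L := by
  have h : ∀ i j, Measurable fun x : Fin d → ℝ =>
      rawAct (fun _ => w) U (fun i j => U (i - 1) j w) (zext x) i j := by
    intro i
    induction i with
    | zero =>
      intro j
      simp only [rawAct, zext]
      split_ifs
      · exact measurable_pi_apply _
      · exact measurable_const
    | succ i ih =>
      intro j
      simp only [rawAct]
      exact measurable_const.max
        ((Finset.measurable_sum _ fun k _ => (ih k).const_mul _).sub_const _)
  simp only [packedOut, rawOut]
  exact Finset.measurable_sum _ fun k _ => (h L k).const_mul _

lemma packedOut_congr {w L : ℕ} {U U' : ℕ → ℕ → ℕ → ℝ} (y : ℕ → ℝ)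
    (h : ∀ i ≤ L, ∀ j < w, ∀ k ≤ w, U i j k = U' i j k) (hw : 1 ≤ w) :
    packedOut w U y L = packedOut w U' y L := by
  have key : ∀ i ≤ L, ∀ j < w, rawAct (fun _ => w) U (fun i j => U (i - 1) j w) y i j =
      rawAct (fun _ => w) U' (fun i j => U' (i - 1) j w) y i j := by
    intro i
    induction i with
    | zero => intro _ _ _; rfl
    | succ i ih =>
      intro hi j hj
      simp only [rawAct, Nat.add_sub_cancel]
      rw [h i (by omega) j hj w le_rfl]
      congr 2
      refine Finset.sum_congr rfl fun k hk => ?_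
      have hk' := Finset.mem_range.1 hk
      rw [h i (by omega) j hj k hk'.le, ih (by omega) k hk']
  simp only [packedOut, rawOut]
  refine Finset.sum_congr rfl fun k hk => ?_
  have hk' := Finset.mem_range.1 hk
  rw [h L le_rfl 0 (by omega) k hk'.le, key L le_rfl k hk']

/-- The packed array of a network. -/
def ReLUNet.pack {d : ℕ} (net : ReLUNet d) (w i j k : ℕ) : ℝ :=
  if hj : i ≤ net.L ∧ j < net.width (i + 1) then
    if hk : k < net.width i then net.W i ⟨j, hj.2⟩ ⟨k, hk⟩
    else if k = w ∧ i < net.L then net.v (i + 1) ⟨j, hj.2⟩ else 0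
  else 0

lemma ReLUNet.eval_eq_packedOut {d w : ℕ} (net : ReLUNet d)
    (hw : ∀ i ≤ net.L + 1, net.width i ≤ w) (x : Fin d → ℝ) :
    net.eval x = packedOut w (net.pack w) (zext x) net.L := by
  set act := rawAct (fun _ => w) (net.pack w) (fun i j => net.pack w (i - 1) j w) (zext x)
    with hact
  have hsum : ∀ i (hi : i ≤ net.L) (j : Fin (net.width (i + 1))),
      ∑ k ∈ Finset.range w, net.pack w i j k * act i k =
        ∑ k : Fin (net.width i), net.W i j k * act i k := by
    intro i hi j
    rw [← Finset.sum_subset (Finset.range_subset_range.2 (hw i (by omega)))]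
    · rw [← Fin.sum_univ_eq_sum_range (fun k => net.pack w i j k * act i k)]
      refine Finset.sum_congr rfl fun k _ => ?_
      simp [ReLUNet.pack, hi]
    · intro k hk1 hk2
      have h1 : k < w := Finset.mem_range.1 hk1
      have h2 : ¬ k < net.width i := fun h => hk2 (Finset.mem_range.2 h)
      simp [ReLUNet.pack, h2, h1.ne]
  have key : ∀ i, i ≤ net.L → ∀ j : Fin (net.width (i + 1)),
      net.layer (fun j => x (Fin.cast net.h0 j)) i j =
        ∑ k ∈ Finset.range w, net.pack w i j k * act i k := by
    intro i
    induction i with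
    | zero =>
      intro hi j
      rw [hsum 0 hi j]
      simp only [ReLUNet.layer]
      refine Finset.sum_congr rfl fun k _ => ?_
      congr 1
      have hk : (k : ℕ) < d := lt_of_lt_of_eq k.2 net.h0
      simp only [hact, rawAct, zext, hk, dif_pos]
      rfl
    | succ i ih =>
      intro hi j
      rw [hsum _ hi j]
      simp only [ReLUNet.layer]
      refine Finset.sum_congr rfl fun k _ => ?_
      rw [ih (by omega) k]
      congr 1
      simp only [hact, rawAct, Nat.add_sub_cancel]
      congr 2
      have h3 : ¬ w < net.width i := not_lt.2 (hw i (by omega))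
      simp [ReLUNet.pack, h3, show i ≤ net.L by omega, show i < net.L by omega]
  refine (key net.L le_rfl _).trans ?_
  simp [packedOut, rawOut, hact]

lemma exists_grid {B η : ℝ} (hη : 0 < η) :
    ∃ (m : ℕ) (V : Fin (m + 1) → ℝ), m = ⌊2 * B / η⌋₊ ∧ ∀ θ : ℝ, |θ| ≤ B →
      ∃ k, |V k| ≤ B ∧ |θ - V k| ≤ η := by
  refine ⟨⌊2 * B / η⌋₊, fun k => -B + k * η, rfl, fun θ hθ => ?_⟩
  obtain ⟨h1, h2⟩ := abs_le.1 hθ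
  have h3 : 0 ≤ (θ + B) / η := div_nonneg (by linarith) hη.le
  have h4 : ⌊(θ + B) / η⌋₊ ≤ ⌊2 * B / η⌋₊ := Nat.floor_mono (by gcongr; linarith)
  refine ⟨⟨⌊(θ + B) / η⌋₊, by omega⟩, ?_⟩
  have h5 : (⌊(θ + B) / η⌋₊ : ℝ) * η ≤ θ + B := by
    rw [← le_div_iff₀ hη]; exact Nat.floor_le h3
  have h6 : θ + B < (⌊(θ + B) / η⌋₊ + 1 : ℝ) * η := by
    rw [← div_lt_iff₀ hη]; exact Nat.lt_floor_add_one _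
  have h7 : 0 ≤ (⌊(θ + B) / η⌋₊ : ℝ) * η := by positivity
  constructor <;> rw [abs_le] <;> constructor <;> dsimp only <;> linarith

/-- Positions of the nonzero parameters of a network. -/
lemma ReLUNet.exists_cover {d w Lm Sm : ℕ} (net : ReLUNet d)
    (hS : (∑ i ∈ Finset.range (net.L + 1),
        (Nat.card {p : Fin (net.width (i + 1)) × Fin (net.width i) // net.W i p.1 p.2 ≠ 0}
          : ℝ≥0∞)) +
      ∑ i ∈ Finset.range net.L,
        (Nat.card {j : Fin (net.width (i + 1)) // net.v (i + 1) j ≠ 0} : ℝ≥0∞) ≤ Sm)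
    (hL : net.L ≤ Lm) (hw : ∀ i ≤ net.L + 1, net.width i ≤ w) (hw1 : 1 ≤ w) :
    ∃ c : Fin Sm → Fin (Lm + 1) × Fin w × Fin (w + 1), ∀ i ≤ Lm, ∀ j < w, ∀ k ≤ w,
      net.pack w i j k ≠ 0 → ∃ t, ((c t).1 : ℕ) = i ∧ ((c t).2.1 : ℕ) = j ∧ ((c t).2.2 : ℕ) = k := by
  classical
  let T1 := Σ i : Fin (net.L + 1),
    {p : Fin (net.width (i + 1)) × Fin (net.width i) // net.W i p.1 p.2 ≠ 0}
  let T2 := Σ i : Fin net.L, {j : Fin (net.width (i + 1)) // net.v (i + 1) j ≠ 0}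
  have hcard : Fintype.card (T1 ⊕ T2) ≤ Sm := by
    have : ((Fintype.card (T1 ⊕ T2) : ℕ) : ℝ≥0∞) ≤ Sm := by
      refine le_trans (le_of_eq ?_) hS
      rw [Fintype.card_sum, Fintype.card_sigma, Fintype.card_sigma]
      push_cast
      rw [← Fin.sum_univ_eq_sum_range (fun i => (Nat.card {p : Fin (net.width (i + 1)) ×
        Fin (net.width i) // net.W i p.1 p.2 ≠ 0} : ℝ≥0∞)),
        ← Fin.sum_univ_eq_sum_range (fun i => (Nat.card {j : Fin (net.width (i + 1)) //
          net.v (i + 1) j ≠ 0} : ℝ≥0∞))]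
      simp only [Nat.card_eq_fintype_card]
    exact_mod_cast this
  let g : T1 ⊕ T2 → Fin (Lm + 1) × Fin w × Fin (w + 1) := Sum.elim
    (fun t => (⟨t.1, by have := t.1.2; omega⟩,
      ⟨t.2.1.1, lt_of_lt_of_le t.2.1.1.2 (hw _ (by have := t.1.2; omega))⟩,
      ⟨t.2.1.2, lt_of_lt_of_le t.2.1.2.2 ((hw _ (by have := t.1.2; omega)).trans (by omega))⟩))
    (fun t => (⟨t.1, by have := t.1.2; omega⟩,
      ⟨t.2.1, lt_of_lt_of_le t.2.1.2 (hw _ (by have := t.1.2; omega))⟩, ⟨w, by omega⟩))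
  obtain ⟨h, hh⟩ : ∃ h : Fin Sm → Fin (Lm + 1) × Fin w × Fin (w + 1), ∀ t, ∃ s, h s = g t := by
    let e := Fintype.equivFin (T1 ⊕ T2)
    refine ⟨fun s => if hs : (s : ℕ) < Fintype.card (T1 ⊕ T2) then g (e.symm ⟨s, hs⟩)
      else (0, ⟨0, hw1⟩, 0), fun t => ⟨⟨e t, lt_of_lt_of_le (e t).2 hcard⟩, ?_⟩⟩
    dsimp only
    rw [dif_pos (e t).2]
    exact congrArg g (e.symm_apply_apply t)
  refine ⟨h, fun i _ j _ k _ hne => ?_⟩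
  unfold ReLUNet.pack at hne
  split_ifs at hne with h1 h2 h3
  · obtain ⟨s, hs⟩ := hh (Sum.inl ⟨⟨i, by omega⟩, ⟨(⟨j, h1.2⟩, ⟨k, h2⟩), hne⟩⟩)
    exact ⟨s, by rw [hs]; exact ⟨rfl, rfl, rfl⟩⟩
  · obtain ⟨s, hs⟩ := hh (Sum.inr ⟨⟨i, h3.2⟩, ⟨⟨j, h1.2⟩, hne⟩⟩)
    exact ⟨s, by rw [hs]; exact ⟨rfl, rfl, h3.1.symm⟩⟩
  · exact absurd rfl hne
  · exact absurd rfl hne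

lemma exists_finite_net_FNN (d w Lm Sm : ℕ) (hw1 : 1 ≤ w) {G N B ε : ℝ} {S : ℝ≥0∞}
    (hG : G < Lm + 1) (hN : N < w + 1) (hS : S < Sm + 1) (hB : 1 ≤ B) (hε : 0 < ε) :
    ∃ (J : Type) (_ : Fintype J) (F : J → (Fin d → ℝ) → ℝ), (∀ j, Measurable (F j)) ∧
      ((Fintype.card J : ℝ) ≤ (Lm + 1) * ((Lm + 1) * w * (w + 1) *
        (2 * B * (2 * ((w + 1) * B)) ^ (Lm + 1) / ε + 1)) ^ Sm) ∧
      ∀ f ∈ FNN d G N S B ∞, ∃ j, ∀ x ∈ cube d, |f x - F j x| ≤ ε := by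
  classical
  set A : ℝ := 2 * ((w + 1) * B) with hA
  have hA1 : 1 ≤ A := by rw [hA]; nlinarith [(Nat.cast_nonneg w : (0 : ℝ) ≤ w)]
  set η : ℝ := ε / A ^ (Lm + 1) with hη
  have hη0 : 0 < η := by positivity
  obtain ⟨m, V, hm, hV⟩ := exists_grid (B := B) hη0
  let I := Fin (Lm + 1) × Fin w × Fin (w + 1)
  let dec : (Fin Sm → I × Fin (m + 1)) → ℕ → ℕ → ℕ → ℝ := fun s i j k =>
    if h : ∃ t, ((s t).1.1 : ℕ) = i ∧ ((s t).1.2.1 : ℕ) = j ∧ ((s t).1.2.2 : ℕ) = k then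
      V (s h.choose).2 else 0
  refine ⟨Fin (Lm + 1) × (Fin Sm → I × Fin (m + 1)), inferInstance,
    fun p x => packedOut w (dec p.2) (zext x) p.1, fun p => measurable_packedOut _ _, ?_, ?_⟩
  · simp only [I, Fintype.card_prod, Fintype.card_fin, Fintype.card_pi, Finset.prod_const,
      Finset.card_univ]
    push_cast
    have h1 : (m : ℝ) ≤ 2 * B * A ^ (Lm + 1) / ε := by
      rw [hm]
      refine (Nat.floor_le (by positivity)).trans (le_of_eq ?_)
      rw [hη]; field_simp
    have h2 : ((Lm : ℝ) + 1) * (w * (w + 1)) * (m + 1) ≤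
        (Lm + 1) * w * (w + 1) * (2 * B * A ^ (Lm + 1) / ε + 1) := by
      rw [← mul_assoc ((Lm : ℝ) + 1)]; gcongr
    gcongr
  · rintro f ⟨net, hf, hnL, hnw, hnS, hnW, hnv, -⟩
    have hL : net.L ≤ Lm := by
      have : (net.L : ℝ) < (Lm : ℝ) + 1 := lt_of_le_of_lt hnL hG
      exact Nat.lt_succ_iff.1 (by exact_mod_cast this)
    have hw : ∀ i ≤ net.L + 1, net.width i ≤ w := by
      intro i hi
      have : (net.width i : ℝ) < (w : ℝ) + 1 := lt_of_le_of_lt (hnw i hi) hN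
      exact Nat.lt_succ_iff.1 (by exact_mod_cast this)
    have hS' : (∑ i ∈ Finset.range (net.L + 1),
        (Nat.card {p : Fin (net.width (i + 1)) × Fin (net.width i) // net.W i p.1 p.2 ≠ 0}
          : ℝ≥0∞)) + ∑ i ∈ Finset.range net.L,
        (Nat.card {j : Fin (net.width (i + 1)) // net.v (i + 1) j ≠ 0} : ℝ≥0∞) ≤ Sm := by
      have h1 := lt_of_le_of_lt hnS hS
      rw [← Nat.cast_sum, ← Nat.cast_sum, ← Nat.cast_add] at h1 ⊢
      have h2 := Nat.lt_succ_iff.1 (by exact_mod_cast h1)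
      exact_mod_cast h2
    obtain ⟨c, hc⟩ := net.exists_cover hS' hL hw hw1
    have hpB : ∀ i j k, |net.pack w i j k| ≤ B := by
      intro i j k
      unfold ReLUNet.pack
      split_ifs with h1 h2 h3
      · exact hnW i h1.1 _ _
      · exact hnv _ (by omega) (by omega) _
      · simpa using by linarith
      · simpa using by linarith
    choose code hcode1 hcode2 using fun t => hV (net.pack w (c t).1 (c t).2.1 (c t).2.2)
      (hpB _ _ _)
    set s : Fin Sm → I × Fin (m + 1) := fun t => (c t, code t) with hs
    refine ⟨(⟨net.L, by omega⟩, s), fun x hx => ?_⟩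
    set U : ℕ → ℕ → ℕ → ℝ := fun i j k => if i ≤ Lm ∧ j < w ∧ k ≤ w then net.pack w i j k else 0
      with hU
    have hUB : ∀ i j k, |U i j k| ≤ B := by
      intro i j k
      simp only [hU]; split_ifs
      · exact hpB _ _ _
      · simpa using by linarith
    have hdB : ∀ i j k, |dec s i j k| ≤ B := by
      intro i j k
      simp only [dec]; split_ifs with h
      · exact hcode1 _
      · simpa using by linarith
    have hUd : ∀ i j k, |U i j k - dec s i j k| ≤ η := by
      intro i j k
      simp only [dec]; split_ifs with h
      · obtain ⟨h1, h2, h3⟩ := h.choose_spec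
        have h4 := hcode2 h.choose
        simp only [hs] at h1 h2 h3
        rw [h1, h2, h3] at h4
        have : U i j k = net.pack w i j k := by
          simp only [hU]
          refine if_pos ⟨?_, ?_, ?_⟩
          · rw [← h1]; exact Nat.lt_succ_iff.1 (c _).1.2
          · rw [← h2]; exact (c _).2.1.2
          · rw [← h3]; exact Nat.lt_succ_iff.1 (c _).2.2.2
        rw [this]
        exact h4
      · simp only [hU]
        split_ifs with h1
        · by_cases h2 : net.pack w i j k = 0
          · rw [h2]; simpa using hη0.le
          · exact absurd (hc i h1.1 j h1.2.1 k h1.2.2 h2) h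
        · simpa using hη0.le
    rw [hf, net.eval_eq_packedOut hw, packedOut_congr (U' := U) _ ?_ hw1]
    · refine (packedOut_abs_sub_le hB hUB hdB hUd (abs_zext_le hx) net.L).trans ?_
      rw [← hA, hη, div_mul_eq_mul_div, div_le_iff₀ (by positivity)]
      exact mul_le_mul_of_nonneg_left (pow_le_pow_right₀ hA1 (by omega)) hε.le
    · intro i hi j hj k hk
      simp only [hU]
      rw [if_pos ⟨by omega, hj, hk⟩]

/-! ## Integration against the data distribution -/

lemma measurable_sgn : Measurable sgn :=
  Measurable.ite measurableSet_Ici measurable_const measurable_const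

lemma abs_sgn (t : ℝ) : |sgn t| = 1 := by
  unfold sgn; split_ifs <;> simp

lemma measurable_hinge : Measurable hinge := by unfold hinge; fun_prop

lemma measurable_trunc (c : ℝ) : Measurable (trunc c) := by unfold trunc; fun_prop

lemma measurableSet_cube (d : ℕ) : MeasurableSet (cube d) :=
  MeasurableSet.univ_pi fun _ => measurableSet_Icc

section distributions

variable {d : ℕ} (D : DataDist d)

lemma DataDist.P_eq : D.P =
    (D.Q.withDensity fun x => ENNReal.ofReal (D.η x)).map (fun x => (x, (1 : ℝ))) +
      (D.Q.withDensity fun x => ENNReal.ofReal (1 - D.η x)).map (fun x => (x, (-1 : ℝ))) := by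
  have hη := D.η_meas
  have m1 : Measurable fun x => ENNReal.ofReal (D.η x) := hη.ennreal_ofReal
  have m2 : Measurable fun x => ENNReal.ofReal (1 - D.η x) := (hη.const_sub 1).ennreal_ofReal
  have p1 : Measurable fun x : Fin d → ℝ => (x, (1 : ℝ)) := measurable_id.prodMk measurable_const
  have p2 : Measurable fun x : Fin d → ℝ => (x, (-1 : ℝ)) := measurable_id.prodMk measurable_const
  have i1 : ∀ {c : ℝ} {s : Set ((Fin d → ℝ) × ℝ)}, MeasurableSet s →
      Measurable fun x : Fin d → ℝ => s.indicator (1 : (Fin d → ℝ) × ℝ → ℝ≥0∞) (x, c) :=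
    fun {c s} hs => (measurable_one.indicator hs).comp (measurable_id.prodMk measurable_const)
  have hk : Measurable fun x => ENNReal.ofReal (D.η x) • Measure.dirac (x, (1 : ℝ)) +
      ENNReal.ofReal (1 - D.η x) • Measure.dirac (x, (-1 : ℝ)) := by
    refine Measure.measurable_of_measurable_coe _ fun s hs => ?_
    simp only [Measure.add_apply, Measure.smul_apply, smul_eq_mul, Measure.dirac_apply' _ hs]
    exact (m1.mul (i1 hs)).add (m2.mul (i1 hs))
  ext s hs
  rw [DataDist.P, jointMeasure, Measure.bind_apply hs hk.aemeasurable, Measure.add_apply,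
    Measure.map_apply p1 hs, Measure.map_apply p2 hs, withDensity_apply _ (p1 hs),
    withDensity_apply _ (p2 hs), ← lintegral_indicator (p1 hs), ← lintegral_indicator (p2 hs),
    ← lintegral_add_left (m1.indicator (p1 hs))]
  refine lintegral_congr fun x => ?_
  simp only [Measure.add_apply, Measure.smul_apply, smul_eq_mul, Measure.dirac_apply' _ hs]
  congr 1
  · by_cases h : (x, (1 : ℝ)) ∈ s <;> simp [Set.indicator, h]
  · by_cases h : (x, (-1 : ℝ)) ∈ s <;> simp [Set.indicator, h]

lemma DataDist.integral_P {g : (Fin d → ℝ) × ℝ → ℝ} (hg : Measurable g) {C : ℝ}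
    (h1 : ∀ x, |g (x, 1)| ≤ C) (h2 : ∀ x, |g (x, -1)| ≤ C) :
    Integrable g D.P ∧
      ∫ p, g p ∂D.P = ∫ x, (D.η x * g (x, 1) + (1 - D.η x) * g (x, -1)) ∂D.Q := by
  have := D.Q_prob
  have hη := D.η_meas
  have m1 : Measurable fun x => ENNReal.ofReal (D.η x) := hη.ennreal_ofReal
  have m2 : Measurable fun x => ENNReal.ofReal (1 - D.η x) := (hη.const_sub 1).ennreal_ofReal
  have p1 : Measurable fun x : Fin d → ℝ => (x, (1 : ℝ)) := measurable_id.prodMk measurable_const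
  have p2 : Measurable fun x : Fin d → ℝ => (x, (-1 : ℝ)) := measurable_id.prodMk measurable_const
  have r1 : ∀ x, (ENNReal.ofReal (D.η x)).toReal = D.η x := fun x => toReal_ofReal (D.η_mem x).1
  have r2 : ∀ x, (ENNReal.ofReal (1 - D.η x)).toReal = 1 - D.η x :=
    fun x => toReal_ofReal (by linarith [(D.η_mem x).2])
  have b1 : Integrable (fun x => D.η x * g (x, 1)) D.Q := by
    refine Integrable.of_bound ((hη.mul (hg.comp p1)).aestronglyMeasurable) C
      (Filter.Eventually.of_forall fun x => ?_)
    have := D.η_mem x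
    rw [Real.norm_eq_abs, abs_mul, abs_of_nonneg this.1]
    nlinarith [h1 x, abs_nonneg (g (x, 1)), this.1, this.2]
  have b2 : Integrable (fun x => (1 - D.η x) * g (x, -1)) D.Q := by
    refine Integrable.of_bound (((hη.const_sub 1).mul (hg.comp p2)).aestronglyMeasurable) C
      (Filter.Eventually.of_forall fun x => ?_)
    have := D.η_mem x
    rw [Real.norm_eq_abs, abs_mul, abs_of_nonneg (by linarith [this.2])]
    nlinarith [h2 x, abs_nonneg (g (x, -1)), this.1, this.2]
  have t1 : Integrable g ((D.Q.withDensity fun x => ENNReal.ofReal (D.η x)).map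
      (fun x => (x, (1 : ℝ)))) := by
    rw [integrable_map_measure hg.aestronglyMeasurable p1.aemeasurable,
      integrable_withDensity_iff_integrable_smul' m1 (Filter.Eventually.of_forall fun x =>
        ofReal_lt_top)]
    simpa only [r1, smul_eq_mul, Function.comp] using b1
  have t2 : Integrable g ((D.Q.withDensity fun x => ENNReal.ofReal (1 - D.η x)).map
      (fun x => (x, (-1 : ℝ)))) := by
    rw [integrable_map_measure hg.aestronglyMeasurable p2.aemeasurable,
      integrable_withDensity_iff_integrable_smul' m2 (Filter.Eventually.of_forall fun x =>
        ofReal_lt_top)]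
    simpa only [r2, smul_eq_mul, Function.comp] using b2
  rw [D.P_eq]
  refine ⟨t1.add_measure t2, ?_⟩
  rw [integral_add_measure t1 t2, integral_map p1.aemeasurable hg.aestronglyMeasurable,
    integral_map p2.aemeasurable hg.aestronglyMeasurable,
    integral_withDensity_eq_integral_toReal_smul m1 (Filter.Eventually.of_forall fun x =>
        ofReal_lt_top),
    integral_withDensity_eq_integral_toReal_smul m2 (Filter.Eventually.of_forall fun x =>
        ofReal_lt_top)]
  simp only [r1, r2, smul_eq_mul]
  rw [← integral_add b1 b2]

lemma DataDist.ae_mem_cube : ∀ᵐ x ∂D.Q, x ∈ cube d := by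
  have := D.Q_prob
  exact (mem_ae_iff_prob_eq_one (measurableSet_cube d)).2 D.Q_cube

lemma DataDist.ae_P : ∀ᵐ p ∂D.P, p.1 ∈ cube d ∧ (p.2 = 1 ∨ p.2 = -1) := by
  have ms : MeasurableSet {p : (Fin d → ℝ) × ℝ | p.1 ∈ cube d ∧ (p.2 = 1 ∨ p.2 = -1)} :=
    (measurable_fst (measurableSet_cube d)).inter
      (measurable_snd ((measurableSet_singleton (1 : ℝ)).union (measurableSet_singleton (-1 : ℝ))))
  rw [D.P_eq, ae_add_measure_iff, ae_map_iff (by fun_prop) ms, ae_map_iff (by fun_prop) ms]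
  constructor
  · refine (withDensity_absolutelyContinuous _ _).ae_le ?_
    filter_upwards [D.ae_mem_cube] with x hx using ⟨hx, Or.inl rfl⟩
  · refine (withDensity_absolutelyContinuous _ _).ae_le ?_
    filter_upwards [D.ae_mem_cube] with x hx using ⟨hx, Or.inr rfl⟩

lemma DataDist.isProbabilityMeasure_P : IsProbabilityMeasure D.P := by
  have := D.Q_prob
  constructor
  rw [D.P_eq, Measure.add_apply, Measure.map_apply (by fun_prop) MeasurableSet.univ,
    Measure.map_apply (by fun_prop) MeasurableSet.univ, preimage_univ, preimage_univ, withDensity_apply _ .univ,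
    withDensity_apply _ .univ, setLIntegral_univ, setLIntegral_univ, ← lintegral_add_left D.η_meas.ennreal_ofReal]
  have : ∀ x, ENNReal.ofReal (D.η x) + ENNReal.ofReal (1 - D.η x) = 1 := fun x => by
    rw [← ENNReal.ofReal_add (D.η_mem x).1 (by linarith [(D.η_mem x).2])]; simp
  simp [this]

lemma iid_eq_pi {α : Type*} [MeasurableSpace α] (μ : Measure α) [IsProbabilityMeasure μ] (n : ℕ) :
    iid μ n = Measure.pi fun _ => μ := by
  refine (Measure.pi_eq fun s hs => ?_).symm
  induction n with
  | zero =>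
    simp only [iid, Finset.univ_eq_empty, Finset.prod_empty]
    rw [Measure.dirac_apply' _ (MeasurableSet.univ_pi hs)]
    simp
  | succ n ih =>
    have hsn : Measurable fun q : (Fin n → α) × α => (Fin.snoc q.1 q.2 : Fin (n + 1) → α) := by
      refine measurable_pi_lambda _ fun i => ?_
      refine Fin.lastCases ?_ (fun i => ?_) i
      · simpa using measurable_snd
      · simpa [Function.comp_def] using (measurable_pi_apply i).comp measurable_fst
    have hk : Measurable fun p : Fin n → α => μ.map fun a => (Fin.snoc p a : Fin (n + 1) → α) := by
      have h1 : (fun p : Fin n → α => μ.map fun a => (Fin.snoc p a : Fin (n + 1) → α)) =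
          fun p => (μ.map (Prod.mk p)).map
            fun q : (Fin n → α) × α => (Fin.snoc q.1 q.2 : Fin (n + 1) → α) := by
        funext p
        rw [Measure.map_map hsn measurable_prodMk_left]; rfl
      rw [h1]
      exact (Measure.measurable_map _ hsn).comp Measurable.map_prodMk_left
    have hbox := MeasurableSet.univ_pi hs
    rw [iid, Measure.bind_apply hbox hk.aemeasurable, Fin.prod_univ_castSucc,
      ← ih (fun i => s i.castSucc) (fun i => hs _), mul_comm,
      ← lintegral_indicator_const (MeasurableSet.univ_pi fun i => hs (Fin.castSucc i))]
    refine lintegral_congr fun p => ?_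
    have hp1 : Measurable fun a : α => (Fin.snoc p a : Fin (n + 1) → α) :=
      hsn.comp measurable_prodMk_left
    rw [Measure.map_apply hp1 hbox]
    by_cases hp : p ∈ univ.pi fun i => s (Fin.castSucc i)
    · rw [indicator_of_mem hp]
      congr 1
      ext a
      simp only [mem_preimage, mem_univ_pi, Fin.forall_fin_succ']
      simpa using fun _ => mem_univ_pi.1 hp
    · rw [indicator_of_notMem hp]
      convert measure_empty (μ := μ)
      refine eq_empty_of_forall_notMem fun a ha => hp (mem_univ_pi.2 fun i => ?_)
      simpa using mem_univ_pi.1 ha (Fin.castSucc i)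

/-! ## Calibration and moment bounds for the hinge loss -/

/-- The Bayes classifier. -/
def DataDist.bayes (x : Fin d → ℝ) : ℝ := sgn (2 * D.η x - 1)

/-- The excess hinge loss over the Bayes classifier. -/
def DataDist.hdiff (f : (Fin d → ℝ) → ℝ) (p : (Fin d → ℝ) × ℝ) : ℝ :=
  hinge (p.2 * f p.1) - hinge (p.2 * D.bayes p.1)

/-- The excess hinge risk of a function with values in `[-1, 1]`. -/
def DataDist.gap (f : (Fin d → ℝ) → ℝ) : ℝ := ∫ x, |f x - D.bayes x| * |2 * D.η x - 1| ∂D.Q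

lemma DataDist.measurable_bayes : Measurable D.bayes :=
  measurable_sgn.comp ((D.η_meas.const_mul 2).sub_const 1)

lemma DataDist.measurable_hdiff {f : (Fin d → ℝ) → ℝ} (hf : Measurable f) :
    Measurable (D.hdiff f) :=
  (measurable_hinge.comp (measurable_snd.mul (hf.comp measurable_fst))).sub
    (measurable_hinge.comp (measurable_snd.mul (D.measurable_bayes.comp measurable_fst)))

lemma abs_hinge_sub_le (a b : ℝ) : |hinge a - hinge b| ≤ |a - b| := by
  unfold hinge
  rw [max_comm 0, max_comm 0]
  refine (abs_max_sub_max_le_abs _ _ _).trans (le_of_eq ?_)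
  rw [abs_sub_comm a b]; congr 1; ring

lemma DataDist.abs_hdiff_le {f : (Fin d → ℝ) → ℝ} {p : (Fin d → ℝ) × ℝ}
    (hp : p.2 = 1 ∨ p.2 = -1) : |D.hdiff f p| ≤ |f p.1 - D.bayes p.1| := by
  refine (abs_hinge_sub_le _ _).trans (le_of_eq ?_)
  rw [← mul_sub, abs_mul]
  rcases hp with h | h <;> rw [h] <;> simp

lemma abs_sub_bayes_le {f : (Fin d → ℝ) → ℝ} (hf : ∀ x, |f x| ≤ 1) (x : Fin d → ℝ) :
    |f x - D.bayes x| ≤ 2 := by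
  refine (abs_sub _ _).trans ?_
  have := abs_sgn (2 * D.η x - 1)
  rw [DataDist.bayes]; linarith [hf x]

lemma abs_two_mul_sub_one_le (x : Fin d → ℝ) : |2 * D.η x - 1| ≤ 1 := by
  have := D.η_mem x
  rw [abs_le]; constructor <;> linarith [this.1, this.2]

lemma DataDist.mean_hdiff {f : (Fin d → ℝ) → ℝ} (hf : ∀ x, |f x| ≤ 1) (x : Fin d → ℝ) :
    D.η x * D.hdiff f (x, 1) + (1 - D.η x) * D.hdiff f (x, -1) =
      |f x - D.bayes x| * |2 * D.η x - 1| := by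
  obtain ⟨h1, h2⟩ := abs_le.1 (hf x)
  have e1 : hinge (1 * f x) = 1 - f x := by rw [hinge, max_eq_right] <;> linarith
  have e2 : hinge (-1 * f x) = 1 + f x := by rw [hinge, max_eq_right] <;> linarith
  simp only [DataDist.hdiff, DataDist.bayes]
  rw [e1, e2]
  unfold sgn
  split_ifs with h
  · rw [abs_of_nonneg h, abs_of_nonpos (by linarith : f x - 1 ≤ 0)]
    norm_num [hinge]; ring
  · rw [abs_of_neg (not_le.1 h), abs_of_nonneg (by linarith : 0 ≤ f x - -1)]
    norm_num [hinge]; ring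

lemma DataDist.integral_hdiff {f : (Fin d → ℝ) → ℝ} (hf : Measurable f) (h1 : ∀ x, |f x| ≤ 1) :
    Integrable (D.hdiff f) D.P ∧ ∫ p, D.hdiff f p ∂D.P = D.gap f := by
  have h := D.integral_P (D.measurable_hdiff hf) (C := 2)
    (fun x => (D.abs_hdiff_le (Or.inl rfl)).trans (abs_sub_bayes_le D h1 x))
    (fun x => (D.abs_hdiff_le (Or.inr rfl)).trans (abs_sub_bayes_le D h1 x))
  refine ⟨h.1, h.2.trans ?_⟩
  simp only [D.mean_hdiff h1, DataDist.gap]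

lemma DataDist.integrable_gap {f : (Fin d → ℝ) → ℝ} (hf : Measurable f) (h1 : ∀ x, |f x| ≤ 1) :
    Integrable (fun x => |f x - D.bayes x| * |2 * D.η x - 1|) D.Q := by
  have := D.Q_prob
  refine Integrable.of_bound (Measurable.aestronglyMeasurable ?_) 2
    (Filter.Eventually.of_forall fun x => ?_)
  · exact (hf.sub D.measurable_bayes).abs.mul ((D.η_meas.const_mul 2).sub_const 1).abs
  · rw [Real.norm_eq_abs, abs_mul, abs_abs, abs_abs]
    nlinarith [abs_sub_bayes_le D h1 x, abs_two_mul_sub_one_le D x, abs_nonneg (f x - D.bayes x),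
      abs_nonneg (2 * D.η x - 1)]

lemma abs_trunc_le (t : ℝ) : |trunc 1 t| ≤ 1 := by
  unfold trunc
  rw [abs_le]
  exact ⟨le_min (by norm_num) (le_max_left _ _), min_le_left _ _⟩

lemma abs_trunc_sub_trunc_le (a b : ℝ) : |trunc 1 a - trunc 1 b| ≤ |a - b| := by
  unfold trunc
  rw [min_comm 1, min_comm 1]
  refine (abs_min_sub_min_le_max _ _ _ _).trans (max_le ?_ (by simp))
  rw [max_comm (-1), max_comm (-1)]
  exact abs_max_sub_max_le_abs _ _ _

lemma trunc_of_abs_le {t : ℝ} (h : |t| ≤ 1) : trunc 1 t = t := by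
  obtain ⟨h1, h2⟩ := abs_le.1 h
  rw [trunc, max_eq_right h1, min_eq_right h2]

lemma hinge_mul_trunc_le {y : ℝ} (hy : y = 1 ∨ y = -1) (t : ℝ) :
    hinge (y * trunc 1 t) ≤ hinge (y * t) := by
  unfold hinge trunc
  rcases hy with rfl | rfl
  · refine max_le (le_max_left _ _) ?_
    rcases le_total 1 t with h | h
    · rw [max_eq_right (by linarith), min_eq_left h]; simp
    · rw [min_eq_right (max_le (by norm_num) h)]
      exact le_max_of_le_right (by linarith [le_max_right (-1) t])
  · refine max_le (le_max_left _ _) ?_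
    rcases le_total t (-1) with h | h
    · rw [max_eq_left h]; exact le_max_of_le_left (by norm_num)
    · rw [max_eq_right h]
      exact le_max_of_le_right (by linarith [min_le_right 1 t])

/-- Conditional misclassification probability. -/
lemma DataDist.risk01_eq {f : (Fin d → ℝ) → ℝ} (hf : Measurable f) :
    Integrable (fun x => if sgn (f x) = 1 then 1 - D.η x else D.η x) D.Q ∧
      risk01 D.P f = ∫ x, (if sgn (f x) = 1 then 1 - D.η x else D.η x) ∂D.Q := by
  have := D.Q_prob
  have hs : MeasurableSet {p : (Fin d → ℝ) × ℝ | sgn (f p.1) ≠ p.2} :=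
    (measurableSet_eq_fun (measurable_sgn.comp (hf.comp measurable_fst)) measurable_snd).compl
  set s := {p : (Fin d → ℝ) × ℝ | sgn (f p.1) ≠ p.2} with hsd
  have h := D.integral_P (g := s.indicator 1) (measurable_one.indicator hs) (C := 1)
    (fun x => by by_cases h : (x, (1 : ℝ)) ∈ s <;> simp [indicator, h])
    (fun x => by by_cases h : (x, (-1 : ℝ)) ∈ s <;> simp [indicator, h])
  constructor
  · refine Integrable.of_bound (Measurable.aestronglyMeasurable ?_) 1
      (Filter.Eventually.of_forall fun x => ?_)
    · exact Measurable.ite (measurableSet_eq_fun (measurable_sgn.comp hf) measurable_const)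
        (D.η_meas.const_sub 1) D.η_meas
    · have := D.η_mem x
      rw [Real.norm_eq_abs, abs_le]
      split_ifs <;> constructor <;> linarith [this.1, this.2]
  · rw [risk01]
    rw [integral_indicator_one hs] at h
    refine h.2.trans (integral_congr_ae (Filter.Eventually.of_forall fun x => ?_))
    simp only [hsd, indicator, mem_ofPred_eq, Pi.one_apply]
    by_cases hx : 0 ≤ f x <;> norm_num [sgn, hx]

lemma DataDist.excess01_le {f : (Fin d → ℝ) → ℝ} (hf : Measurable f) :
    excess01 D.P f ≤ D.gap fun x => trunc 1 (f x) := by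
  have hb : Nonempty {g : (Fin d → ℝ) → ℝ // Measurable g} := ⟨⟨fun _ => 0, measurable_const⟩⟩
  have hi : Integrable (fun x => |trunc 1 (f x) - D.bayes x| * |2 * D.η x - 1|) D.Q :=
    D.integrable_gap ((measurable_trunc 1).comp hf) fun x => abs_trunc_le (f x)
  have key : risk01 D.P f - D.gap (fun x => trunc 1 (f x)) ≤ bayes01 D.P := by
    refine le_ciInf fun g => ?_
    obtain ⟨i1, r1⟩ := D.risk01_eq hf
    obtain ⟨i2, r2⟩ := D.risk01_eq g.2
    rw [r1, r2, sub_le_iff_le_add, DataDist.gap, ← integral_add i2 hi]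
    refine integral_mono i1 (i2.add hi) fun x => ?_
    have hη := D.η_mem x
    have m0 : 0 ≤ |trunc 1 (f x) - D.bayes x| * |2 * D.η x - 1| := by positivity
    have hneg : f x < 0 → trunc 1 (f x) ≤ 0 := fun h =>
      (min_le_right _ _).trans (max_le (by norm_num) h.le)
    have hpos : 0 ≤ f x → 0 ≤ trunc 1 (f x) := fun h =>
      le_min zero_le_one (h.trans (le_max_right _ _))
    simp only [DataDist.bayes] at m0 ⊢
    by_cases h1 : 0 ≤ f x <;> by_cases h2 : 0 ≤ 2 * D.η x - 1 <;> by_cases h3 : 0 ≤ g.1 x <;>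
      norm_num [sgn, h1, h2, h3] at m0 ⊢ <;> try linarith
    · have a1 : 1 ≤ |trunc 1 (f x) + 1| := le_abs.2 (Or.inl (by linarith [hpos h1]))
      rw [abs_of_neg (not_le.1 h2)]
      nlinarith [not_le.1 h2]
    · have a1 : 1 ≤ |trunc 1 (f x) - 1| := le_abs.2 (Or.inr (by linarith [hneg (not_le.1 h1)]))
      rw [abs_of_nonneg h2]
      nlinarith
  rw [excess01]; linarith

lemma DataDist.excess01_nonneg {f : (Fin d → ℝ) → ℝ} (hf : Measurable f) :
    0 ≤ excess01 D.P f := by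
  have : BddBelow (range fun g : {g : (Fin d → ℝ) → ℝ // Measurable g} => risk01 D.P g.1) :=
    ⟨0, by rintro _ ⟨g, rfl⟩; exact toReal_nonneg⟩
  exact sub_nonneg.2 (ciInf_le this ⟨f, hf⟩)

lemma DataDist.excess01_le_one (f : (Fin d → ℝ) → ℝ) : excess01 D.P f ≤ 1 := by
  have hb : Nonempty {g : (Fin d → ℝ) → ℝ // Measurable g} := ⟨⟨fun _ => 0, measurable_const⟩⟩
  have := D.isProbabilityMeasure_P
  have h1 : risk01 D.P f ≤ 1 := toReal_le_of_le_ofReal zero_le_one (by simpa using prob_le_one)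
  have h2 : 0 ≤ bayes01 D.P := Real.iInf_nonneg fun g => toReal_nonneg
  rw [excess01]; linarith

/-- Probability of the region where the conditional class probability is within `t / 2` of `1 / 2`. -/
def DataDist.low (t : ℝ) : ℝ := D.Q.real {x | |2 * D.η x - 1| ≤ t}

lemma DataDist.integral_exp_hdiff_le {f : (Fin d → ℝ) → ℝ} (hf : Measurable f)
    (h1 : ∀ x, |f x| ≤ 1) {l : ℝ} (hl : 0 < l) (hl2 : l ≤ 1 / 2) :
    Integrable (fun p => Real.exp (-l * D.hdiff f p)) D.P ∧
      ∫ p, Real.exp (-l * D.hdiff f p) ∂D.P ≤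
        Real.exp (-(l / 2 * D.gap f) + 4 * l ^ 2 * D.low (4 * l)) := by
  have := D.Q_prob
  have hd : ∀ p : (Fin d → ℝ) × ℝ, (p.2 = 1 ∨ p.2 = -1) → |D.hdiff f p| ≤ 2 := fun p hp =>
    (D.abs_hdiff_le hp).trans (abs_sub_bayes_le D h1 p.1)
  have hu : ∀ p : (Fin d → ℝ) × ℝ, (p.2 = 1 ∨ p.2 = -1) → |-l * D.hdiff f p| ≤ 1 := fun p hp => by
    rw [abs_mul, abs_neg, abs_of_pos hl]; nlinarith [hd p hp, abs_nonneg (D.hdiff f p)]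
  have he : ∀ p : (Fin d → ℝ) × ℝ, (p.2 = 1 ∨ p.2 = -1) →
      |Real.exp (-l * D.hdiff f p)| ≤ Real.exp 1 := fun p hp => by
    rw [abs_of_pos (Real.exp_pos _)]
    exact Real.exp_le_exp.2 ((le_abs_self _).trans (hu p hp))
  have h := D.integral_P (g := fun p => Real.exp (-l * D.hdiff f p))
    (((D.measurable_hdiff hf).const_mul _).exp) (fun x => he (x, 1) (Or.inl rfl))
    (fun x => he (x, -1) (Or.inr rfl))
  refine ⟨h.1, h.2.trans_le ?_⟩
  set E : Set (Fin d → ℝ) := {x | |2 * D.η x - 1| ≤ 4 * l} with hE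
  have hEm : MeasurableSet E :=
    measurableSet_le ((D.η_meas.const_mul 2).sub_const 1).abs measurable_const
  have hg := D.integrable_gap hf h1
  have hi : Integrable (E.indicator (1 : (Fin d → ℝ) → ℝ)) D.Q :=
    (integrable_const (1 : ℝ)).indicator hEm
  have hR : Integrable (fun x => 1 - l / 2 * (|f x - D.bayes x| * |2 * D.η x - 1|) +
      4 * l ^ 2 * E.indicator (1 : (Fin d → ℝ) → ℝ) x) D.Q :=
    ((integrable_const 1).sub (hg.const_mul _)).add (hi.const_mul _)
  have hpt : ∀ x, D.η x * Real.exp (-l * D.hdiff f (x, 1)) +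
      (1 - D.η x) * Real.exp (-l * D.hdiff f (x, -1)) ≤
      1 - l / 2 * (|f x - D.bayes x| * |2 * D.η x - 1|) +
      4 * l ^ 2 * E.indicator (1 : (Fin d → ℝ) → ℝ) x := by
    intro x
    have hm := D.mean_hdiff h1 x
    have hη := D.η_mem x
    have q : ∀ p : (Fin d → ℝ) × ℝ, (p.2 = 1 ∨ p.2 = -1) → p.1 = x →
        Real.exp (-l * D.hdiff f p) ≤ 1 - l * D.hdiff f p + 2 * l ^ 2 * |f x - D.bayes x| := by
      intro p hp hpx
      have a1 := (abs_le.1 (Real.abs_exp_sub_one_sub_id_le (hu p hp))).2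
      have a2 : (D.hdiff f p) ^ 2 ≤ 2 * |f x - D.bayes x| := by
        rw [← sq_abs, sq]
        have := D.abs_hdiff_le (f := f) hp
        rw [hpx] at this
        exact mul_le_mul (hd p hp) this (abs_nonneg _) (by norm_num)
      nlinarith [sq_nonneg l]
    have q1 := q (x, 1) (Or.inl rfl) rfl
    have q2 := q (x, -1) (Or.inr rfl) rfl
    have q3 : 2 * l ^ 2 * |f x - D.bayes x| ≤
        l / 2 * (|f x - D.bayes x| * |2 * D.η x - 1|) +
          4 * l ^ 2 * E.indicator (1 : (Fin d → ℝ) → ℝ) x := by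
      by_cases hx : x ∈ E
      · rw [indicator_of_mem hx, Pi.one_apply]
        have b1 := abs_sub_bayes_le D h1 x
        have b2 : 0 ≤ l / 2 * (|f x - D.bayes x| * |2 * D.η x - 1|) := by positivity
        nlinarith [sq_nonneg l]
      · rw [indicator_of_notMem hx]
        have b1 : 4 * l < |2 * D.η x - 1| := not_le.1 hx
        have b2 : 0 ≤ l / 2 * |f x - D.bayes x| := by positivity
        nlinarith
    calc _ ≤ D.η x * (1 - l * D.hdiff f (x, 1) + 2 * l ^ 2 * |f x - D.bayes x|) +
          (1 - D.η x) * (1 - l * D.hdiff f (x, -1) + 2 * l ^ 2 * |f x - D.bayes x|) :=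
          add_le_add (mul_le_mul_of_nonneg_left q1 hη.1)
            (mul_le_mul_of_nonneg_left q2 (by linarith [hη.2]))
      _ = 1 - l * (D.η x * D.hdiff f (x, 1) + (1 - D.η x) * D.hdiff f (x, -1)) +
          2 * l ^ 2 * |f x - D.bayes x| := by ring
      _ ≤ _ := by rw [hm]; linarith
  refine (integral_mono_of_nonneg (Filter.Eventually.of_forall fun x => ?_) hR
    (Filter.Eventually.of_forall hpt)).trans ?_
  · have hη := D.η_mem x
    have : 0 ≤ 1 - D.η x := by linarith [hη.2]
    have := hη.1
    positivity
  · have hs : Integrable (fun x => 1 - l / 2 * (|f x - D.bayes x| * |2 * D.η x - 1|)) D.Q :=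
      (integrable_const 1).sub (hg.const_mul _)
    rw [integral_add hs (hi.const_mul _),
      integral_sub (integrable_const 1) (hg.const_mul _), integral_const_mul, integral_const_mul,
      integral_indicator_one hEm]
    simp only [integral_const, probReal_univ, smul_eq_mul, mul_one]
    have := Real.add_one_le_exp (-(l / 2 * D.gap f) + 4 * l ^ 2 * D.low (4 * l))
    rw [DataDist.low] at this ⊢
    rw [DataDist.gap] at this ⊢
    linarith

/-! ## Oracle inequality for empirical hinge risk minimizers -/

lemma measurable_of_mem_FNN {G N B : ℝ} {S Fb : ℝ≥0∞} {f : (Fin d → ℝ) → ℝ}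
    (hf : f ∈ FNN d G N S B Fb) : Measurable f := by
  obtain ⟨net, h, -⟩ := hf
  have hw : ∀ i ≤ net.L + 1, net.width i ≤ ∑ i ∈ Finset.range (net.L + 2), net.width i :=
    fun i hi => Finset.single_le_sum (f := net.width) (fun _ _ => Nat.zero_le _)
      (Finset.mem_range.2 (by omega))
  rw [funext fun x => (h x).trans (net.eval_eq_packedOut hw x)]
  exact measurable_packedOut _ _

lemma DataDist.gap_le_add {f g : (Fin d → ℝ) → ℝ} (hf : Measurable f) (hf1 : ∀ x, |f x| ≤ 1)
    (hg : Measurable g) (hg1 : ∀ x, |g x| ≤ 1) {ε : ℝ} (h : ∀ x ∈ cube d, |f x - g x| ≤ ε) :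
    D.gap f ≤ D.gap g + ε := by
  have := D.Q_prob
  have hi := D.integrable_gap hg hg1
  have e : D.gap g + ε = ∫ x, (|g x - D.bayes x| * |2 * D.η x - 1| + ε) ∂D.Q := by
    rw [integral_add hi (integrable_const ε)]; simp [DataDist.gap]
  rw [e]
  refine integral_mono_ae (D.integrable_gap hf hf1) (hi.add (integrable_const ε)) ?_
  filter_upwards [D.ae_mem_cube] with x hx
  have a1 : |f x - D.bayes x| ≤ |g x - D.bayes x| + ε := by
    have := abs_sub_le (f x) (g x) (D.bayes x)
    linarith [h x hx]
  have a2 := abs_two_mul_sub_one_le D x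
  have a3 := abs_nonneg (2 * D.η x - 1)
  have a4 := (abs_nonneg _).trans (h x hx)
  nlinarith

/-- The exponential moment functional of a finite family of classifiers. -/
def DataDist.expSum {J : Type} [Fintype J] (g : J → (Fin d → ℝ) → ℝ) (l : ℝ) (n : ℕ)
    (ω : Fin n → (Fin d → ℝ) × ℝ) : ℝ :=
  ∑ j, Real.exp (n * (l / 2 * D.gap (g j) - 4 * l ^ 2 * D.low (4 * l))) *
    ∏ i, Real.exp (-l * D.hdiff (g j) (ω i))

lemma DataDist.integral_expSum_le {J : Type} [Fintype J] {g : J → (Fin d → ℝ) → ℝ}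
    (hg : ∀ j, Measurable (g j)) (hg1 : ∀ j x, |g j x| ≤ 1) {l : ℝ} (hl : 0 < l) (hl2 : l ≤ 1 / 2)
    (n : ℕ) :
    Integrable (D.expSum g l n) (iid D.P n) ∧
      ∫ ω, D.expSum g l n ω ∂iid D.P n ≤ Fintype.card J := by
  have := D.isProbabilityMeasure_P
  rw [iid_eq_pi]
  have hterm : ∀ j, Integrable (fun ω : Fin n → (Fin d → ℝ) × ℝ =>
      Real.exp (n * (l / 2 * D.gap (g j) - 4 * l ^ 2 * D.low (4 * l))) *
        ∏ i, Real.exp (-l * D.hdiff (g j) (ω i))) (Measure.pi fun _ => D.P) := fun j =>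
    (Integrable.fintype_prod (f := fun _ p => Real.exp (-l * D.hdiff (g j) p))
      fun _ => (D.integral_exp_hdiff_le (hg j) (hg1 j) hl hl2).1).const_mul _
  refine ⟨integrable_finsetSum _ fun j _ => hterm j, ?_⟩
  simp only [DataDist.expSum]
  rw [integral_finsetSum _ fun j _ => hterm j]
  refine (Finset.sum_le_card_nsmul _ _ 1 fun j _ => ?_).trans (by simp)
  rw [integral_const_mul,
    integral_fintype_prod_eq_pow (f := fun p => Real.exp (-l * D.hdiff (g j) p)), Fintype.card_fin]
  have h := (D.integral_exp_hdiff_le (hg j) (hg1 j) hl hl2).2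
  calc _ ≤ Real.exp (n * (l / 2 * D.gap (g j) - 4 * l ^ 2 * D.low (4 * l))) *
        Real.exp (-(l / 2 * D.gap (g j)) + 4 * l ^ 2 * D.low (4 * l)) ^ n := by
        refine mul_le_mul_of_nonneg_left (pow_le_pow_left₀ ?_ h n) (Real.exp_pos _).le
        exact integral_nonneg fun p => (Real.exp_pos _).le
    _ = 1 := by
        rw [← Real.exp_nat_mul, ← Real.exp_add, Real.exp_eq_one_iff]; ring

lemma DataDist.exponent_le_expSum {J : Type} [Fintype J] [Nonempty J] {g : J → (Fin d → ℝ) → ℝ}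
    {l : ℝ} {n : ℕ} (ω : Fin n → (Fin d → ℝ) × ℝ) (j : J) :
    n * (l / 2 * D.gap (g j) - 4 * l ^ 2 * D.low (4 * l)) - l * ∑ i, D.hdiff (g j) (ω i) ≤
      D.expSum g l n ω / Fintype.card J - 1 + Real.log (Fintype.card J) := by
  have hJ : (0 : ℝ) < Fintype.card J := by exact_mod_cast Fintype.card_pos
  have h1 : Real.exp (n * (l / 2 * D.gap (g j) - 4 * l ^ 2 * D.low (4 * l)) -
      l * ∑ i, D.hdiff (g j) (ω i)) ≤ D.expSum g l n ω := by
    have e : Real.exp (n * (l / 2 * D.gap (g j) - 4 * l ^ 2 * D.low (4 * l)) -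
        l * ∑ i, D.hdiff (g j) (ω i)) =
        Real.exp (n * (l / 2 * D.gap (g j) - 4 * l ^ 2 * D.low (4 * l))) *
          ∏ i, Real.exp (-l * D.hdiff (g j) (ω i)) := by
      rw [← Real.exp_sum, ← Real.exp_add, ← Finset.mul_sum]; ring_nf
    rw [e]
    exact Finset.single_le_sum (f := fun j =>
      Real.exp (n * (l / 2 * D.gap (g j) - 4 * l ^ 2 * D.low (4 * l))) *
        ∏ i, Real.exp (-l * D.hdiff (g j) (ω i))) (fun _ _ => by positivity) (Finset.mem_univ j)
  have hZ : 0 < D.expSum g l n ω := (Real.exp_pos _).trans_le h1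
  have h2 := Real.log_le_sub_one_of_pos (div_pos hZ hJ)
  rw [Real.log_div hZ.ne' hJ.ne'] at h2
  linarith [(Real.le_log_iff_exp_le hZ).2 h1]

/-- On samples inside the support, an empirical risk minimizer nearly minimizes the empirical
excess hinge loss, up to the resolution of the net. -/
lemma DataDist.sum_hdiff_le_of_isERM {n : ℕ} (hn : 0 < n) {𝓕 : Set ((Fin d → ℝ) → ℝ)}
    {ω : Fin n → (Fin d → ℝ) × ℝ} (hω : ∀ i, (ω i).1 ∈ cube d ∧ ((ω i).2 = 1 ∨ (ω i).2 = -1))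
    {f f0 g : (Fin d → ℝ) → ℝ} (hf : IsERM hinge 𝓕 ω f) (h0 : f0 ∈ 𝓕)
    (h01 : ∀ x ∈ cube d, |f0 x| ≤ 1) {ε : ℝ} (hg : ∀ x ∈ cube d, |f x - g x| ≤ ε) :
    ∑ i, D.hdiff (fun x => trunc 1 (g x)) (ω i) ≤
      ∑ i, D.hdiff (fun x => trunc 1 (f0 x)) (ω i) + n * ε := by
  have hn' : (0 : ℝ) < (n : ℝ)⁻¹ := inv_pos.2 (by exact_mod_cast hn)
  have hE := le_of_mul_le_mul_left (hf.2 f0 h0) hn'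
  have hA : ∑ i, hinge ((ω i).2 * trunc 1 (g (ω i).1)) ≤
      ∑ i, (hinge ((ω i).2 * f (ω i).1) + ε) := by
    refine Finset.sum_le_sum fun i _ => ?_
    have a1 := abs_le.1 (abs_hinge_sub_le ((ω i).2 * trunc 1 (g (ω i).1))
      ((ω i).2 * trunc 1 (f (ω i).1)))
    have a2 : |(ω i).2 * trunc 1 (g (ω i).1) - (ω i).2 * trunc 1 (f (ω i).1)| ≤ ε := by
      rw [← mul_sub, abs_mul]
      have a3 : |(ω i).2| = 1 := by rcases (hω i).2 with h | h <;> rw [h] <;> simp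
      rw [a3, one_mul]
      refine (abs_trunc_sub_trunc_le _ _).trans ?_
      rw [abs_sub_comm]; exact hg _ (hω i).1
    linarith [hinge_mul_trunc_le (hω i).2 (f (ω i).1), a1.2]
  have hB : ∀ i, hinge ((ω i).2 * trunc 1 (f0 (ω i).1)) = hinge ((ω i).2 * f0 (ω i).1) := fun i => by
    rw [trunc_of_abs_le (h01 _ (hω i).1)]
  simp only [DataDist.hdiff, Finset.sum_sub_distrib, hB]
  rw [Finset.sum_add_distrib] at hA
  simp only [Finset.sum_const, Finset.card_univ, Fintype.card_fin, nsmul_eq_mul] at hA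
  linarith

lemma DataDist.expectedExcess01_le {n : ℕ} (hn : 0 < n) {𝓕 : Set ((Fin d → ℝ) → ℝ)}
    (hm : ∀ f ∈ 𝓕, Measurable f) {A : Estimator d n} (hA : ∀ ω, IsERM hinge 𝓕 ω (A ω))
    {J : Type} [Fintype J] {F : J → (Fin d → ℝ) → ℝ} (hF : ∀ j, Measurable (F j)) {ε : ℝ}
    (hnet : ∀ f ∈ 𝓕, ∃ j, ∀ x ∈ cube d, |f x - F j x| ≤ ε)
    {f0 : (Fin d → ℝ) → ℝ} (h0 : f0 ∈ 𝓕) (h01 : ∀ x ∈ cube d, |f0 x| ≤ 1)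
    {l : ℝ} (hl : 0 < l) (hl2 : l ≤ 1 / 2) :
    expectedExcess01 D.P A ≤ 3 * ε + 8 * l * D.low (4 * l) +
      2 * D.gap (fun x => trunc 1 (f0 x)) + 2 * Real.log (Fintype.card J) / (l * n) := by
  have := D.isProbabilityMeasure_P
  have hJ : Nonempty J := ⟨(hnet f0 h0).choose⟩
  have hJ' : (0 : ℝ) < Fintype.card J := by exact_mod_cast Fintype.card_pos
  have hn' : (0 : ℝ) < n := by exact_mod_cast hn
  set g : J → (Fin d → ℝ) → ℝ := fun j x => trunc 1 (F j x) with hg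
  have hgm : ∀ j, Measurable (g j) := fun j => (measurable_trunc 1).comp (hF j)
  have hg1 : ∀ j x, |g j x| ≤ 1 := fun j x => abs_trunc_le _
  obtain ⟨hZi, hZ⟩ := D.integral_expSum_le hgm hg1 hl hl2 n
  obtain ⟨hdi, hd⟩ := D.integral_hdiff ((measurable_trunc 1).comp (hm f0 h0))
    fun x => abs_trunc_le (f0 x)
  have hprob : IsProbabilityMeasure (iid D.P n) := by rw [iid_eq_pi]; infer_instance
  set R : (Fin n → (Fin d → ℝ) × ℝ) → ℝ := fun ω =>
    D.expSum g l n ω / Fintype.card J - 1 + Real.log (Fintype.card J) with hR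
  set H : (Fin n → (Fin d → ℝ) × ℝ) → ℝ := fun ω =>
    ∑ i, D.hdiff (fun x => trunc 1 (f0 x)) (ω i) with hH
  have hRi : Integrable R (iid D.P n) :=
    ((hZi.div_const _).sub (integrable_const 1)).add (integrable_const _)
  have hRle : ∫ ω, R ω ∂iid D.P n ≤ Real.log (Fintype.card J) := by
    have i1 : Integrable (fun ω => D.expSum g l n ω / Fintype.card J - 1) (iid D.P n) :=
      (hZi.div_const _).sub (integrable_const 1)
    rw [hR, integral_add i1 (integrable_const _), integral_sub (hZi.div_const _)
      (integrable_const 1), integral_div]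
    simp only [integral_const, probReal_univ, one_smul]
    have := (div_le_one hJ').2 hZ
    linarith
  have hHi' : ∀ i : Fin n, Integrable (fun ω : Fin n → (Fin d → ℝ) × ℝ =>
      D.hdiff (fun x => trunc 1 (f0 x)) (ω i)) (iid D.P n) := fun i => by
    rw [iid_eq_pi]; exact integrable_comp_eval (μ := fun _ : Fin n => D.P) (i := i) hdi
  have hHi : Integrable H (iid D.P n) := integrable_finsetSum _ fun i _ => hHi' i
  have hHe : ∫ ω, H ω ∂iid D.P n = n * D.gap (fun x => trunc 1 (f0 x)) := by
    rw [hH, integral_finsetSum _ fun i _ => hHi' i]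
    have : ∀ i : Fin n, ∫ ω : Fin n → (Fin d → ℝ) × ℝ,
        D.hdiff (fun x => trunc 1 (f0 x)) (ω i) ∂iid D.P n = D.gap (fun x => trunc 1 (f0 x)) := by
      intro i
      rw [iid_eq_pi]
      exact (integral_comp_eval (μ := fun _ : Fin n => D.P) (i := i)
        hdi.aestronglyMeasurable).trans hd
    simp [this]
  have hae : ∀ᵐ ω ∂iid D.P n, ∀ i, (ω i).1 ∈ cube d ∧ ((ω i).2 = 1 ∨ (ω i).2 = -1) := by
    rw [iid_eq_pi]
    exact Filter.eventually_all.2 fun i =>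
      (Measure.tendsto_eval_ae_ae (μ := fun _ : Fin n => D.P) (i := i)).eventually D.ae_P
  have hdom : ∀ᵐ ω ∂iid D.P n, excess01 D.P (A ω) ≤
      3 * ε + 8 * l * D.low (4 * l) + 2 / n * H ω + 2 / (l * n) * R ω := by
    filter_upwards [hae] with ω hω
    obtain ⟨j, hj⟩ := hnet _ (hA ω).1
    have hAm := hm _ (hA ω).1
    have e1 := D.excess01_le hAm
    have e2 : D.gap (fun x => trunc 1 (A ω x)) ≤ D.gap (g j) + ε :=
      D.gap_le_add ((measurable_trunc 1).comp hAm) (fun x => abs_trunc_le _) (hgm j) (hg1 j)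
        fun x hx => (abs_trunc_sub_trunc_le _ _).trans (hj x hx)
    have e3 : ∑ i, D.hdiff (g j) (ω i) ≤ H ω + n * ε :=
      D.sum_hdiff_le_of_isERM hn hω (hA ω) h0 h01 hj
    have e4 : n * (l / 2 * D.gap (g j) - 4 * l ^ 2 * D.low (4 * l)) -
      l * ∑ i, D.hdiff (g j) (ω i) ≤ R ω := D.exponent_le_expSum ω j
    have e5 : n * (l / 2 * D.gap (g j) - 4 * l ^ 2 * D.low (4 * l)) - l * (H ω + n * ε) ≤ R ω := by
      nlinarith
    have e6 : D.gap (g j) = 8 * l * D.low (4 * l) + 2 / n * H ω + 2 * ε + 2 / (l * n) *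
        (n * (l / 2 * D.gap (g j) - 4 * l ^ 2 * D.low (4 * l)) - l * (H ω + n * ε)) := by
      field_simp; ring
    have e7 := mul_le_mul_of_nonneg_left e5 (by positivity : 0 ≤ 2 / (l * n))
    linarith
  have hBi : Integrable (fun ω => 3 * ε + 8 * l * D.low (4 * l) + 2 / n * H ω +
      2 / (l * n) * R ω) (iid D.P n) :=
    ((integrable_const _).add (hHi.const_mul _)).add (hRi.const_mul _)
  refine (integral_mono_of_nonneg (Filter.Eventually.of_forall fun ω =>
    D.excess01_nonneg (hm _ (hA ω).1)) hBi hdom).trans ?_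
  have i1 : Integrable (fun ω => 3 * ε + 8 * l * D.low (4 * l) + 2 / n * H ω) (iid D.P n) :=
    (integrable_const _).add (hHi.const_mul _)
  rw [integral_add i1 (hRi.const_mul _), integral_add (integrable_const _) (hHi.const_mul _),
    integral_const_mul, integral_const_mul, hHe]
  simp only [integral_const, probReal_univ, one_smul]
  have e8 := mul_le_mul_of_nonneg_left hRle (by positivity : 0 ≤ 2 / (l * n))
  have e9 : 2 / (n : ℝ) * (n * D.gap (fun x => trunc 1 (f0 x))) =
      2 * D.gap (fun x => trunc 1 (f0 x)) := by field_simp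
  have e10 : 2 * Real.log (Fintype.card J) / (l * n) =
      2 / (l * n) * Real.log (Fintype.card J) := by ring
  rw [e9, e10]; linarith

/-! ## Consequences of the noise condition -/

lemma DataDist.low_le_one (t : ℝ) : D.low t ≤ 1 := by
  have := D.Q_prob
  exact measureReal_le_one

/-- The noise condition, extended to all thresholds at the price of a larger constant. -/
lemma exists_low_le {s α : ℝ} (hs : 0 ≤ s) (hα : 0 < α) {τ : ℝ≥0∞} (hτ : 0 < τ) :
    ∃ c : ℝ, 0 < c ∧ ∀ (d : ℕ) (D : DataDist d), D ∈ Tsybakov d (ENNReal.ofReal s) α τ →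
      ∀ t, 0 < t → D.low t ≤ c * t ^ s := by
  obtain ⟨u, hu, huτ⟩ : ∃ u : ℝ, 0 < u ∧ ENNReal.ofReal u ≤ τ := by
    refine ⟨(min 1 τ).toReal, ?_, ?_⟩
    · exact toReal_pos (by simp [hτ.ne']) (by simp)
    · rw [ofReal_toReal (by simp)]; exact min_le_right _ _
  refine ⟨α + (u ^ s)⁻¹, by positivity, fun d D hD t ht => ?_⟩
  have hts := Real.rpow_pos_of_pos ht s
  have hus := Real.rpow_pos_of_pos hu s
  rcases le_total t u with h | h
  · have h1 := hD t ht ((ofReal_le_ofReal h).trans huτ)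
    rw [rpowE, if_neg ofReal_ne_top, toReal_ofReal hs, ofReal_rpow_of_pos ht,
      ← ofReal_mul hα.le] at h1
    have h2 : D.Q {x | |2 * D.η x - 1| ≤ t} ≤ ENNReal.ofReal (α * t ^ s) := by
      refine le_trans (measure_mono_ae ?_) h1
      filter_upwards [D.ae_mem_cube] with x hx hxt
      exact ⟨hxt, hx⟩
    have h3 : D.low t ≤ α * t ^ s := toReal_le_of_le_ofReal (by positivity) h2
    have : 0 < (u ^ s)⁻¹ * t ^ s := by positivity
    nlinarith
  · have h1 : 1 ≤ (u ^ s)⁻¹ * t ^ s := by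
      rw [← div_eq_inv_mul, one_le_div hus]
      exact Real.rpow_le_rpow hu.le h hs
    have := D.low_le_one t
    nlinarith

/-- A classifier that is correct away from the margin has small excess hinge risk. -/
lemma DataDist.gap_trunc_le {f g : (Fin d → ℝ) → ℝ} (hg : Measurable g) {t : ℝ}
    (hf : ∀ᵐ x ∂D.Q, D.η x = f x)
    (h : ∀ x ∈ cube d, f x ∈ Icc (0 : ℝ) 1 → t < |2 * f x - 1| → g x = sgn (2 * f x - 1)) :
    D.gap (fun x => trunc 1 (g x)) ≤ 2 * t * D.low t := by
  have := D.Q_prob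
  set E : Set (Fin d → ℝ) := {x | |2 * D.η x - 1| ≤ t} with hE
  have hEm : MeasurableSet E :=
    measurableSet_le ((D.η_meas.const_mul 2).sub_const 1).abs measurable_const
  have hi : Integrable (E.indicator (1 : (Fin d → ℝ) → ℝ)) D.Q :=
    (integrable_const (1 : ℝ)).indicator hEm
  have e : 2 * t * D.low t = ∫ x, 2 * t * E.indicator (1 : (Fin d → ℝ) → ℝ) x ∂D.Q := by
    rw [integral_const_mul, integral_indicator_one hEm, DataDist.low]
  rw [e]
  refine integral_mono_ae (D.integrable_gap ((measurable_trunc 1).comp hg)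
    fun x => abs_trunc_le (g x)) (hi.const_mul _) ?_
  filter_upwards [D.ae_mem_cube, hf] with x hx hfx
  by_cases hxE : x ∈ E
  · rw [indicator_of_mem hxE, Pi.one_apply, mul_one]
    have h1 : |2 * D.η x - 1| ≤ t := hxE
    exact mul_le_mul (abs_sub_bayes_le D (f := fun x => trunc 1 (g x))
      (fun x => abs_trunc_le (g x)) x) h1 (abs_nonneg _) (by norm_num)
  · have h1 : t < |2 * D.η x - 1| := not_le.1 hxE
    have h2 := h x hx (hfx ▸ D.η_mem x) (hfx ▸ h1)
    have h3 : trunc 1 (g x) = D.bayes x := by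
      rw [h2, DataDist.bayes, hfx, trunc_of_abs_le (abs_sgn _).le]
    rw [indicator_of_notMem hxE, h3]
    simp

end distributions

/-! ## Balancing the error terms -/

lemma DataDist.expectedExcess01_le_one {d n : ℕ} (D : DataDist d) {A : Estimator d n}
    (hA : ∀ ω, Measurable (A ω)) : expectedExcess01 D.P A ≤ 1 := by
  have := D.isProbabilityMeasure_P
  have hprob : IsProbabilityMeasure (iid D.P n) := by rw [iid_eq_pi]; infer_instance
  refine (integral_mono_of_nonneg (Filter.Eventually.of_forall fun ω =>
    D.excess01_nonneg (hA ω)) (integrable_const (1 : ℝ))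
    (Filter.Eventually.of_forall fun ω => D.excess01_le_one (A ω))).trans ?_
  simp

lemma log_card_le {c B n Y : ℝ} {Lm w Sm : ℕ} (hc0 : 0 < c)
    (hc : c ≤ (Lm + 1) * ((Lm + 1) * w * (w + 1) *
      (2 * B * (2 * ((w + 1) * B)) ^ (Lm + 1) / n⁻¹ + 1)) ^ Sm)
    (hB : 0 ≤ B) (hn : 0 ≤ n) (hY : 2 ≤ Y) (h1 : (Lm : ℝ) + 1 ≤ Y) (h2 : (w : ℝ) + 1 ≤ Y)
    (h3 : 2 * B * n ≤ Y) (h4 : 2 * ((w + 1) * B) ≤ Y) :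
    Real.log c ≤ (1 + (Lm + 6) * Sm) * Real.log Y := by
  have hY0 : 0 < Y := by linarith
  have a1 : 2 * B * (2 * ((w + 1) * B)) ^ (Lm + 1) / n⁻¹ + 1 ≤ Y ^ (Lm + 3) := by
    have b1 : 2 * B * (2 * ((w + 1) * B)) ^ (Lm + 1) / n⁻¹ ≤ Y * Y ^ (Lm + 1) := by
      rw [div_inv_eq_mul, mul_right_comm]
      exact mul_le_mul h3 (pow_le_pow_left₀ (by positivity) h4 _) (by positivity) hY0.le
    have b2 : 1 ≤ Y ^ (Lm + 2) := one_le_pow₀ (by linarith)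
    calc _ ≤ Y * Y ^ (Lm + 1) + Y ^ (Lm + 2) := add_le_add b1 b2
      _ = 2 * Y ^ (Lm + 2) := by ring
      _ ≤ Y * Y ^ (Lm + 2) := by gcongr
      _ = _ := by ring
  have a2 : ((Lm : ℝ) + 1) * w * (w + 1) *
      (2 * B * (2 * ((w + 1) * B)) ^ (Lm + 1) / n⁻¹ + 1) ≤ Y ^ (Lm + 6) := by
    calc _ ≤ Y * Y * Y * Y ^ (Lm + 3) := by
          have : (w : ℝ) ≤ Y := by linarith
          gcongr
      _ = _ := by ring
  have a3 : c ≤ Y ^ (1 + (Lm + 6) * Sm) := by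
    calc c ≤ Y * (Y ^ (Lm + 6)) ^ Sm := hc.trans (by gcongr)
      _ = _ := by rw [← pow_mul, ← pow_succ', add_comm]
  refine (Real.log_le_log hc0 a3).trans (le_of_eq ?_)
  rw [Real.log_pow]; push_cast; ring

lemma exists_pow_two_near {z : ℝ} (hz : 1 ≤ z) : ∃ ℓ : ℕ, (2 : ℝ) ^ ℓ ≤ z ∧ z < 2 * 2 ^ ℓ := by
  obtain ⟨ℓ, h1, h2⟩ := exists_nat_pow_near hz (by norm_num : (1 : ℝ) < 2)
  exact ⟨ℓ, h1, by rwa [pow_succ'] at h2⟩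

lemma log_scale_le {b ν m : ℝ} (hb : 0 < b) (hm : 0 < m) (hL : 1 ≤ Real.log m) :
    Real.log (4 * (b + 1) ^ 2 * m ^ 2 * m ^ ν) ≤
      (Real.log (4 * (b + 1) ^ 2) + 2 + ν) * Real.log m := by
  have hP := Real.rpow_pos_of_pos hm ν
  rw [Real.log_mul (by positivity) hP.ne', Real.log_mul (by positivity) (by positivity),
    Real.log_pow, Real.log_rpow hm]
  have : 0 ≤ Real.log (4 * (b + 1) ^ 2) := Real.log_nonneg (by nlinarith)
  have := le_mul_of_one_le_right this hL
  push_cast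
  linarith

lemma param_count_le {b U Λ x y : ℝ} (hb : 0 < b) (hL : 1 ≤ Λ) (hU : 1 ≤ U) (hx : x ≤ b * Λ)
    (hy : y ≤ b * Λ * U) (hy0 : 0 ≤ y := by positivity) :
    1 + (x + 6) * y ≤ (1 + (b + 6) * b) * (U * Λ ^ 2) := by
  have h1 : x + 6 ≤ (b + 6) * Λ := by linarith
  have h2 : (x + 6) * y ≤ ((b + 6) * Λ) * (b * Λ * U) :=
    mul_le_mul h1 hy hy0 (by positivity)
  have h3 : 1 ≤ U * Λ ^ 2 := one_le_mul_of_one_le_of_one_le hU (one_le_pow₀ hL)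
  linarith

/-- The metric entropy bound for the network class in terms of the sample size. -/
lemma log_card_le_of_bounds {c b ν N G B U : ℝ} {n : ℕ} {Lm w Sm : ℕ} (hc0 : 0 < c)
    (hc : c ≤ (Lm + 1) * ((Lm + 1) * w * (w + 1) *
      (2 * B * (2 * ((w + 1) * B)) ^ (Lm + 1) / (n : ℝ)⁻¹ + 1)) ^ Sm)
    (hb : 0 < b) (hν : 0 ≤ ν) (hn : 3 ≤ n) (hL : 1 ≤ Real.log n) (hU : 1 ≤ U) (hUn : U ≤ n)
    (hLm : (Lm : ℝ) ≤ G) (hG : G ≤ b * Real.log n) (hw : (w : ℝ) ≤ N) (hN : N ≤ b * U)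
    (hB1 : 1 ≤ B) (hB : B ≤ b * (n : ℝ) ^ ν) (hSm : (Sm : ℝ) ≤ b * Real.log n * U) :
    Real.log c ≤ (1 + (b + 6) * b) * (Real.log (4 * (b + 1) ^ 2) + 2 + ν) *
      (U * Real.log n ^ 3) := by
  have hn1 : (1 : ℝ) ≤ n := by exact_mod_cast (by omega : 1 ≤ n)
  have hn0 : (0 : ℝ) < n := by linarith
  have hLn : Real.log n ≤ n := Real.log_le_self hn0.le
  have hnν : 1 ≤ (n : ℝ) ^ ν := Real.one_le_rpow hn1 hν
  set P : ℝ := (n : ℝ) ^ ν with hP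
  set m : ℝ := (n : ℝ) with hm
  have hP0 : 0 < P := by linarith
  have hBB : B ≤ (b + 1) * P := by nlinarith
  have hww : (w : ℝ) + 1 ≤ (b + 1) * m := by nlinarith
  have hLL : (Lm : ℝ) + 1 ≤ (b + 1) * m := by nlinarith
  have hY : (1 : ℝ) ≤ (b + 1) ^ 2 * m ^ 2 * P := by
    have : 1 ≤ (b + 1) ^ 2 := one_le_pow₀ (by linarith)
    have : 1 ≤ m ^ 2 := one_le_pow₀ hn1
    have : 1 ≤ (b + 1) ^ 2 * m ^ 2 := by nlinarith
    nlinarith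
  have hbm : (b + 1) * m ≤ (b + 1) ^ 2 * m ^ 2 * P := by
    have h1 : 1 ≤ (b + 1) * m := by nlinarith
    have h2 : (b + 1) * m ≤ ((b + 1) * m) * ((b + 1) * m) := le_mul_of_one_le_right (by positivity) h1
    have h3 : ((b + 1) * m) * ((b + 1) * m) ≤ ((b + 1) * m) * ((b + 1) * m) * P :=
      le_mul_of_one_le_right (by positivity) hnν
    calc _ ≤ _ := h2.trans h3
      _ = _ := by ring
  have hY4 : 4 * (b + 1) ^ 2 * m ^ 2 * P = 4 * ((b + 1) ^ 2 * m ^ 2 * P) := by ring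
  have key := log_card_le (Y := 4 * (b + 1) ^ 2 * m ^ 2 * P) hc0 hc (by linarith) hn0.le
    (by linarith) (by linarith) (by linarith)
    (by
      calc 2 * B * m ≤ 2 * ((b + 1) * P) * m := by gcongr
        _ ≤ 4 * ((b + 1) * P) * m * ((b + 1) * m) := by
          have h1 : 1 ≤ (b + 1) * m := by nlinarith
          refine le_trans ?_ (le_mul_of_one_le_right (by positivity) h1)
          gcongr; norm_num
        _ = _ := by ring)
    (by
      calc 2 * ((w + 1) * B) ≤ 2 * (((b + 1) * m) * ((b + 1) * P)) := by gcongr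
        _ ≤ 4 * (((b + 1) * m) * ((b + 1) * P)) * m := by
          refine le_trans ?_ (le_mul_of_one_le_right (by positivity) hn1)
          gcongr; norm_num
        _ = _ := by ring)
  have hlogY := log_scale_le (ν := ν) hb hn0 hL
  have hlog0 : 0 ≤ Real.log (4 * (b + 1) ^ 2) := Real.log_nonneg (by nlinarith)
  set Λ := Real.log m with hΛ
  have hcount : 1 + ((Lm : ℝ) + 6) * Sm ≤ (1 + (b + 6) * b) * (U * Λ ^ 2) :=
    param_count_le hb hL hU (hLm.trans hG) hSm
  calc Real.log c ≤ _ := key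
    _ ≤ (1 + ((Lm : ℝ) + 6) * Sm) * ((Real.log (4 * (b + 1) ^ 2) + 2 + ν) * Λ) := by gcongr
    _ ≤ ((1 + (b + 6) * b) * (U * Λ ^ 2)) * ((Real.log (4 * (b + 1) ^ 2) + 2 + ν) * Λ) := by
        gcongr
    _ = _ := by ring

lemma le_width_of_mem_FNN {d : ℕ} {G N B : ℝ} {S Fb : ℝ≥0∞} {f : (Fin d → ℝ) → ℝ}
    (hf : f ∈ FNN d G N S B Fb) : (d : ℝ) ≤ N := by
  obtain ⟨net, -, -, hN, -⟩ := hf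
  have := hN 0 (Nat.zero_le _)
  rwa [net.h0] at this

/-- The sum of the error terms in the oracle inequality, at the balanced choice of scales. -/
lemma balanced_terms_le {n U Λ v c s T K₀ t lowv lowt ε J g : ℝ} (hn : 0 < n) (hs : 0 ≤ s)
    (hc : 0 < c) (hv : 0 < v) (hv1 : v ≤ 1) (hU : 1 ≤ U) (hΛ : 1 ≤ Λ)
    (hbal : n * (v ^ (s + 1) * v) = U * Λ ^ 3) (ht0 : 0 < t) (hT : 0 < T) (ht : t ≤ T * v)
    (hlow1 : lowv ≤ c * (2 * v) ^ s) (hlow2 : lowt ≤ c * t ^ s)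
    (hJ : J ≤ K₀ * (U * Λ ^ 3)) (hε : ε = n⁻¹) (hg : g ≤ 2 * t * lowt) :
    3 * ε + 8 * (v / 2) * lowv + 2 * g + 2 * J / (v / 2 * n) ≤
      (3 + 4 * c * 2 ^ s + 4 * c * T ^ (s + 1) + 4 * K₀) * v ^ (s + 1) := by
  have hvs : v ^ (s + 1) = v ^ s * v := by rw [Real.rpow_add hv, Real.rpow_one]
  have hr : 0 < v ^ (s + 1) := Real.rpow_pos_of_pos hv _
  have e1 : ε ≤ v ^ (s + 1) := by
    rw [hε, inv_le_iff_one_le_mul₀ hn]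
    have h1 : 1 ≤ U * Λ ^ 3 := one_le_mul_of_one_le_of_one_le hU (one_le_pow₀ hΛ)
    have h2 : n * (v ^ (s + 1) * v) ≤ n * (v ^ (s + 1) * 1) := by gcongr
    linarith
  have e2 : 8 * (v / 2) * lowv ≤ 4 * c * 2 ^ s * v ^ (s + 1) := by
    calc 8 * (v / 2) * lowv ≤ 8 * (v / 2) * (c * (2 * v) ^ s) := by gcongr
      _ = _ := by rw [Real.mul_rpow (by norm_num) hv.le, hvs]; ring
  have e3 : 2 * g ≤ 4 * c * T ^ (s + 1) * v ^ (s + 1) := by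
    calc 2 * g ≤ 2 * (2 * t * (c * t ^ s)) := by
          have : 2 * t * lowt ≤ 2 * t * (c * t ^ s) := by gcongr
          linarith
      _ = 4 * c * t ^ (s + 1) := by rw [Real.rpow_add ht0, Real.rpow_one]; ring
      _ ≤ 4 * c * (T * v) ^ (s + 1) := by gcongr
      _ = _ := by rw [Real.mul_rpow hT.le hv.le]; ring
  have e4 : 2 * J / (v / 2 * n) ≤ 4 * K₀ * v ^ (s + 1) := by
    rw [div_le_iff₀ (by positivity)]
    rw [← hbal] at hJ
    calc 2 * J ≤ 2 * (K₀ * (n * (v ^ (s + 1) * v))) := by linarith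
      _ = _ := by ring
  linarith

/-- Theorem 3.1 : rates for hinge-loss ReLU DNN classifiers, `s < ∞`. -/
theorem statement_2
    (dmax dstar q : ℕ) (hdmax : 0 < dmax) (hdstar : 0 < dstar)
    (β r : ℝ) (hβ : 0 < β) (hr : 0 < r) :
    ∃ c3 : ℝ, 0 < c3 ∧
      ∀ (K : ℕ), 0 < K → ∀ (τ : ℝ≥0∞), 0 < τ → ∀ (s : ℝ), 0 ≤ s → ∀ (a : ℝ), 0 < a →
      ∃ c1 : ℝ, 3 ≤ c1 ∧
        ∀ (d : ℕ), 0 < d → ∀ (α : ℝ), 0 < α → ∀ (ν : ℝ), 0 ≤ ν → ∀ (b : ℝ), 0 < b →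
        ∃ c2 : ℝ, 0 < c2 ∧
          ∀ (n : ℕ) (G N B : ℝ) (S : ℝ≥0∞),
            0 < G → 1 ≤ N → 0 < S → 0 < B →
            dstar ≤ d → dstar * q ≤ K * q → ¬(α < 1 ∧ 1 ≤ τ) →
            c1 ≤ (n : ℝ) →
            c3 * Real.log n ≤ G → G ≤ b * Real.log n →
            a * ((n : ℝ) / Real.log n ^ 3) ^
                ((dstar : ℝ) / ((dstar : ℝ) + (s + 2) * (β * min 1 β ^ q))) ≤ N →
            N ≤ b * ((n : ℝ) / Real.log n ^ 3) ^
                ((dstar : ℝ) / ((dstar : ℝ) + (s + 2) * (β * min 1 β ^ q))) →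
            1 ≤ B → B ≤ b * (n : ℝ) ^ ν →
            ENNReal.ofReal (a * Real.log n * ((n : ℝ) / Real.log n ^ 3) ^
                ((dstar : ℝ) / ((dstar : ℝ) + (s + 2) * (β * min 1 β ^ q)))) ≤ S →
            S ≤ ENNReal.ofReal (b * Real.log n * ((n : ℝ) / Real.log n ^ 3) ^
                ((dstar : ℝ) / ((dstar : ℝ) + (s + 2) * (β * min 1 β ^ q)))) →
            ∀ A : Estimator d n, A.Meas → (∀ ω, IsERM hinge (FNN d G N S B ∞) ω (A ω)) →
            (⨆ D : ↥(HCHOM d q K dstar dmax β r ∩ Tsybakov d (ENNReal.ofReal s) α τ),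
                expectedExcess01 D.1.P A) ≤
              c2 * (Real.log n ^ 3 / n) ^
                ((s + 1) * (β * min 1 β ^ q) /
                  ((dstar : ℝ) + (s + 2) * (β * min 1 β ^ q))) := by
  obtain ⟨Cd, hCd⟩ := GCHOM.exists_classifier hβ hr dmax dstar q
  refine ⟨3 * Cd + 1, by positivity, fun K _ τ hτ s hs a ha => ⟨3, le_rfl, fun d _ α hα ν hν b hb => ?_⟩⟩
  obtain ⟨C, hC1, hC⟩ := hCd K
  obtain ⟨c, hc, hlow⟩ := exists_low_le hs hα hτ
  have he : 0 < β * min 1 β ^ q := by positivity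
  set e : ℝ := β * min 1 β ^ q with hedef
  have hp1 : (1 : ℝ) ≤ dstar := by exact_mod_cast hdstar
  have hC1' : (1 : ℝ) ≤ C := by exact_mod_cast hC1
  set p : ℝ := (dstar : ℝ) with hp
  set δ : ℝ := min 1 (a / (C * (3 * Cd + 1))) with hδ
  have hδ0 : 0 < δ := lt_min one_pos (by positivity)
  have hδ1 : δ ≤ 1 := min_le_left _ _
  have hδa : C * (3 * Cd + 1) * δ ≤ a := by
    have h := min_le_right 1 (a / (C * (3 * Cd + 1)))
    rwa [← hδ, le_div_iff₀ (by positivity), mul_comm] at h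
  set T : ℝ := C * (2 / δ) ^ e with hT
  have hT0 : 0 < T := by positivity
  set K₀ : ℝ := (1 + (b + 6) * b) * (Real.log (4 * (b + 1) ^ 2) + 2 + ν) with hK₀
  have hK₀0 : 0 ≤ K₀ := by
    have : 0 ≤ Real.log (4 * (b + 1) ^ 2) := Real.log_nonneg (by nlinarith)
    positivity
  refine ⟨((1 / δ) ^ e) ^ (s + 1) + (3 + 4 * c * 2 ^ s + 4 * c * T ^ (s + 1) + 4 * K₀),
    by positivity, ?_⟩
  intro n G N B S hG0 hN1 hS0 _ _ _ _ hn hG1 hG2 hNa hNb hB1 hB2 hSa hSb A _ hA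
  have hn3 : 3 ≤ n := by exact_mod_cast hn
  have hn0 : (0 : ℝ) < n := by linarith
  have hL : 1 ≤ Real.log n := by
    rw [Real.le_log_iff_exp_le hn0]
    linarith [Real.exp_one_lt_d9]
  have hΔ : 0 < p + (s + 2) * e := by positivity
  have hx : 0 < (n : ℝ) / Real.log n ^ 3 := by positivity
  set u : ℝ := ((n : ℝ) / Real.log n ^ 3) ^ (1 / (p + (s + 2) * e)) with hu
  have hu0 : 0 < u := Real.rpow_pos_of_pos hx _
  have hM : ((n : ℝ) / Real.log n ^ 3) ^ (p / (p + (s + 2) * e)) = u ^ p := by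
    rw [hu, ← Real.rpow_mul hx.le]; congr 1; field_simp
  set v : ℝ := (u ^ e)⁻¹ with hv
  have hv0 : 0 < v := inv_pos.2 (Real.rpow_pos_of_pos hu0 _)
  have hrate : (Real.log n ^ 3 / n) ^ ((s + 1) * e / (p + (s + 2) * e)) = v ^ (s + 1) := by
    rw [hv, Real.inv_rpow (Real.rpow_pos_of_pos hu0 _).le, ← Real.rpow_mul hu0.le, hu,
      ← Real.rpow_mul hx.le, ← inv_div, Real.inv_rpow hx.le]
    congr 2; field_simp
  have hbal : n * (v ^ (s + 1) * v) = u ^ p * Real.log n ^ 3 := by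
    have h1 : v ^ (s + 1) * v = (u ^ ((s + 2) * e))⁻¹ := by
      rw [← Real.rpow_add_one hv0.ne', hv, Real.inv_rpow (Real.rpow_pos_of_pos hu0 _).le,
        ← Real.rpow_mul hu0.le]
      congr 2; ring
    have h2 : (n : ℝ) = u ^ p * u ^ ((s + 2) * e) * Real.log n ^ 3 := by
      rw [← Real.rpow_add hu0, hu, ← Real.rpow_mul hx.le, one_div_mul_cancel hΔ.ne', Real.rpow_one]
      field_simp
    rw [h1]
    nth_rewrite 1 [h2]
    have := (Real.rpow_pos_of_pos hu0 ((s + 2) * e)).ne'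
    field_simp
  rw [hM] at hNa hNb hSa hSb
  rw [hrate]
  have hvr : 0 < v ^ (s + 1) := Real.rpow_pos_of_pos hv0 _
  have hmeas : ∀ ω, Measurable (A ω) := fun ω => measurable_of_mem_FNN (hA ω).1
  refine Real.iSup_le (fun D => ?_) (by positivity)
  obtain ⟨D, ⟨f, hf, hfη⟩, hDT⟩ := D
  rcases le_or_gt (δ * u) 1 with hsmall | hbig
  · refine (D.expectedExcess01_le_one hmeas).trans ?_
    have h1 : 1 ≤ (1 / δ) ^ e * v := by
      rw [hv, ← div_eq_mul_inv, one_le_div (Real.rpow_pos_of_pos hu0 _)]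
      refine Real.rpow_le_rpow hu0.le ?_ he.le
      rw [le_div_iff₀ hδ0]; linarith
    have h2 : 1 ≤ ((1 / δ) ^ e) ^ (s + 1) * v ^ (s + 1) := by
      rw [← Real.mul_rpow (by positivity) hv0.le]
      exact Real.one_le_rpow h1 (by linarith)
    rw [add_mul]
    refine h2.trans (le_add_of_nonneg_right (by positivity))
  have hδu : δ * u ≤ u := mul_le_of_le_one_left hu0.le hδ1
  have hu1 : 1 ≤ u := hbig.le.trans hδu
  have hU1 : 1 ≤ u ^ p := Real.one_le_rpow hu1 (by linarith)
  have hv1 : v ≤ 1 := inv_le_one_of_one_le₀ (Real.one_le_rpow hu1 he.le)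
  have hUn : u ^ p ≤ n := by
    have h1 : v ^ (s + 1) * v ≤ 1 :=
      mul_le_one₀ (Real.rpow_le_one hv0.le hv1 (by linarith)) hv0.le hv1
    have h2 : u ^ p * 1 ≤ u ^ p * Real.log n ^ 3 := by
      gcongr; exact one_le_pow₀ hL
    have h3 := mul_le_of_le_one_right hn0.le h1
    linarith
  have hun : u ≤ n := by
    refine le_trans ?_ hUn
    simpa using Real.rpow_le_rpow_of_exponent_le hu1 hp1
  obtain ⟨ℓ, hℓ1, hℓ2⟩ := exists_pow_two_near hbig.le
  have hℓL : (ℓ : ℝ) + 1 ≤ 3 * Real.log n := by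
    have h1 : (2 : ℝ) ^ ℓ ≤ n := hℓ1.trans (hδu.trans hun)
    have h2 := Real.log_le_log (by positivity) h1
    rw [Real.log_pow] at h2
    have h3 := Real.log_two_gt_d9
    have h4 : (ℓ : ℝ) * (1 / 2) ≤ ℓ * Real.log 2 := by gcongr; linarith
    linarith
  have hpow : (2 : ℝ) ^ (ℓ * dstar) ≤ δ * u ^ p := by
    rw [pow_mul, hp, Real.rpow_natCast]
    calc ((2 : ℝ) ^ ℓ) ^ dstar ≤ (δ * u) ^ dstar := by gcongr
      _ = δ ^ dstar * u ^ dstar := mul_pow _ _ _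
      _ ≤ δ * u ^ dstar := by gcongr; exact pow_le_of_le_one hδ0.le hδ1 hdstar.ne'
  have hCpow : (3 * Cd + 1) * (C * (2 : ℝ) ^ (ℓ * dstar)) ≤ a * u ^ p := by
    calc _ ≤ (3 * Cd + 1) * (C * (δ * u ^ p)) := by gcongr
      _ = (C * (3 * Cd + 1) * δ) * u ^ p := by ring
      _ ≤ _ := by gcongr
  have hd : (d : ℝ) ≤ N := le_width_of_mem_FNN (hA fun _ => 0).1
  have hdepth : (Cd : ℝ) * (ℓ + 1) ≤ (3 * Cd + 1) * Real.log n := by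
    have := mul_le_mul_of_nonneg_left hℓL (Nat.cast_nonneg (α := ℝ) Cd)
    linarith
  obtain ⟨g, hg, hgx⟩ := hC d f hf ℓ (G := G) (N := N) (B := B) (S := S)
    (by push_cast; linarith)
    (by
      push_cast
      have : (0 : ℝ) ≤ Cd * (C * (2 : ℝ) ^ (ℓ * dstar)) := by positivity
      linarith)
    hd
    (by
      refine le_trans ?_ hSa
      rw [← ofReal_natCast]
      refine ofReal_le_ofReal ?_
      push_cast
      calc (Cd : ℝ) * (ℓ + 1) * (C * 2 ^ (ℓ * dstar)) ≤
            ((3 * Cd + 1) * Real.log n) * (C * 2 ^ (ℓ * dstar)) := by gcongr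
        _ = Real.log n * ((3 * Cd + 1) * (C * (2 : ℝ) ^ (ℓ * dstar))) := by ring
        _ ≤ Real.log n * (a * u ^ p) := by gcongr
        _ = _ := by ring)
    hB1
  obtain ⟨J, _, F, hFm, hFc, hFn⟩ := exists_finite_net_FNN d ⌊N⌋₊ ⌊G⌋₊ ⌊b * Real.log n * u ^ p⌋₊
    (Nat.le_floor (by simpa using hN1)) (Nat.lt_floor_add_one G) (Nat.lt_floor_add_one N)
    (S := S) (by
      refine hSb.trans_lt ?_
      rw [← ofReal_natCast, ← ofReal_one, ← ofReal_add (by positivity) zero_le_one]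
      exact (ofReal_lt_ofReal_iff (by positivity)).2 (Nat.lt_floor_add_one _))
    hB1 (inv_pos.2 hn0)
  have hJ0 : (0 : ℝ) < Fintype.card J := by
    have : Nonempty J := ⟨(hFn g hg).choose⟩
    exact_mod_cast Fintype.card_pos
  have hcard := log_card_le_of_bounds hJ0 hFc hb hν hn3 hL hU1 hUn (Nat.floor_le hG0.le) hG2
    (Nat.floor_le (by linarith)) hNb hB1 hB2 (Nat.floor_le (by positivity))
  have horacle := D.expectedExcess01_le (by omega) (fun f hf => measurable_of_mem_FNN hf) hA hFm hFn
    hg (fun x hx => (hgx x hx).1) (half_pos hv0) (by linarith)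
  have h4 : 4 * (v / 2) = 2 * v := by ring
  rw [h4] at horacle
  set t : ℝ := C * ((2 ^ ℓ : ℝ)⁻¹) ^ e with ht
  have ht0 : 0 < t := by positivity
  have htT : t ≤ T * v := by
    rw [ht, hT, hv, ← Real.inv_rpow hu0.le, mul_assoc, ← Real.mul_rpow (by positivity) (by positivity)]
    have h1 : ((2 : ℝ) ^ ℓ)⁻¹ ≤ 2 / δ * u⁻¹ := by
      rw [← div_eq_mul_inv, div_div, inv_le_comm₀ (by positivity) (by positivity), inv_div]
      linarith
    gcongr
  have hgap := D.gap_trunc_le (measurable_of_mem_FNN hg) hfη fun x hx => (hgx x hx).2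
  refine horacle.trans ((balanced_terms_le hn0 hs hc hv0 hv1 hU1 hL hbal ht0 hT0 htT
    (hlow d D hDT (2 * v) (by positivity)) (hlow d D hDT _ ht0) hcard rfl hgap).trans ?_)
  exact mul_le_mul_of_nonneg_right (le_add_of_nonneg_left (by positivity)) hvr.le

end ZZS
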